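/- arXiv:1309.7833 — 3 statements merged into one kernel-verified Lean document; each statement's English description precedes it below -/
import Mathlib

section
/- Fix T > 0, S₀ > 0, t ∈ [0,T], j ∈ {0,1}, and y, z ∈ ℂ with Re y = Re z = R. With κ, κ̄, η as defined, put ρ_j(λ; y, z) := η(λ,y) + η(λ,z) − j·κ(λ,1)²/κ̄(λ;1,1), β(λ; y, z) := κ̄(λ;y,z) − κ̄(λ;y,1)·κ̄(λ;z,1)/κ̄(λ;1,1), and J_j(λ) := S₀^{y+z}·β(λ;y,z)·e^{κ(λ,y+z)t + ρ_j(λ;y,z)(T−t)}. Then λ ↦ J_j(λ) is twice differentiable on [0,1], J_j(0) = 0, J_j'(0) = 0, and J_j''(0) = ½σ⁴·(s₄ − s₃²)·e^{−j·((μ+½σ²)²/σ²)·(T−t)}·S₀^{y+z}·e^{κ(0,y+z)t}·e^{½σ²(y(y−1)+z(z−1))(T−t)}·y(y−1)z(z−1), where s₃ := (∫x³K(dx))/σ³ and s₄ := (∫x⁴K(dx))/σ⁴. -/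
open MeasureTheory Complex Set

/-- Cumulant generating function `κ(λ, z)` of the interpolating family. -/
noncomputable def kappa (μ c : ℝ) (K : Measure ℝ) (lam : ℝ) (z : ℂ) : ℂ :=
  if lam = 0 then (μ : ℂ) * z + (((c + ∫ x : ℝ, x ^ 2 ∂K) : ℝ) : ℂ) / 2 * z ^ 2
  else (μ : ℂ) * z + (c : ℂ) / 2 * z ^ 2 +
    ((lam : ℂ) ^ 2)⁻¹ *
      ∫ x : ℝ, (Complex.exp ((lam : ℂ) * z * (x : ℂ)) - 1 - (lam : ℂ) * z * (x : ℂ)) ∂K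

noncomputable def kbar (μ c : ℝ) (K : Measure ℝ) (lam : ℝ) (y z : ℂ) : ℂ :=
  kappa μ c K lam (y + z) - kappa μ c K lam y - kappa μ c K lam z

noncomputable def gamLK (μ c : ℝ) (K : Measure ℝ) (lam : ℝ) (z : ℂ) : ℂ :=
  kbar μ c K lam z 1 / kbar μ c K lam 1 1

noncomputable def etaLK (μ c : ℝ) (K : Measure ℝ) (lam : ℝ) (z : ℂ) : ℂ :=
  kappa μ c K lam z - kappa μ c K lam 1 * gamLK μ c K lam z

noncomputable def cpowR (s : ℝ) (z : ℂ) : ℂ := Complex.exp (z * Real.log s)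

/-!
The finite measure `ν = c δ₀ + x² K(dx)` has mass `σ²`. Since
`e^w - 1 - w = w² ∫₀¹ (1 - s) e^(ws) ds`, the factor `λ⁻²` cancels and `κ(λ, z) = μ z + z² M(λ z)`
for every `λ`, including `λ = 0`, with `M(w) = ∫ ∫₀¹ (1 - s) e^(wxs) ds ν(dx)`. As a moment
generating function, `M` is analytic and `(n + 1) (n + 2) M⁽ⁿ⁾(0) = ∫ xⁿ dν`.

In the integrand, `β(λ; y, z)` is the Gram determinant
`κ̄(λ; y, z) κ̄(λ; 1, 1) - κ̄(λ; y, 1) κ̄(λ; z, 1)` divided by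
`κ̄(λ; 1, 1) = 4 M(2λ) - 2 M(λ) > 0`. Modulo `λ²`, the form `κ̄(λ; u, v)` is
`σ² u v (1 + a λ (u + v))`, which agrees with the rank-one form `σ² u (1 + a λ u) v (1 + a λ v)`.
Hence the determinant vanishes to second order at `λ = 0`, and only its second derivative, times the
value at `0` of the remaining smooth factor, enters the second derivative of `J` there.
-/

open ProbabilityTheory Filter Topology

section TaylorWeight

/-- The measure `(1 - s) ds` on `(0, 1]`, the weight in the integral form of the second-order Taylor
remainder at `0`. Its total mass is `1 / 2`. -/
noncomputable def taylorWeight : Measure ℝ :=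
  (volume.restrict (Ioc 0 1)).withDensity fun s => ENNReal.ofReal (1 - s)

lemma ae_mem_Ioc_taylorWeight : ∀ᵐ s ∂taylorWeight, s ∈ Ioc (0 : ℝ) 1 :=
  (withDensity_absolutelyContinuous _ _).ae_le (ae_restrict_mem measurableSet_Ioc)

instance : IsFiniteMeasure taylorWeight := by
  have h : IntegrableOn (fun s : ℝ => 1 - s) (Ioc 0 1) :=
    (Continuous.integrableOn_Icc (by fun_prop)).mono_set Ioc_subset_Icc_self
  exact isFiniteMeasure_withDensity_ofReal h.2

lemma integral_taylorWeight {E : Type*} [NormedAddCommGroup E] [NormedSpace ℝ E] (f : ℝ → E) :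
    ∫ s, f s ∂taylorWeight = ∫ s in (0 : ℝ)..1, (1 - s) • f s := by
  rw [taylorWeight, integral_withDensity_eq_integral_toReal_smul (by fun_prop) (by simp),
    intervalIntegral.integral_of_le zero_le_one]
  refine setIntegral_congr_fun measurableSet_Ioc fun s hs => ?_
  simp only [ENNReal.toReal_ofReal (sub_nonneg.2 hs.2)]

lemma integral_pow_taylorWeight (n : ℕ) :
    ∫ s, s ^ n ∂taylorWeight = 1 / ((n + 1) * (n + 2) : ℝ) := by
  have h_sub : ∀ s : ℝ, (1 - s) • s ^ n = s ^ n - s ^ (n + 1) := fun s => by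
    rw [smul_eq_mul]; ring
  simp only [integral_taylorWeight, h_sub]
  rw [intervalIntegral.integral_sub (by simp) (by simp), integral_pow, integral_pow]
  push_cast
  field_simp
  norm_num
  ring

lemma sq_mul_complexMGF_taylorWeight (w : ℂ) :
    w ^ 2 * complexMGF id taylorWeight w = cexp w - 1 - w := by
  have h_deriv : ∀ s ∈ uIcc (0 : ℝ) 1, HasDerivAt
      (fun s : ℝ => (1 - (s : ℂ)) * w * cexp (w * s) + cexp (w * s))
      (w ^ 2 * ((1 - s) • cexp (w * s))) s := fun s _ => by
    have h_exp : HasDerivAt (fun u : ℂ => cexp (w * u)) (cexp (w * s) * w) s := by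
      simpa using ((hasDerivAt_id (s : ℂ)).const_mul w).cexp
    have h_lin : HasDerivAt (fun u : ℂ => (1 - u) * w) (-w) s := by
      simpa using ((hasDerivAt_id (s : ℂ)).const_sub 1).mul_const w
    convert! ((h_lin.mul h_exp).add h_exp).comp_ofReal using 1
    rw [Complex.real_smul]
    push_cast
    ring
  rw [complexMGF, integral_taylorWeight, ← intervalIntegral.integral_const_mul]
  refine (intervalIntegral.integral_eq_sub_of_hasDerivAt h_deriv
    (Continuous.intervalIntegrable (by fun_prop) _ _)).trans ?_
  simp only [ofReal_one, ofReal_zero, sub_self, sub_zero, zero_mul, one_mul, mul_zero, mul_one,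
    exp_zero, zero_add]
  ring

lemma sq_mul_mgf_taylorWeight (u : ℝ) :
    u ^ 2 * mgf id taylorWeight u = Real.exp u - 1 - u := by
  have h := sq_mul_complexMGF_taylorWeight u
  rw [complexMGF_ofReal] at h
  exact_mod_cast h

lemma mgf_taylorWeight_zero : mgf id taylorWeight 0 = 1 / 2 := by
  simpa [mgf] using integral_pow_taylorWeight 0

/-- Multiplied by `u ^ 2`, the difference of the two sides becomes `(exp u - 1) ^ 2 / 2`. -/
lemma mgf_taylorWeight_lt_two_mul (u : ℝ) :
    mgf id taylorWeight u < 2 * mgf id taylorWeight (2 * u) := by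
  rcases eq_or_ne u 0 with rfl | hu
  · rw [mul_zero, mgf_taylorWeight_zero]
    norm_num
  have h_exp : Real.exp (2 * u) = Real.exp u ^ 2 := by rw [← Real.exp_nat_mul]; norm_num
  have h_sq : u ^ 2 * (2 * (2 * mgf id taylorWeight (2 * u) - mgf id taylorWeight u)) =
      (Real.exp u - 1) ^ 2 := by
    linear_combination sq_mul_mgf_taylorWeight (2 * u) - 2 * sq_mul_mgf_taylorWeight u + h_exp
  have h_ne : Real.exp u - 1 ≠ 0 := by rwa [sub_ne_zero, Ne, Real.exp_eq_one_iff]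
  have h_pos := pos_of_mul_pos_right (h_sq ▸ sq_pos_of_ne_zero h_ne) (sq_nonneg u)
  linarith

end TaylorWeight

section TaylorMGF

variable {ν : Measure ℝ}

/-- The mixture `z ↦ ∫∫ exp (z x s) (1 - s) ds ν(dx)` of moment generating functions of `ν`; thus
`z ^ 2 * taylorMGF ν z` is the `ν`-integral of the remainders `(exp (z x) - 1 - z x) / x ^ 2`. It is
encoded as the moment generating function of a product of independent variables, so that its
analyticity and its derivatives are those of `complexMGF`. -/
noncomputable def taylorMGF (ν : Measure ℝ) : ℂ → ℂ :=
  complexMGF (fun p : ℝ × ℝ => p.1 * p.2) (ν.prod taylorWeight)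

lemma integrableExpSet_subset_prod_taylorWeight [IsFiniteMeasure ν] :
    integrableExpSet id ν ⊆
      integrableExpSet (fun p : ℝ × ℝ => p.1 * p.2) (ν.prod taylorWeight) := by
  intro r hr
  have h_bound : Integrable (fun p : ℝ × ℝ => 1 + Real.exp (r * p.1)) (ν.prod taylorWeight) :=
    (integrable_const _).add (Integrable.comp_fst hr taylorWeight)
  refine h_bound.mono' (by fun_prop) ?_
  filter_upwards [Measure.quasiMeasurePreserving_snd.ae ae_mem_Ioc_taylorWeight] with p hp
  rw [Real.norm_eq_abs, Real.abs_exp, ← mul_assoc]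
  rcases le_total (r * p.1) 0 with h | h
  · have := Real.exp_le_one_iff.2 (mul_nonpos_of_nonpos_of_nonneg h hp.1.le)
    linarith [Real.exp_pos (r * p.1)]
  · have := Real.exp_le_exp.2 (mul_le_of_le_one_right h hp.2)
    linarith

lemma integrable_cexp_prod_taylorWeight [IsFiniteMeasure ν] {z : ℂ}
    (hz : z.re ∈ integrableExpSet id ν) :
    Integrable (fun p : ℝ × ℝ => cexp (z * ((p.1 * p.2 : ℝ) : ℂ))) (ν.prod taylorWeight) := by
  rw [← integrable_norm_iff (by fun_prop)]
  simpa only [Complex.norm_exp, Complex.re_mul_ofReal] using!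
    integrableExpSet_subset_prod_taylorWeight hz

lemma complexMGF_taylorWeight_mul_eq (z : ℂ) (x : ℝ) :
    complexMGF id taylorWeight (z * x) = ∫ s, cexp (z * ((x * s : ℝ) : ℂ)) ∂taylorWeight := by
  simp only [complexMGF, id, Complex.ofReal_mul, mul_assoc]

lemma integrable_complexMGF_taylorWeight_mul [IsFiniteMeasure ν] {z : ℂ}
    (hz : z.re ∈ integrableExpSet id ν) :
    Integrable (fun x : ℝ => complexMGF id taylorWeight (z * x)) ν := by
  simpa only [complexMGF_taylorWeight_mul_eq] using
    (integrable_cexp_prod_taylorWeight hz).integral_prod_left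

lemma taylorMGF_eq_integral [IsFiniteMeasure ν] {z : ℂ} (hz : z.re ∈ integrableExpSet id ν) :
    taylorMGF ν z = ∫ x : ℝ, complexMGF id taylorWeight (z * x) ∂ν := by
  simp only [complexMGF_taylorWeight_mul_eq]
  exact integral_prod _ (integrable_cexp_prod_taylorWeight hz)

lemma analyticAt_taylorMGF [IsFiniteMeasure ν] {z : ℂ}
    (hz : z.re ∈ interior (integrableExpSet id ν)) : AnalyticAt ℂ (taylorMGF ν) z :=
  analyticAt_complexMGF (interior_mono integrableExpSet_subset_prod_taylorWeight hz)

lemma iteratedDeriv_taylorMGF_zero [IsFiniteMeasure ν]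
    (h0 : 0 ∈ interior (integrableExpSet id ν)) (n : ℕ) :
    iteratedDeriv n (taylorMGF ν) 0 = ((∫ x, x ^ n ∂ν : ℝ) : ℂ) / ((n + 1) * (n + 2)) := by
  have h0' := interior_mono integrableExpSet_subset_prod_taylorWeight h0
  rw [taylorMGF, iteratedDeriv_complexMGF (by simpa using h0')]
  have h_prod := integral_prod_mul (μ := ν) (ν := taylorWeight) (fun x : ℝ => x ^ n)
    (fun s : ℝ => s ^ n)
  rw [integral_pow_taylorWeight] at h_prod
  simp only [zero_mul, Complex.exp_zero, mul_one, ← Complex.ofReal_pow, mul_pow,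
    integral_complex_ofReal, h_prod]
  push_cast
  ring

lemma integrable_mgf_taylorWeight_mul [IsFiniteMeasure ν] {r : ℝ}
    (hr : r ∈ integrableExpSet id ν) : Integrable (fun x => mgf id taylorWeight (r * x)) ν := by
  simpa only [← Complex.ofReal_mul, complexMGF_ofReal, RCLike.re_to_complex,
    Complex.ofReal_re] using (integrable_complexMGF_taylorWeight_mul (z := r) hr).re

lemma taylorMGF_ofReal [IsFiniteMeasure ν] {r : ℝ} (hr : r ∈ integrableExpSet id ν) :
    taylorMGF ν r = ((∫ x, mgf id taylorWeight (r * x) ∂ν : ℝ) : ℂ) := by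
  simp only [taylorMGF_eq_integral (z := r) hr, ← Complex.ofReal_mul, complexMGF_ofReal,
    integral_complex_ofReal]

lemma taylorMGF_ne_two_mul [IsFiniteMeasure ν] [NeZero ν] {r : ℝ}
    (hr : r ∈ integrableExpSet id ν) (hr2 : 2 * r ∈ integrableExpSet id ν) :
    taylorMGF ν r ≠ 2 * taylorMGF ν ((2 * r : ℝ) : ℂ) := by
  have h_lt (x : ℝ) :
      0 < 2 * mgf id taylorWeight (2 * r * x) - mgf id taylorWeight (r * x) := by
    rw [mul_assoc 2 r]
    exact sub_pos.2 (mgf_taylorWeight_lt_two_mul (r * x))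
  have h_int := (integrable_mgf_taylorWeight_mul hr2).const_mul 2
  have h_supp : Function.support (fun x =>
      2 * mgf id taylorWeight (2 * r * x) - mgf id taylorWeight (r * x)) = univ :=
    eq_univ_of_forall fun x => (h_lt x).ne'
  have h_pos := (integral_pos_iff_support_of_nonneg (fun x => (h_lt x).le)
    (h_int.sub (integrable_mgf_taylorWeight_mul hr))).2
      (h_supp ▸ Measure.measure_univ_pos.2 (NeZero.ne ν))
  rw [integral_sub h_int (integrable_mgf_taylorWeight_mul hr), integral_const_mul] at h_pos
  rw [taylorMGF_ofReal hr, taylorMGF_ofReal hr2]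
  exact_mod_cast (sub_pos.1 h_pos).ne

end TaylorMGF

section Kolmogorov

variable {c : ℝ} {K : Measure ℝ} {E : Type*} [NormedAddCommGroup E] [NormedSpace ℝ E]

/-- The measure `c δ₀ + x² K(dx)` of Kolmogorov's form of the Lévy–Khintchine formula; its total
mass is the variance `c + ∫ x² K(dx)`. -/
noncomputable def kolmogorovMeasure (c : ℝ) (K : Measure ℝ) : Measure ℝ :=
  ENNReal.ofReal c • Measure.dirac 0 + K.withDensity fun x => ENNReal.ofReal (x ^ 2)

lemma integrable_kolmogorovMeasure_iff {f : ℝ → E} :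
    Integrable f (kolmogorovMeasure c K) ↔ Integrable (fun x => x ^ 2 • f x) K := by
  have h_dirac : Integrable f (ENNReal.ofReal c • Measure.dirac 0) :=
    (integrable_dirac enorm_lt_top).smul_measure ENNReal.ofReal_ne_top
  rw [kolmogorovMeasure, integrable_add_measure, and_iff_right h_dirac,
    integrable_withDensity_iff_integrable_smul' (by fun_prop) (by simp)]
  simp only [ENNReal.toReal_ofReal (sq_nonneg _)]

lemma integral_kolmogorovMeasure [CompleteSpace E] (hc : 0 ≤ c) {f : ℝ → E}
    (hf : Integrable f (kolmogorovMeasure c K)) :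
    ∫ x, f x ∂kolmogorovMeasure c K = c • f 0 + ∫ x, x ^ 2 • f x ∂K := by
  rw [kolmogorovMeasure, integrable_add_measure] at hf
  rw [kolmogorovMeasure, integral_add_measure hf.1 hf.2, integral_smul_measure, integral_dirac,
    ENNReal.toReal_ofReal hc, integral_withDensity_eq_integral_toReal_smul (by fun_prop) (by simp)]
  simp only [ENNReal.toReal_ofReal (sq_nonneg _)]

/-- The interior of the set of real exponents at which the cumulant generating function of the
Lévy–Khintchine data `(c, K)` is finite. -/
def cumulantDomain (c : ℝ) (K : Measure ℝ) : Set ℝ :=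
  interior (integrableExpSet id (kolmogorovMeasure c K))

lemma isFiniteMeasure_kolmogorovMeasure (h0 : 0 ∈ cumulantDomain c K) :
    IsFiniteMeasure (kolmogorovMeasure c K) := by
  have h_one : Integrable (fun _ => (1 : ℝ)) (kolmogorovMeasure c K) := by
    simpa [integrableExpSet] using interior_subset h0
  simpa [integrable_const_iff] using h_one

lemma mul_mem_cumulantDomain (h0 : 0 ∈ cumulantDomain c K) {r : ℝ} (hr : r ∈ cumulantDomain c K)
    {l : ℝ} (hl : l ∈ Icc (0 : ℝ) 1) : l * r ∈ cumulantDomain c K :=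
  convex_integrableExpSet.interior.smul_mem_of_zero_mem h0 hr hl

lemma add_mem_cumulantDomain {r q : ℝ} (hr : 2 * r ∈ cumulantDomain c K)
    (hq : 2 * q ∈ cumulantDomain c K) : r + q ∈ cumulantDomain c K := by
  convert! convex_integrableExpSet.interior.midpoint_mem hr hq using 1
  rw [midpoint_eq_smul_add, invOf_eq_inv, smul_eq_mul]
  ring

lemma mem_cumulantDomain_of_two_mul_mem (h0 : 0 ∈ cumulantDomain c K) {r : ℝ}
    (hr : 2 * r ∈ cumulantDomain c K) : r ∈ cumulantDomain c K := by
  simpa using add_mem_cumulantDomain hr (q := 0) (by simpa using h0)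

lemma integral_pow_kolmogorovMeasure (hc : 0 ≤ c) (h0 : 0 ∈ cumulantDomain c K) (n : ℕ) :
    ∫ x, x ^ n ∂kolmogorovMeasure c K = c * 0 ^ n + ∫ x, x ^ (n + 2) ∂K := by
  have h_int : Integrable (fun x => x ^ n) (kolmogorovMeasure c K) :=
    integrable_pow_of_mem_interior_integrableExpSet h0 n
  simp only [integral_kolmogorovMeasure hc h_int, smul_eq_mul, ← pow_add, add_comm 2]

lemma neZero_kolmogorovMeasure (hc : 0 ≤ c) (h0 : 0 ∈ cumulantDomain c K)
    (hpos : 0 < c + ∫ x, x ^ 2 ∂K) : NeZero (kolmogorovMeasure c K) := by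
  refine ⟨fun h => hpos.ne ?_⟩
  simpa [h] using integral_pow_kolmogorovMeasure hc h0 0

lemma integrableOn_sq_mul_exp_of_one_le_abs {s : ℝ}
    (hs : s ∈ interior {r | ∫⁻ x in {x : ℝ | 1 ≤ |x|}, ENNReal.ofReal (Real.exp (r * x)) ∂K ≠ ⊤}) :
    IntegrableOn (fun x => x ^ 2 * Real.exp (s * x)) {x | 1 ≤ |x|} K := by
  refine integrable_pow_mul_exp_of_mem_interior_integrableExpSet (X := id)
    (interior_mono (fun r hr => ?_) hs) 2
  exact (lintegral_ofReal_ne_top_iff_integrable (by fun_prop)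
    (ae_of_all _ fun x => (Real.exp_pos _).le)).1 hr

lemma integrableOn_sq_mul_exp_of_abs_lt_one
    (hK : ∫⁻ x, ENNReal.ofReal (min 1 (x ^ 2)) ∂K ≠ ⊤) (s : ℝ) :
    IntegrableOn (fun x => x ^ 2 * Real.exp (s * x)) {x | |x| < 1} K := by
  have h_min : Integrable (fun x : ℝ => min 1 (x ^ 2)) K :=
    (lintegral_ofReal_ne_top_iff_integrable (by fun_prop)
      (ae_of_all _ fun x => le_min zero_le_one (sq_nonneg x))).1 hK
  refine (h_min.mul_const (Real.exp |s|)).integrableOn.mono' (by fun_prop) ?_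
  filter_upwards [ae_restrict_mem (measurableSet_lt (by fun_prop) (by fun_prop))] with x hx
  rw [Real.norm_of_nonneg (by positivity), min_eq_right ((sq_lt_one_iff_abs_lt_one x).2 hx).le]
  gcongr
  calc s * x ≤ |s| * |x| := (le_abs_self _).trans_eq (abs_mul s x)
    _ ≤ |s| := mul_le_of_le_one_right (abs_nonneg s) (le_of_lt hx)

lemma Ioo_subset_cumulantDomain (hK : ∫⁻ x, ENNReal.ofReal (min 1 (x ^ 2)) ∂K ≠ ⊤) {a b : ℝ}
    (hexp : ∀ s ∈ Ioo a b,
      ∫⁻ x in {x : ℝ | 1 ≤ |x|}, ENNReal.ofReal (Real.exp (s * x)) ∂K ≠ ⊤) :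
    Ioo a b ⊆ cumulantDomain c K := by
  refine interior_maximal (fun s hs => ?_) isOpen_Ioo
  refine integrable_kolmogorovMeasure_iff.2 (integrableOn_univ.1 ?_)
  have h_univ : {x : ℝ | 1 ≤ |x|} ∪ {x | |x| < 1} = univ :=
    eq_univ_of_forall fun x => le_or_gt 1 |x|
  rw [← h_univ]
  exact (integrableOn_sq_mul_exp_of_one_le_abs (interior_maximal hexp isOpen_Ioo hs)).union
    (integrableOn_sq_mul_exp_of_abs_lt_one hK s)

end Kolmogorov

section IteratedDeriv

lemma iteratedDeriv_mul_eq_of_forall_lt {𝕜 𝔸 : Type*} [NontriviallyNormedField 𝕜] [NormedRing 𝔸]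
    [NormedAlgebra 𝕜 𝔸] {f g : 𝕜 → 𝔸} {x : 𝕜} {n : ℕ} (hf : ContDiffAt 𝕜 n f x)
    (hg : ContDiffAt 𝕜 n g x) (hf0 : ∀ k < n, iteratedDeriv k f x = 0) :
    iteratedDeriv n (fun t => f t * g t) x = iteratedDeriv n f x * g x := by
  rw [iteratedDeriv_fun_mul hf hg, Finset.sum_range_succ, Finset.sum_eq_zero fun k hk => by
    rw [hf0 k (Finset.mem_range.1 hk), mul_zero, zero_mul]]
  simp

lemma contDiffAt_comp_ofReal_mul {f : ℂ → ℂ} {z : ℂ} {l : ℝ} (hf : AnalyticAt ℂ f (l * z))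
    {n : WithTop ℕ∞} : ContDiffAt ℝ n (fun x : ℝ => f (x * z)) l :=
  (hf.contDiffAt.restrict_scalars ℝ).comp l
    ((Complex.ofRealCLM.contDiff.contDiffAt).mul contDiffAt_const)

lemma iteratedDeriv_comp_ofReal_mul {f : ℂ → ℂ} {z : ℂ} {l : ℝ} (hf : AnalyticAt ℂ f (l * z))
    (n : ℕ) : iteratedDeriv n (fun x : ℝ => f (x * z)) l = z ^ n * iteratedDeriv n f (l * z) := by
  induction n generalizing l with
  | zero => simp
  | succ n ih =>
    have h_cont : ContinuousAt (fun x : ℝ => (x : ℂ) * z) l := by fun_prop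
    have h_eq : iteratedDeriv n (fun x : ℝ => f (x * z)) =ᶠ[𝓝 l]
        fun x => z ^ n * iteratedDeriv n f (x * z) :=
      (h_cont.eventually hf.eventually_analyticAt).mono fun x hx => ih hx
    have h_deriv : HasDerivAt (fun x : ℝ => iteratedDeriv n f (x * z))
        (iteratedDeriv (n + 1) f (l * z) * z) l := by
      have h_lin : HasDerivAt (fun w : ℂ => w * z) z (l : ℂ) := hasDerivAt_mul_const z
      have h_iter := (hf.iterated_deriv n).differentiableAt.hasDerivAt
      rw [← iteratedDeriv_eq_iterate, ← iteratedDeriv_succ] at h_iter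
      exact (h_iter.comp (l : ℂ) h_lin).comp_ofReal
    rw [iteratedDeriv_succ, h_eq.deriv_eq, (h_deriv.const_mul (z ^ n)).deriv]
    ring

end IteratedDeriv

section Cumulant

variable {μ c : ℝ} {K : Measure ℝ}

lemma kappa_zero (z : ℂ) :
    kappa μ c K 0 z = μ * z + ((c + ∫ x, x ^ 2 ∂K : ℝ) : ℂ) / 2 * z ^ 2 := if_pos rfl

lemma taylorMGF_kolmogorovMeasure_zero (hc : 0 ≤ c) (h0 : 0 ∈ cumulantDomain c K) :
    taylorMGF (kolmogorovMeasure c K) 0 = ((c + ∫ x, x ^ 2 ∂K : ℝ) : ℂ) / 2 := by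
  have := isFiniteMeasure_kolmogorovMeasure h0
  have h := iteratedDeriv_taylorMGF_zero h0 0
  rw [integral_pow_kolmogorovMeasure hc h0] at h
  simpa using h

lemma sq_mul_taylorMGF_kolmogorovMeasure (hc : 0 ≤ c) (h0 : 0 ∈ cumulantDomain c K) {w : ℂ}
    (hw : w.re ∈ cumulantDomain c K) :
    w ^ 2 * taylorMGF (kolmogorovMeasure c K) w =
      c / 2 * w ^ 2 + ∫ x : ℝ, (cexp (w * x) - 1 - w * x) ∂K := by
  have := isFiniteMeasure_kolmogorovMeasure h0
  have h_half : complexMGF id taylorWeight 0 = 1 / 2 := by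
    rw [← Complex.ofReal_zero, complexMGF_ofReal, mgf_taylorWeight_zero]
    norm_num
  have h_remainder (x : ℝ) : w ^ 2 * (x ^ 2 • complexMGF id taylorWeight (w * x)) =
      cexp (w * x) - 1 - w * x := by
    rw [← sq_mul_complexMGF_taylorWeight, Complex.real_smul]
    push_cast
    ring
  rw [taylorMGF_eq_integral (interior_subset hw), integral_kolmogorovMeasure hc
    (integrable_complexMGF_taylorWeight_mul (interior_subset hw)), mul_add,
    ← integral_const_mul, Complex.ofReal_zero, mul_zero, h_half, Complex.real_smul]
  simp only [h_remainder]
  ring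

lemma kappa_eq (hc : 0 ≤ c) (h0 : 0 ∈ cumulantDomain c K) {l : ℝ} {z : ℂ}
    (hz : l * z.re ∈ cumulantDomain c K) :
    kappa μ c K l z = μ * z + z ^ 2 * taylorMGF (kolmogorovMeasure c K) (l * z) := by
  rcases eq_or_ne l 0 with rfl | hl
  · rw [kappa_zero, Complex.ofReal_zero, zero_mul, taylorMGF_kolmogorovMeasure_zero hc h0]
    ring
  have hl' : (l : ℂ) ≠ 0 := Complex.ofReal_ne_zero.2 hl
  have h := sq_mul_taylorMGF_kolmogorovMeasure hc h0 (w := l * z)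
    (by rwa [Complex.re_ofReal_mul])
  rw [kappa, if_neg hl, eq_sub_of_add_eq' h.symm]
  field_simp
  ring

lemma eventually_kappa_eq (hc : 0 ≤ c) (h0 : 0 ∈ cumulantDomain c K) {l : ℝ} {z : ℂ}
    (hz : l * z.re ∈ cumulantDomain c K) :
    ∀ᶠ x : ℝ in 𝓝 l,
      kappa μ c K x z = μ * z + z ^ 2 * taylorMGF (kolmogorovMeasure c K) (x * z) :=
  ((continuous_mul_const z.re).continuousAt.eventually (isOpen_interior.mem_nhds hz)).mono
    fun _ hx => kappa_eq hc h0 hx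

lemma analyticAt_taylorMGF_kolmogorovMeasure (h0 : 0 ∈ cumulantDomain c K) {l : ℝ} {z : ℂ}
    (hz : l * z.re ∈ cumulantDomain c K) :
    AnalyticAt ℂ (taylorMGF (kolmogorovMeasure c K)) (l * z) := by
  have := isFiniteMeasure_kolmogorovMeasure h0
  exact analyticAt_taylorMGF (by rwa [Complex.re_ofReal_mul])

lemma contDiffAt_kappa (hc : 0 ≤ c) (h0 : 0 ∈ cumulantDomain c K) {l : ℝ} {z : ℂ}
    (hz : l * z.re ∈ cumulantDomain c K) {n : WithTop ℕ∞} :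
    ContDiffAt ℝ n (fun x => kappa μ c K x z) l :=
  (contDiffAt_const.add (contDiffAt_const.mul (contDiffAt_comp_ofReal_mul
    (analyticAt_taylorMGF_kolmogorovMeasure h0 hz)))).congr_of_eventuallyEq
      (eventually_kappa_eq hc h0 hz)

lemma contDiffAt_kbar (hc : 0 ≤ c) (h0 : 0 ∈ cumulantDomain c K) {l : ℝ} {u v : ℂ}
    (hu : 2 * (l * u.re) ∈ cumulantDomain c K) (hv : 2 * (l * v.re) ∈ cumulantDomain c K)
    {n : WithTop ℕ∞} : ContDiffAt ℝ n (fun x => kbar μ c K x u v) l := by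
  have huv : l * (u + v).re ∈ cumulantDomain c K := by
    rw [Complex.add_re, mul_add]
    exact add_mem_cumulantDomain hu hv
  exact ((contDiffAt_kappa hc h0 huv).sub
    (contDiffAt_kappa hc h0 (mem_cumulantDomain_of_two_mul_mem h0 hu))).sub
      (contDiffAt_kappa hc h0 (mem_cumulantDomain_of_two_mul_mem h0 hv))

lemma iteratedDeriv_kbar_zero (hc : 0 ≤ c) (h0 : 0 ∈ cumulantDomain c K) (n : ℕ) (u v : ℂ) :
    iteratedDeriv n (fun l => kbar μ c K l u v) 0 =
      ((u + v) ^ (n + 2) - u ^ (n + 2) - v ^ (n + 2)) *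
        (((c * 0 ^ n + ∫ x, x ^ (n + 2) ∂K : ℝ) : ℂ) / ((n + 1) * (n + 2))) := by
  have := isFiniteMeasure_kolmogorovMeasure h0
  have h_mem (w : ℂ) : (0 : ℝ) * w.re ∈ cumulantDomain c K := by rwa [zero_mul]
  have h_an (w : ℂ) := analyticAt_taylorMGF_kolmogorovMeasure h0 (h_mem w)
  have h_cd (w : ℂ) : ContDiffAt ℝ n
      (fun l : ℝ => w ^ 2 * taylorMGF (kolmogorovMeasure c K) (l * w)) 0 :=
    contDiffAt_const.mul (contDiffAt_comp_ofReal_mul (h_an w))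
  have h_term (w : ℂ) : iteratedDeriv n
      (fun l : ℝ => w ^ 2 * taylorMGF (kolmogorovMeasure c K) (l * w)) 0 =
      w ^ (n + 2) * (((c * 0 ^ n + ∫ x, x ^ (n + 2) ∂K : ℝ) : ℂ) / ((n + 1) * (n + 2))) := by
    rw [iteratedDeriv_const_mul_field, iteratedDeriv_comp_ofReal_mul (h_an w), Complex.ofReal_zero,
      zero_mul, iteratedDeriv_taylorMGF_zero h0, integral_pow_kolmogorovMeasure hc h0]
    ring
  have h_eq : (fun l => kbar μ c K l u v) =ᶠ[𝓝 0] fun l =>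
      (u + v) ^ 2 * taylorMGF (kolmogorovMeasure c K) (l * (u + v)) -
        u ^ 2 * taylorMGF (kolmogorovMeasure c K) (l * u) -
        v ^ 2 * taylorMGF (kolmogorovMeasure c K) (l * v) := by
    filter_upwards [eventually_kappa_eq hc h0 (h_mem u), eventually_kappa_eq hc h0 (h_mem v),
      eventually_kappa_eq hc h0 (h_mem (u + v))] with l hu hv huv
    rw [kbar, hu, hv, huv]
    ring
  rw [h_eq.iteratedDeriv_eq, iteratedDeriv_fun_sub ((h_cd _).sub (h_cd _)) (h_cd _),
    iteratedDeriv_fun_sub (h_cd _) (h_cd _), h_term, h_term, h_term]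
  ring

lemma kbar_zero (u v : ℂ) :
    kbar μ c K 0 u v = ((c + ∫ x, x ^ 2 ∂K : ℝ) : ℂ) * u * v := by
  simp only [kbar, kappa_zero]
  ring

lemma iteratedDeriv_one_kbar_zero (hc : 0 ≤ c) (h0 : 0 ∈ cumulantDomain c K) (u v : ℂ) :
    iteratedDeriv 1 (fun l => kbar μ c K l u v) 0 =
      ((∫ x, x ^ 3 ∂K : ℝ) : ℂ) / 2 * (u * v * (u + v)) := by
  rw [iteratedDeriv_kbar_zero hc h0]
  push_cast
  ring

lemma iteratedDeriv_two_kbar_zero (hc : 0 ≤ c) (h0 : 0 ∈ cumulantDomain c K) (u v : ℂ) :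
    iteratedDeriv 2 (fun l => kbar μ c K l u v) 0 =
      ((∫ x, x ^ 4 ∂K : ℝ) : ℂ) / 6 * (u * v * (2 * u ^ 2 + 3 * u * v + 2 * v ^ 2)) := by
  rw [iteratedDeriv_kbar_zero hc h0]
  push_cast
  ring

lemma kbar_one_one_ne_zero (hc : 0 ≤ c) (h0 : 0 ∈ cumulantDomain c K)
    (hpos : 0 < c + ∫ x, x ^ 2 ∂K) {l : ℝ} (h2 : 2 * l ∈ cumulantDomain c K) :
    kbar μ c K l 1 1 ≠ 0 := by
  have h1 := mem_cumulantDomain_of_two_mul_mem h0 h2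
  have := isFiniteMeasure_kolmogorovMeasure h0
  have := neZero_kolmogorovMeasure hc h0 hpos
  have h_ne := taylorMGF_ne_two_mul (interior_subset h1) (interior_subset h2)
  have h_kappa_one := kappa_eq (μ := μ) hc h0 (l := l) (z := 1) (by simpa using h1)
  have h_kappa_two := kappa_eq (μ := μ) hc h0 (l := l) (z := 1 + 1)
    (by simpa [one_add_one_eq_two, mul_comm] using h2)
  have h_two : ((2 * l : ℝ) : ℂ) = l * (1 + 1) := by push_cast; ring
  rw [h_two] at h_ne
  rw [kbar, h_kappa_one, h_kappa_two, mul_one (l : ℂ)]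
  intro h
  exact h_ne (by linear_combination -h / 2)

/-- The Gram determinant of the pairs `y, 1` and `z, 1` for `kbar`, which is `kbar μ c K lam 1 1`
times the coefficient `β(λ; y, z)` of the integrand. -/
noncomputable def kbarGram (μ c : ℝ) (K : Measure ℝ) (y z : ℂ) (lam : ℝ) : ℂ :=
  kbar μ c K lam y z * kbar μ c K lam 1 1 - kbar μ c K lam y 1 * kbar μ c K lam z 1

lemma iteratedDeriv_kbarGram_zero (hc : 0 ≤ c) (h0 : 0 ∈ cumulantDomain c K) (n : ℕ) (y z : ℂ) :
    iteratedDeriv n (kbarGram μ c K y z) 0 =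
      ∑ i ∈ Finset.range (n + 1), n.choose i *
        (iteratedDeriv i (fun l => kbar μ c K l y z) 0 *
            iteratedDeriv (n - i) (fun l => kbar μ c K l 1 1) 0 -
          iteratedDeriv i (fun l => kbar μ c K l y 1) 0 *
            iteratedDeriv (n - i) (fun l => kbar μ c K l z 1) 0) := by
  have h_cd (u v : ℂ) : ContDiffAt ℝ n (fun l => kbar μ c K l u v) 0 :=
    contDiffAt_kbar hc h0 (by simpa using h0) (by simpa using h0)
  unfold kbarGram
  rw [iteratedDeriv_fun_sub ((h_cd _ _).mul (h_cd _ _)) ((h_cd _ _).mul (h_cd _ _)),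
    iteratedDeriv_fun_mul (h_cd _ _) (h_cd _ _), iteratedDeriv_fun_mul (h_cd _ _) (h_cd _ _),
    ← Finset.sum_sub_distrib]
  exact Finset.sum_congr rfl fun i _ => by ring

lemma iteratedDeriv_kbarGram_zero_of_lt_two (hc : 0 ≤ c) (h0 : 0 ∈ cumulantDomain c K) {n : ℕ}
    (hn : n < 2) (y z : ℂ) : iteratedDeriv n (kbarGram μ c K y z) 0 = 0 := by
  rw [iteratedDeriv_kbarGram_zero hc h0]
  interval_cases n <;>
  · simp only [Finset.sum_range_succ, Finset.sum_range_zero, Nat.choose_self, Nat.choose_zero_right,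
      Nat.sub_self, Nat.sub_zero, iteratedDeriv_zero, kbar_zero, zero_add,
      iteratedDeriv_one_kbar_zero hc h0]
    ring

lemma iteratedDeriv_two_kbarGram_zero (hc : 0 ≤ c) (h0 : 0 ∈ cumulantDomain c K) (y z : ℂ) :
    iteratedDeriv 2 (kbarGram μ c K y z) 0 =
      1 / 2 * (((∫ x, x ^ 4 ∂K) * (c + ∫ x, x ^ 2 ∂K) - (∫ x, x ^ 3 ∂K) ^ 2 : ℝ) : ℂ) *
        (y * (y - 1)) * (z * (z - 1)) := by
  rw [iteratedDeriv_kbarGram_zero hc h0]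
  simp only [Finset.sum_range_succ, Finset.sum_range_zero, Nat.choose_self, Nat.choose_zero_right,
    Nat.choose_one_right, Nat.sub_self, Nat.sub_zero, Nat.reduceSub, iteratedDeriv_zero, kbar_zero,
    iteratedDeriv_one_kbar_zero hc h0, iteratedDeriv_two_kbar_zero hc h0]
  push_cast
  ring

lemma contDiffAt_kbarGram (hc : 0 ≤ c) (h0 : 0 ∈ cumulantDomain c K) {l : ℝ}
    (h2 : 2 * l ∈ cumulantDomain c K) {y z : ℂ} (hy : 2 * (l * y.re) ∈ cumulantDomain c K)
    (hz : 2 * (l * z.re) ∈ cumulantDomain c K) {n : WithTop ℕ∞} :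
    ContDiffAt ℝ n (kbarGram μ c K y z) l := by
  have h1 : 2 * (l * (1 : ℂ).re) ∈ cumulantDomain c K := by simpa using h2
  exact ((contDiffAt_kbar hc h0 hy hz).mul (contDiffAt_kbar hc h0 h1 h1)).sub
    ((contDiffAt_kbar hc h0 hy h1).mul (contDiffAt_kbar hc h0 hz h1))

end Cumulant

section Hedging

variable {μ c : ℝ} {K : Measure ℝ}

lemma contDiffAt_inv_kbar_one_one (hc : 0 ≤ c) (h0 : 0 ∈ cumulantDomain c K)
    (hpos : 0 < c + ∫ x, x ^ 2 ∂K) {l : ℝ} (h2 : 2 * l ∈ cumulantDomain c K)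
    {n : WithTop ℕ∞} : ContDiffAt ℝ n (fun x => (kbar μ c K x 1 1)⁻¹) l :=
  (contDiffAt_kbar hc h0 (by simpa using h2) (by simpa using h2)).inv
    (kbar_one_one_ne_zero hc h0 hpos h2)

lemma contDiffAt_etaLK (hc : 0 ≤ c) (h0 : 0 ∈ cumulantDomain c K)
    (hpos : 0 < c + ∫ x, x ^ 2 ∂K) {l : ℝ} (h2 : 2 * l ∈ cumulantDomain c K) {w : ℂ}
    (hw : 2 * (l * w.re) ∈ cumulantDomain c K) {n : WithTop ℕ∞} :
    ContDiffAt ℝ n (fun x => etaLK μ c K x w) l := by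
  have h1 : 2 * (l * (1 : ℂ).re) ∈ cumulantDomain c K := by simpa using h2
  simp only [etaLK, gamLK, div_eq_mul_inv]
  exact (contDiffAt_kappa hc h0 (mem_cumulantDomain_of_two_mul_mem h0 hw)).sub
    ((contDiffAt_kappa hc h0 (mem_cumulantDomain_of_two_mul_mem h0 h1)).mul
      ((contDiffAt_kbar hc h0 hw h1).mul (contDiffAt_inv_kbar_one_one hc h0 hpos h2)))

lemma etaLK_zero {σ2 : ℝ} (hσ2 : σ2 = c + ∫ x, x ^ 2 ∂K) (hne : σ2 ≠ 0) (w : ℂ) :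
    etaLK μ c K 0 w = σ2 / 2 * (w * (w - 1)) := by
  have hne' : (σ2 : ℂ) ≠ 0 := Complex.ofReal_ne_zero.2 hne
  rw [etaLK, gamLK, kbar_zero, kbar_zero, kappa_zero, kappa_zero, ← hσ2]
  field_simp
  ring

/-- The exponent `κ(λ, y + z) t + ρ_j(λ; y, z) s` of the integrand, `s` being the time to maturity
`T - t`. -/
noncomputable def hedgingExponent (μ c : ℝ) (K : Measure ℝ) (j t s y z : ℂ) (lam : ℝ) : ℂ :=
  kappa μ c K lam (y + z) * t +
    (etaLK μ c K lam y + etaLK μ c K lam z - j * kappa μ c K lam 1 ^ 2 / kbar μ c K lam 1 1) * s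

lemma contDiffAt_hedgingExponent (hc : 0 ≤ c) (h0 : 0 ∈ cumulantDomain c K)
    (hpos : 0 < c + ∫ x, x ^ 2 ∂K) {l : ℝ} (h2 : 2 * l ∈ cumulantDomain c K) {y z : ℂ}
    (hy : 2 * (l * y.re) ∈ cumulantDomain c K) (hz : 2 * (l * z.re) ∈ cumulantDomain c K)
    (j t s : ℂ) {n : WithTop ℕ∞} : ContDiffAt ℝ n (hedgingExponent μ c K j t s y z) l := by
  have h1 : 2 * (l * (1 : ℂ).re) ∈ cumulantDomain c K := by simpa using h2
  have hyz : l * (y + z).re ∈ cumulantDomain c K := by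
    rw [Complex.add_re, mul_add]
    exact add_mem_cumulantDomain hy hz
  have h_eta := (contDiffAt_etaLK (μ := μ) (n := n) hc h0 hpos h2 hy).add
    (contDiffAt_etaLK (μ := μ) hc h0 hpos h2 hz)
  have h_kappa_one :=
    contDiffAt_kappa (μ := μ) (n := n) hc h0 (mem_cumulantDomain_of_two_mul_mem h0 h1)
  unfold hedgingExponent
  simp only [div_eq_mul_inv]
  exact ((contDiffAt_kappa hc h0 hyz).mul contDiffAt_const).add
    ((h_eta.sub ((contDiffAt_const.mul (h_kappa_one.pow 2)).mul
      (contDiffAt_inv_kbar_one_one hc h0 hpos h2))).mul contDiffAt_const)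

lemma cexp_hedgingExponent_zero {σ2 : ℝ} (hσ2 : σ2 = c + ∫ x, x ^ 2 ∂K) (hne : σ2 ≠ 0)
    (j t s y z : ℂ) :
    cexp (hedgingExponent μ c K j t s y z 0) =
      cexp (-j * (((μ + σ2 / 2) ^ 2 / σ2 : ℝ) : ℂ) * s) * cexp (kappa μ c K 0 (y + z) * t) *
        cexp (σ2 / 2 * (y * (y - 1) + z * (z - 1)) * s) := by
  have hne' : (σ2 : ℂ) ≠ 0 := Complex.ofReal_ne_zero.2 hne
  rw [hedgingExponent, etaLK_zero hσ2 hne, etaLK_zero hσ2 hne, kbar_zero, kappa_zero 1, ← hσ2,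
    ← Complex.exp_add, ← Complex.exp_add]
  congr 1
  push_cast
  field_simp
  ring

/-- The cofactor of `kbarGram` in the integrand, with the constant `S₀ ^ (y + z)` replaced by an
arbitrary `A`. -/
noncomputable def hedgingCofactor (μ c : ℝ) (K : Measure ℝ) (A j t s y z : ℂ) (lam : ℝ) : ℂ :=
  A * cexp (hedgingExponent μ c K j t s y z lam) / kbar μ c K lam 1 1

lemma contDiffAt_hedgingCofactor (hc : 0 ≤ c) (h0 : 0 ∈ cumulantDomain c K)
    (hpos : 0 < c + ∫ x, x ^ 2 ∂K) {l : ℝ} (h2 : 2 * l ∈ cumulantDomain c K) {y z : ℂ}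
    (hy : 2 * (l * y.re) ∈ cumulantDomain c K) (hz : 2 * (l * z.re) ∈ cumulantDomain c K)
    (A j t s : ℂ) {n : WithTop ℕ∞} : ContDiffAt ℝ n (hedgingCofactor μ c K A j t s y z) l := by
  unfold hedgingCofactor
  simp only [div_eq_mul_inv]
  exact (contDiffAt_const.mul (contDiffAt_hedgingExponent hc h0 hpos h2 hy hz j t s).cexp).mul
    (contDiffAt_inv_kbar_one_one hc h0 hpos h2)

lemma eventuallyEq_kbarGram_mul_hedgingCofactor (hc : 0 ≤ c) (h0 : 0 ∈ cumulantDomain c K)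
    (hpos : 0 < c + ∫ x, x ^ 2 ∂K) {l : ℝ} (h2 : 2 * l ∈ cumulantDomain c K)
    (A j t s y z : ℂ) :
    (fun x => A * (kbar μ c K x y z - kbar μ c K x y 1 * kbar μ c K x z 1 / kbar μ c K x 1 1) *
      cexp (hedgingExponent μ c K j t s y z x)) =ᶠ[𝓝 l]
        fun x => kbarGram μ c K y z x * hedgingCofactor μ c K A j t s y z x := by
  have h1 : 2 * (l * (1 : ℂ).re) ∈ cumulantDomain c K := by simpa using h2
  have h_cont : ContinuousAt (fun x => kbar μ c K x 1 1) l :=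
    (contDiffAt_kbar (n := 0) hc h0 h1 h1).continuousAt
  filter_upwards [h_cont.eventually_ne (kbar_one_one_ne_zero hc h0 hpos h2)] with x hx
  rw [kbarGram, hedgingCofactor]
  field_simp

lemma iteratedDeriv_two_kbarGram_mul_hedgingCofactor_zero (hc : 0 ≤ c)
    (h0 : 0 ∈ cumulantDomain c K) {σ2 : ℝ} (hσ2 : σ2 = c + ∫ x, x ^ 2 ∂K) (hσ2pos : 0 < σ2)
    {σ s3 s4 : ℝ} (hσ : σ = √σ2) (hs3 : s3 = (∫ x, x ^ 3 ∂K) / σ ^ 3)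
    (hs4 : s4 = (∫ x, x ^ 4 ∂K) / σ ^ 4) (A j t s y z : ℂ) :
    iteratedDeriv 2 (kbarGram μ c K y z) 0 * hedgingCofactor μ c K A j t s y z 0 =
      1 / 2 * (σ : ℂ) ^ 4 * ((s4 : ℂ) - (s3 : ℂ) ^ 2) *
        cexp (-j * (((μ + σ2 / 2) ^ 2 / σ2 : ℝ) : ℂ) * s) * A *
        cexp (kappa μ c K 0 (y + z) * t) * cexp (σ2 / 2 * (y * (y - 1) + z * (z - 1)) * s) *
        (y * (y - 1)) * (z * (z - 1)) := by
  have hσ_sq : σ2 = σ ^ 2 := by rw [hσ, Real.sq_sqrt hσ2pos.le]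
  have hσ_ne : (σ : ℂ) ≠ 0 := by
    rw [hσ, Complex.ofReal_ne_zero]
    exact (Real.sqrt_pos.2 hσ2pos).ne'
  rw [iteratedDeriv_two_kbarGram_zero hc h0, hedgingCofactor, kbar_zero, ← hσ2,
    cexp_hedgingExponent_zero hσ2 hσ2pos.ne', hs3, hs4]
  generalize cexp (-j * (((μ + σ2 / 2) ^ 2 / σ2 : ℝ) : ℂ) * s) = e₁
  generalize cexp (kappa μ c K 0 (y + z) * t) = e₂
  generalize cexp (σ2 / 2 * (y * (y - 1) + z * (z - 1)) * s) = e₃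
  rw [hσ_sq]
  push_cast
  field_simp

theorem hedging_error_integrand_expansion_general (hc : 0 ≤ c) {y z : ℂ}
    (h0 : 0 ∈ cumulantDomain c K) (h2 : 2 ∈ cumulantDomain c K)
    (hy : 2 * y.re ∈ cumulantDomain c K) (hz : 2 * z.re ∈ cumulantDomain c K)
    {σ2 : ℝ} (hσ2 : σ2 = c + ∫ x, x ^ 2 ∂K) (hσ2pos : 0 < σ2)
    {σ s3 s4 : ℝ} (hσ : σ = √σ2) (hs3 : s3 = (∫ x, x ^ 3 ∂K) / σ ^ 3)
    (hs4 : s4 = (∫ x, x ^ 4 ∂K) / σ ^ 4) {A j t s : ℂ} {Jf : ℝ → ℂ}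
    (hJf : ∀ lam, Jf lam =
      A * (kbar μ c K lam y z - kbar μ c K lam y 1 * kbar μ c K lam z 1 / kbar μ c K lam 1 1) *
        cexp (hedgingExponent μ c K j t s y z lam)) :
    (∀ lam ∈ Icc (0 : ℝ) 1, DifferentiableWithinAt ℝ Jf (Icc 0 1) lam ∧
      DifferentiableWithinAt ℝ (derivWithin Jf (Icc 0 1)) (Icc 0 1) lam) ∧
    Jf 0 = 0 ∧
    derivWithin Jf (Icc 0 1) 0 = 0 ∧
    iteratedDerivWithin 2 Jf (Icc 0 1) 0 =
      1 / 2 * (σ : ℂ) ^ 4 * ((s4 : ℂ) - (s3 : ℂ) ^ 2) *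
        cexp (-j * (((μ + σ2 / 2) ^ 2 / σ2 : ℝ) : ℂ) * s) * A *
        cexp (kappa μ c K 0 (y + z) * t) * cexp (σ2 / 2 * (y * (y - 1) + z * (z - 1)) * s) *
        (y * (y - 1)) * (z * (z - 1)) := by
  have hpos := hσ2 ▸ hσ2pos
  have h_mem {l r : ℝ} (hl : l ∈ Icc (0 : ℝ) 1) (hr : 2 * r ∈ cumulantDomain c K) :
      2 * (l * r) ∈ cumulantDomain c K :=
    mul_left_comm l 2 r ▸ mul_mem_cumulantDomain h0 hr hl
  have h_two {l : ℝ} (hl : l ∈ Icc (0 : ℝ) 1) : 2 * l ∈ cumulantDomain c K :=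
    mul_comm l 2 ▸ mul_mem_cumulantDomain h0 h2 hl
  have h_gram {l : ℝ} (hl : l ∈ Icc (0 : ℝ) 1) {n : WithTop ℕ∞} :
      ContDiffAt ℝ n (kbarGram μ c K y z) l :=
    contDiffAt_kbarGram hc h0 (h_two hl) (h_mem hl hy) (h_mem hl hz)
  have h_cofactor {l : ℝ} (hl : l ∈ Icc (0 : ℝ) 1) {n : WithTop ℕ∞} :
      ContDiffAt ℝ n (hedgingCofactor μ c K A j t s y z) l :=
    contDiffAt_hedgingCofactor hc h0 hpos (h_two hl) (h_mem hl hy) (h_mem hl hz) A j t s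
  have h_eq {l : ℝ} (hl : l ∈ Icc (0 : ℝ) 1) :=
    funext hJf ▸ eventuallyEq_kbarGram_mul_hedgingCofactor hc h0 hpos (h_two hl) A j t s y z
  have h_cd {l : ℝ} (hl : l ∈ Icc (0 : ℝ) 1) {n : WithTop ℕ∞} : ContDiffAt ℝ n Jf l :=
    ((h_gram hl).mul (h_cofactor hl)).congr_of_eventuallyEq (h_eq hl)
  have h_uniq := uniqueDiffOn_Icc (zero_lt_one (α := ℝ))
  have h_zero : (0 : ℝ) ∈ Icc (0 : ℝ) 1 := left_mem_Icc.2 zero_le_one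
  have h_jet {n : ℕ} (hn : n ≤ 2) : iteratedDerivWithin n Jf (Icc 0 1) 0 =
      iteratedDeriv n (kbarGram μ c K y z) 0 * hedgingCofactor μ c K A j t s y z 0 := by
    rw [iteratedDerivWithin_eq_iteratedDeriv h_uniq (h_cd h_zero) h_zero,
      (h_eq h_zero).iteratedDeriv_eq,
      iteratedDeriv_mul_eq_of_forall_lt (h_gram h_zero) (h_cofactor h_zero) fun k hk =>
        iteratedDeriv_kbarGram_zero_of_lt_two hc h0 (hk.trans_le hn) y z]
  have h_cdOn : ContDiffOn ℝ 2 Jf (Icc 0 1) := fun l hl => (h_cd hl).contDiffWithinAt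
  rw [← iteratedDerivWithin_one]
  refine ⟨fun l hl => ⟨h_cdOn.differentiableOn two_ne_zero l hl,
    h_cdOn.differentiableOn_iteratedDerivWithin (by norm_num) h_uniq l hl⟩, ?_, ?_, ?_⟩
  · rw [← iteratedDerivWithin_zero (f := Jf), h_jet zero_le_two,
      iteratedDeriv_kbarGram_zero_of_lt_two hc h0 two_pos, zero_mul]
  · rw [h_jet one_le_two, iteratedDeriv_kbarGram_zero_of_lt_two hc h0 one_lt_two, zero_mul]
  · rw [h_jet le_rfl, iteratedDeriv_two_kbarGram_mul_hedgingCofactor_zero hc h0 hσ2 hσ2pos hσ hs3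
      hs4]

end Hedging

/-- second-order expansion of the integrand `J_j(λ; t, y, z)` of the
mean squared hedging error (key computation in the proof of Theorems `errVOapprox`
and `errPureapprox`). -/
theorem hedging_error_integrand_expansion
    (μ c : ℝ) (hc : 0 ≤ c) (K : MeasureTheory.Measure ℝ)
    (hK0 : K {0} = 0)
    (hKmin : ∫⁻ x : ℝ, ENNReal.ofReal (min 1 (x ^ 2)) ∂K ≠ ⊤)
    (R : ℝ) (hR : R ≠ 0) (a b : ℝ)
    (h0 : (0 : ℝ) ∈ Set.Ioo a b) (h2 : (2 : ℝ) ∈ Set.Ioo a b)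
    (h2R : 2 * R ∈ Set.Ioo a b)
    (hK5 : ∫⁻ x in {x : ℝ | 1 ≤ |x|}, ENNReal.ofReal (|x| ^ 5) ∂K ≠ ⊤)
    (hKexp : ∀ s ∈ Set.Ioo a b,
      ∫⁻ x in {x : ℝ | 1 ≤ |x|}, ENNReal.ofReal (Real.exp (s * x)) ∂K ≠ ⊤)
    (σ2 : ℝ) (hσ2 : σ2 = c + ∫ x : ℝ, x ^ 2 ∂K) (hσ2pos : 0 < σ2)
    (σ m s3 s4 : ℝ) (hσ : σ = Real.sqrt σ2) (hm : m = (μ + σ2 / 2) / σ2)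
    (hs3 : s3 = (∫ x : ℝ, x ^ 3 ∂K) / σ ^ 3) (hs4 : s4 = (∫ x : ℝ, x ^ 4 ∂K) / σ ^ 4)
    (T t S₀ : ℝ) (hT : 0 < T) (ht : t ∈ Set.Icc 0 T) (hS₀ : 0 < S₀)
    (j : ℕ) (hj : j ∈ ({0, 1} : Set ℕ))
    (y z : ℂ) (hy : y.re = R) (hz : z.re = R)
    (Jf : ℝ → ℂ)
    (hJf : ∀ lam : ℝ, Jf lam =
      cpowR S₀ (y + z) *
        (kbar μ c K lam y z - kbar μ c K lam y 1 * kbar μ c K lam z 1 / kbar μ c K lam 1 1) *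
        Complex.exp (kappa μ c K lam (y + z) * (t : ℂ) +
          (etaLK μ c K lam y + etaLK μ c K lam z -
            (j : ℂ) * kappa μ c K lam 1 ^ 2 / kbar μ c K lam 1 1) * ((T : ℂ) - (t : ℂ)))) :
    (∀ lam ∈ Set.Icc (0 : ℝ) 1,
      DifferentiableWithinAt ℝ Jf (Set.Icc 0 1) lam ∧
      DifferentiableWithinAt ℝ (derivWithin Jf (Set.Icc 0 1)) (Set.Icc 0 1) lam) ∧
    Jf 0 = 0 ∧
    derivWithin Jf (Set.Icc 0 1) 0 = 0 ∧
    iteratedDerivWithin 2 Jf (Set.Icc 0 1) 0 =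
      (1 / 2 : ℂ) * (σ : ℂ) ^ 4 * ((s4 : ℂ) - (s3 : ℂ) ^ 2) *
        Complex.exp (-(j : ℂ) * (((μ + σ2 / 2) ^ 2 / σ2 : ℝ) : ℂ) * ((T : ℂ) - (t : ℂ))) *
        cpowR S₀ (y + z) * Complex.exp (kappa μ c K 0 (y + z) * (t : ℂ)) *
        Complex.exp (((σ2 : ℝ) : ℂ) / 2 * (y * (y - 1) + z * (z - 1)) * ((T : ℂ) - (t : ℂ))) *
        (y * (y - 1)) * (z * (z - 1)) := by
  have h_dom := Ioo_subset_cumulantDomain (c := c) hKmin hKexp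
  exact hedging_error_integrand_expansion_general hc (h_dom h0) (h_dom h2) (h_dom (hy ▸ h2R))
    (h_dom (hz ▸ h2R)) hσ2 hσ2pos hσ hs3 hs4 hJf
end

section
/- Fix μ ∈ ℝ, σ > 0, T > 0, S₀ > 0, and let the payoff data (f, R, l, l̂, p, z_y) be as defined. Then ∫_ℝ∫_ℝ∫₀ᵀ S₀^{z_u+z_v}·e^{(μ(z_u+z_v)+½σ²(z_u+z_v)²)t}·e^{½σ²(z_u(z_u−1)+z_v(z_v−1))(T−t)}·z_u(z_u−1)·z_v(z_v−1)·p(z_u)p(z_v) dt du dv = ∫₀ᵀ ∫_ℝ D₂(t, S₀e^{μt+x})² dγ_{σ²t}(x) dt, where D₂(t,s) := ∫_ℝ z_y(z_y−1)·s^{z_y}·e^{½σ²z_y(z_y−1)(T−t)}·p(z_y) dy and γ_v denotes the Gaussian measure on ℝ with mean 0 and variance v (the Dirac measure at 0 for v = 0); in particular all integrals above are well defined. -/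
open MeasureTheory ProbabilityTheory Complex Set

noncomputable def zLine (R y : ℝ) : ℂ := (R : ℂ) + (y : ℂ) * Complex.I

/-- Fourier transform `l̂(y) = ∫ l(x) e^{-ixy} dx`. -/
noncomputable def lhat (l : ℝ → ℝ) (y : ℝ) : ℂ :=
  ∫ x : ℝ, (l x : ℂ) * Complex.exp (-(Complex.I * (x : ℂ) * (y : ℂ)))

noncomputable def pCoef (l : ℝ → ℝ) (y : ℝ) : ℂ := lhat l y / (2 * (Real.pi : ℂ))

/-- Black-Scholes cash greek `D_n(t,s)` in integral form (with `C = D_0`). -/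
noncomputable def cashGreek (σ2 T R : ℝ) (l : ℝ → ℝ) (n : ℕ) (t s : ℝ) : ℂ :=
  ∫ y : ℝ, (∏ k ∈ Finset.range n, (zLine R y - (k : ℂ))) * cpowR s (zLine R y) *
    Complex.exp (((σ2 : ℂ) / 2) * zLine R y * (zLine R y - 1) * ((T : ℂ) - (t : ℂ))) * pCoef l y

/-!
Writing `w(y) = z_y(z_y-1)p(z_y)`, the cash gamma at `S₀e^{μt+x}` is a superposition
`∫ a_t(y) e^{z_y x} dy` of exponentials with `|a_t| ≤ C |w|`. Its square is a double superposition
of the exponentials `e^{(z_u+z_v)x}`, and integrating these against `γ_{σ²t}` replaces them by the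
moment generating function `e^{σ²t(z_u+z_v)²/2}`; the result is exactly the integrand of the triple
integral at time `t`. All uses of Fubini rest on the integrability of `w`: four integrable
derivatives of `l` make `l̂` decay like `|y|⁻⁴`, while the polynomial factor grows like `|y|²`.
-/

section Fubini

variable {α β γ E : Type*} [MeasurableSpace α] [MeasurableSpace β] [MeasurableSpace γ]
  [NormedAddCommGroup E] {μ : Measure α} {ν : Measure β} {ρ : Measure γ} [SFinite ν] [SFinite ρ]
  {F : α → β → γ → E}

lemma integrable_prodAssoc
    (hF : Integrable (fun q : α × β × γ => F q.1 q.2.1 q.2.2) (μ.prod (ν.prod ρ))) :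
    Integrable (fun q : (α × β) × γ => F q.1.1 q.1.2 q.2) ((μ.prod ν).prod ρ) :=
  (measurePreserving_prodAssoc μ ν ρ).integrable_comp_of_integrable hF

lemma integral_integral_integral_eq_integral_integral_prod [SFinite μ] [NormedSpace ℝ E]
    (hF : Integrable (fun q : α × β × γ => F q.1 q.2.1 q.2.2) (μ.prod (ν.prod ρ))) :
    ∫ a, ∫ b, ∫ c, F a b c ∂ρ ∂ν ∂μ = ∫ c, ∫ q : α × β, F q.1 q.2 c ∂(μ.prod ν) ∂ρ := by
  have hF' := integrable_prodAssoc hF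
  rw [← integral_integral_swap (f := fun (q : α × β) c => F q.1 q.2 c) hF']
  exact (integral_prod (fun q : α × β => ∫ c, F q.1 q.2 c ∂ρ) hF'.integral_prod_left).symm

end Fubini

lemma norm_cexp_mul_sq_div_two_le {c : ℝ} (hc : 0 ≤ c) (z : ℂ) :
    ‖cexp (c * z ^ 2 / 2)‖ ≤ Real.exp (c * z.re ^ 2 / 2) := by
  rw [norm_exp, Real.exp_le_exp, mul_div_assoc, re_ofReal_mul, sq z, div_ofNat_re, mul_re]
  nlinarith [mul_nonneg hc (sq_nonneg z.im)]

lemma iteratedDeriv_clm_comp {E F : Type*} [NormedAddCommGroup E] [NormedSpace ℝ E]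
    [NormedAddCommGroup F] [NormedSpace ℝ F] (L : E →L[ℝ] F) {f : ℝ → E} {n : ℕ}
    (hf : ContDiff ℝ n f) : iteratedDeriv n (L ∘ f) = L ∘ iteratedDeriv n f := by
  ext x
  rw [iteratedDeriv, L.iteratedFDeriv_comp_left hf.contDiffAt le_rfl]
  rfl

lemma lhat_eq_fourier (l : ℝ → ℝ) (y : ℝ) :
    lhat l y = FourierTransform.fourier (fun x => (l x : ℂ)) (y / (2 * Real.pi)) := by
  rw [Real.fourier_real_eq_integral_exp_smul, lhat]
  congr 1
  ext x
  rw [smul_eq_mul, mul_comm]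
  congr 2
  push_cast
  field_simp

lemma continuous_lhat {l : ℝ → ℝ} (hl : Integrable l) : Continuous (lhat l) := by
  have hF : Continuous (FourierTransform.fourier fun x => (l x : ℂ)) :=
    VectorFourier.fourierIntegral_continuous Real.continuous_fourierChar
      (by exact continuous_inner) hl.ofReal
  rw [funext (lhat_eq_fourier l)]
  fun_prop

lemma abs_pow_mul_norm_lhat_le {l : ℝ → ℝ} {n : ℕ} (hl : ContDiff ℝ n l)
    (hlint : ∀ m ≤ n, Integrable (iteratedDeriv m l)) (y : ℝ) :
    |y| ^ n * ‖lhat l y‖ ≤ ∫ x, |iteratedDeriv n l x| := by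
  have hderiv : ∀ m ≤ n, iteratedDeriv m (fun x => (l x : ℂ)) =
      fun x => ((iteratedDeriv m l x : ℝ) : ℂ) := fun m hm =>
    iteratedDeriv_clm_comp ofRealCLM (hl.of_le (by exact_mod_cast hm))
  have hcomplex : ContDiff ℝ n (fun x => (l x : ℂ)) := ofRealCLM.contDiff.comp hl
  have hcomplexint : ∀ m : ℕ, (m : ℕ∞) ≤ n → Integrable (iteratedDeriv m fun x => (l x : ℂ)) :=
    fun m hm => by
      rw [hderiv m (Nat.cast_le.1 hm)]
      exact (hlint m (Nat.cast_le.1 hm)).ofReal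
  have hfourier : FourierTransform.fourier (fun x => ((iteratedDeriv n l x : ℝ) : ℂ))
      (y / (2 * Real.pi)) = (I * y) ^ n * lhat l y := by
    rw [← hderiv n le_rfl, Real.fourier_iteratedDeriv (N := n) hcomplex hcomplexint le_rfl,
      lhat_eq_fourier]
    beta_reduce
    rw [smul_eq_mul]
    congr 2
    push_cast
    field_simp
  calc |y| ^ n * ‖lhat l y‖
      = ‖FourierTransform.fourier (fun x => ((iteratedDeriv n l x : ℝ) : ℂ))
          (y / (2 * Real.pi))‖ := by simp [hfourier]
    _ ≤ ∫ x, ‖((iteratedDeriv n l x : ℝ) : ℂ)‖ :=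
        VectorFourier.norm_fourierIntegral_le_integral_norm _ _ _ _ _
    _ = ∫ x, |iteratedDeriv n l x| := by simp only [norm_real, Real.norm_eq_abs]

lemma exists_one_add_abs_pow_mul_norm_lhat_le {l : ℝ → ℝ} {n : ℕ} (hl : ContDiff ℝ n l)
    (hlint : ∀ m ≤ n, Integrable (iteratedDeriv m l)) :
    ∃ C, ∀ y, (1 + |y|) ^ n * ‖lhat l y‖ ≤ C := by
  refine ⟨2 ^ (n - 1) * ((∫ x, |l x|) + ∫ x, |iteratedDeriv n l x|), fun y => ?_⟩
  have hzero : ‖lhat l y‖ ≤ ∫ x, |l x| := by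
    simpa using abs_pow_mul_norm_lhat_le (n := 0) (hl.of_le (by simp))
      (fun m hm => hlint m (hm.trans n.zero_le)) y
  calc (1 + |y|) ^ n * ‖lhat l y‖
      ≤ 2 ^ (n - 1) * (1 ^ n + |y| ^ n) * ‖lhat l y‖ := by
        gcongr
        exact add_pow_le zero_le_one (abs_nonneg y) n
    _ = 2 ^ (n - 1) * (‖lhat l y‖ + |y| ^ n * ‖lhat l y‖) := by ring
    _ ≤ _ := by
        gcongr
        exact abs_pow_mul_norm_lhat_le hl hlint y

lemma contDiff_damped {n : WithTop ℕ∞} {f : ℝ → ℝ} (hf : ContDiffOn ℝ n f (Ioi 0)) (R : ℝ) :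
    ContDiff ℝ n fun x => f (Real.exp x) * Real.exp (-R * x) :=
  (hf.comp_contDiff Real.contDiff_exp Real.exp_pos).mul (by fun_prop)

lemma zLine_re (R y : ℝ) : (zLine R y).re = R := by simp [zLine]

lemma norm_cexp_zLine_mul (R y x : ℝ) : ‖cexp (zLine R y * x)‖ = Real.exp (R * x) := by
  rw [norm_exp, re_mul_ofReal, zLine_re]

@[fun_prop]
lemma continuous_zLine (R : ℝ) : Continuous (zLine R) := by
  unfold zLine
  fun_prop

lemma norm_prod_zLine_sub_le (R y : ℝ) (n : ℕ) :
    ‖∏ k ∈ Finset.range n, (zLine R y - k)‖ ≤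
      (∏ k ∈ Finset.range n, (1 + |R - k|)) * (1 + |y|) ^ n := by
  have hfactor : ∀ k : ℕ, ‖zLine R y - k‖ ≤ (1 + |R - k|) * (1 + |y|) := fun k =>
    calc ‖zLine R y - k‖ = ‖((R - k : ℝ) : ℂ) + y * I‖ := by
          rw [zLine]
          push_cast
          ring_nf
      _ ≤ |R - k| + |y| := (norm_add_le _ _).trans_eq (by simp [-ofReal_sub, norm_real])
      _ ≤ (1 + |R - k|) * (1 + |y|) := by
          linarith [mul_nonneg (abs_nonneg (R - k)) (abs_nonneg y)]
  calc ‖∏ k ∈ Finset.range n, (zLine R y - k)‖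
      = ∏ k ∈ Finset.range n, ‖zLine R y - k‖ := norm_prod _ _
    _ ≤ ∏ k ∈ Finset.range n, (1 + |R - k|) * (1 + |y|) :=
        Finset.prod_le_prod (fun _ _ => norm_nonneg _) fun k _ => hfactor k
    _ = _ := by rw [Finset.prod_mul_distrib, Finset.prod_const, Finset.card_range]

/-- The weight `z_y (z_y - 1) ⋯ (z_y - n + 1) p(z_y)` that the `n`-th cash greek puts on the
exponential with exponent `z_y`. -/
noncomputable def greekWeight (R : ℝ) (l : ℝ → ℝ) (n : ℕ) (y : ℝ) : ℂ :=
  (∏ k ∈ Finset.range n, (zLine R y - k)) * pCoef l y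

lemma continuous_greekWeight (R : ℝ) {l : ℝ → ℝ} (hl : Integrable l) (n : ℕ) :
    Continuous (greekWeight R l n) := by
  have := continuous_lhat hl
  unfold greekWeight pCoef
  fun_prop

lemma integrable_greekWeight (R : ℝ) {l : ℝ → ℝ} {n : ℕ} (hl : ContDiff ℝ (n + 2 : ℕ) l)
    (hlint : ∀ m ≤ n + 2, Integrable (iteratedDeriv m l)) : Integrable (greekWeight R l n) := by
  obtain ⟨C, hC⟩ := exists_one_add_abs_pow_mul_norm_lhat_le hl hlint
  have hcont := continuous_greekWeight R (by simpa using hlint 0 (Nat.zero_le _)) n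
  set P := ∏ k ∈ Finset.range n, (1 + |R - k|)
  refine (integrable_inv_one_add_sq.const_mul (P * C / (2 * Real.pi))).mono'
    hcont.aestronglyMeasurable (.of_forall fun y => ?_)
  rw [← div_eq_mul_inv, le_div_iff₀ (by positivity)]
  have hpCoef : ‖pCoef l y‖ = ‖lhat l y‖ / (2 * Real.pi) := by
    simp [pCoef, abs_of_pos Real.pi_pos]
  calc ‖greekWeight R l n y‖ * (1 + y ^ 2)
      ≤ P * (1 + |y|) ^ n * (‖lhat l y‖ / (2 * Real.pi)) * (1 + |y|) ^ 2 := by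
        rw [greekWeight, norm_mul, hpCoef]
        gcongr
        · exact norm_prod_zLine_sub_le R y n
        · nlinarith [abs_nonneg y, sq_abs y]
    _ = P * ((1 + |y|) ^ (n + 2) * ‖lhat l y‖) / (2 * Real.pi) := by ring
    _ ≤ P * C / (2 * Real.pi) := by
        gcongr
        exact hC y

/-- The superposition `∫ a(y) e^{z_y x} dy` of exponentials along the vertical line of real part
`R`; it is a Bochner integral, hence `0` if `a` is not integrable. -/
noncomputable def lineLaplace (R : ℝ) (a : ℝ → ℂ) (x : ℝ) : ℂ :=
  ∫ y, a y * cexp (zLine R y * x)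

section LineLaplace

variable {Ω : Type*} [MeasurableSpace Ω] {ν : Measure Ω} {X : Ω → ℝ} {R R' : ℝ} {a b : ℝ → ℂ}

lemma integrable_mul_cexp_zLine_mul (hX : AEMeasurable X ν)
    (hexp : R + R' ∈ integrableExpSet X ν) (ha : Integrable a) (hb : Integrable b) :
    Integrable (fun p : Ω × ℝ × ℝ => (a p.2.1 * cexp (zLine R p.2.1 * X p.1)) *
      (b p.2.2 * cexp (zLine R' p.2.2 * X p.1))) (ν.prod (volume.prod volume)) := by
  have hbound := Integrable.mul_prod hexp (ha.norm.mul_prod hb.norm)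
  refine hbound.mono' ?_ (.of_forall fun ⟨ω, u, v⟩ => le_of_eq ?_)
  · have : AEMeasurable (fun p : Ω × ℝ × ℝ => X p.1) (ν.prod (volume.prod volume)) :=
      hX.comp_fst
    have hexp_meas : ∀ (ρ : ℝ) (y : Ω × ℝ × ℝ → ℝ), Measurable y →
        AEStronglyMeasurable (fun p => cexp (zLine ρ (y p) * X p.1))
          (ν.prod (volume.prod volume)) := fun ρ y hy => by
      have := (continuous_zLine ρ).measurable
      exact AEMeasurable.aestronglyMeasurable (by fun_prop)
    exact (ha.1.comp_fst.comp_snd.mul (hexp_meas R _ (by fun_prop))).mul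
      (hb.1.comp_snd.comp_snd.mul (hexp_meas R' _ (by fun_prop)))
  · simp only [norm_mul, norm_cexp_zLine_mul, add_mul, Real.exp_add]
    ring

lemma lineLaplace_mul_lineLaplace (x : ℝ) :
    lineLaplace R a x * lineLaplace R' b x =
      ∫ q : ℝ × ℝ, (a q.1 * cexp (zLine R q.1 * x)) * (b q.2 * cexp (zLine R' q.2 * x)) :=
  (integral_prod_mul (fun u => a u * cexp (zLine R u * x))
    (fun v => b v * cexp (zLine R' v * x))).symm

lemma integrable_lineLaplace_mul [SFinite ν] (hX : AEMeasurable X ν)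
    (hexp : R + R' ∈ integrableExpSet X ν) (ha : Integrable a) (hb : Integrable b) :
    Integrable (fun ω => lineLaplace R a (X ω) * lineLaplace R' b (X ω)) ν := by
  simp only [lineLaplace_mul_lineLaplace]
  exact (integrable_mul_cexp_zLine_mul hX hexp ha hb).integral_prod_left

lemma integral_lineLaplace_mul [SFinite ν] (hX : AEMeasurable X ν)
    (hexp : R + R' ∈ integrableExpSet X ν) (ha : Integrable a) (hb : Integrable b) :
    ∫ ω, lineLaplace R a (X ω) * lineLaplace R' b (X ω) ∂ν =
      ∫ q : ℝ × ℝ, a q.1 * b q.2 * complexMGF X ν (zLine R q.1 + zLine R' q.2) := by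
  simp only [lineLaplace_mul_lineLaplace]
  rw [integral_integral_swap (integrable_mul_cexp_zLine_mul hX hexp ha hb)]
  congr with q
  rw [complexMGF, ← integral_const_mul]
  congr with ω
  rw [add_mul, Complex.exp_add]
  ring

end LineLaplace

/-- The factor multiplying `e^{zx}` when `s^z e^{½σ²z(z-1)(T-t)}` is evaluated at
`s = S₀e^{μt+x}`; `σ2` stands for `σ²`. -/
noncomputable def spectralFactor (μ σ2 T S₀ t : ℝ) (z : ℂ) : ℂ :=
  cexp (z * (Real.log S₀ + μ * t : ℝ) + (σ2 * (T - t) / 2 : ℝ) * (z * (z - 1)))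

section CashGreek

variable {μ σ2 T S₀ t R : ℝ}

lemma norm_spectralFactor_le (h : 0 ≤ σ2 * (T - t)) (z : ℂ) :
    ‖spectralFactor μ σ2 T S₀ t z‖ ≤ ‖spectralFactor μ σ2 T S₀ t z.re‖ := by
  rw [spectralFactor, spectralFactor, norm_exp, norm_exp, Real.exp_le_exp]
  simp only [add_re, mul_re, sub_re, sub_im, ofReal_re, ofReal_im, one_re, one_im]
  nlinarith [mul_nonneg h (sq_nonneg z.im)]

lemma norm_spectralFactor_zLine_le (h : 0 ≤ σ2 * (T - t)) (y : ℝ) :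
    ‖spectralFactor μ σ2 T S₀ t (zLine R y)‖ ≤ ‖spectralFactor μ σ2 T S₀ t R‖ := by
  simpa only [zLine_re] using norm_spectralFactor_le h (zLine R y)

lemma continuous_spectralFactor_zLine :
    Continuous fun y => spectralFactor μ σ2 T S₀ t (zLine R y) := by
  unfold spectralFactor
  fun_prop

lemma integrable_mul_spectralFactor {w : ℝ → ℂ} (hw : Integrable w) (h : 0 ≤ σ2 * (T - t)) :
    Integrable fun y => w y * spectralFactor μ σ2 T S₀ t (zLine R y) :=
  hw.mul_bdd (c := ‖spectralFactor μ σ2 T S₀ t R‖)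
    continuous_spectralFactor_zLine.aestronglyMeasurable
    (.of_forall (norm_spectralFactor_zLine_le h))

lemma cashGreek_mul_exp (hS₀ : 0 < S₀) (l : ℝ → ℝ) (n : ℕ) (x : ℝ) :
    cashGreek σ2 T R l n t (S₀ * Real.exp (μ * t + x)) =
      lineLaplace R (fun y => greekWeight R l n y * spectralFactor μ σ2 T S₀ t (zLine R y)) x := by
  have hlog : Real.log (S₀ * Real.exp (μ * t + x)) = Real.log S₀ + μ * t + x := by
    rw [Real.log_mul hS₀.ne' (Real.exp_pos _).ne', Real.log_exp, add_assoc]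
  unfold cashGreek lineLaplace
  congr with y
  have hexp : cpowR (S₀ * Real.exp (μ * t + x)) (zLine R y) *
      cexp (σ2 / 2 * zLine R y * (zLine R y - 1) * (T - t)) =
      spectralFactor μ σ2 T S₀ t (zLine R y) * cexp (zLine R y * x) := by
    rw [cpowR, hlog, spectralFactor, ← Complex.exp_add, ← Complex.exp_add]
    congr 1
    push_cast
    ring
  unfold greekWeight
  linear_combination (∏ k ∈ Finset.range n, (zLine R y - k)) * pCoef l y * hexp

/-- The integrand of the triple integral, for a general weight `w` in place of
`z_y (z_y - 1) p(z_y)`. It is arranged so that the last exponential is the moment generating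
function of `γ_{σ²t}` at `z_u + z_v`. -/
noncomputable def tripleIntegrand (μ σ2 T S₀ R : ℝ) (w : ℝ → ℂ) (u v t : ℝ) : ℂ :=
  (w u * spectralFactor μ σ2 T S₀ t (zLine R u)) *
    (w v * spectralFactor μ σ2 T S₀ t (zLine R v)) *
    cexp ((σ2 * t : ℝ) * (zLine R u + zLine R v) ^ 2 / 2)

variable {l : ℝ → ℝ} {n : ℕ} {w : ℝ → ℂ}

lemma tripleIntegrand_greekWeight_two (u v : ℝ) :
    tripleIntegrand μ σ2 T S₀ R (greekWeight R l 2) u v t =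
      cpowR S₀ (zLine R u + zLine R v) *
        cexp ((μ * (zLine R u + zLine R v) + σ2 / 2 * (zLine R u + zLine R v) ^ 2) * t) *
        cexp (σ2 / 2 * (zLine R u * (zLine R u - 1) + zLine R v * (zLine R v - 1)) * (T - t)) *
        (zLine R u * (zLine R u - 1)) * (zLine R v * (zLine R v - 1)) * pCoef l u * pCoef l v := by
  have hweight : ∀ y, greekWeight R l 2 y = zLine R y * (zLine R y - 1) * pCoef l y := fun y => by
    simp [greekWeight, Finset.prod_range_succ]
  have hexp : spectralFactor μ σ2 T S₀ t (zLine R u) * spectralFactor μ σ2 T S₀ t (zLine R v) *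
      cexp ((σ2 * t : ℝ) * (zLine R u + zLine R v) ^ 2 / 2) =
      cpowR S₀ (zLine R u + zLine R v) *
        cexp ((μ * (zLine R u + zLine R v) + σ2 / 2 * (zLine R u + zLine R v) ^ 2) * t) *
        cexp (σ2 / 2 * (zLine R u * (zLine R u - 1) + zLine R v * (zLine R v - 1)) * (T - t)) := by
    simp only [spectralFactor, cpowR, ← Complex.exp_add]
    congr 1
    push_cast
    ring
  rw [tripleIntegrand, hweight, hweight]
  linear_combination zLine R u * (zLine R u - 1) * pCoef l u *
    (zLine R v * (zLine R v - 1) * pCoef l v) * hexp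

lemma integrable_cashGreek_sq (hS₀ : 0 < S₀) (h : 0 ≤ σ2 * (T - t))
    (hw : Integrable (greekWeight R l n)) (s : NNReal) :
    Integrable (fun x => cashGreek σ2 T R l n t (S₀ * Real.exp (μ * t + x)) ^ 2)
      (gaussianReal 0 s) := by
  simp only [cashGreek_mul_exp hS₀, sq]
  have ha := integrable_mul_spectralFactor (R := R) (μ := μ) (S₀ := S₀) hw h
  exact integrable_lineLaplace_mul aemeasurable_id (by simp) ha ha

lemma integral_cashGreek_sq (hS₀ : 0 < S₀) (h : 0 ≤ σ2 * (T - t)) (ht : 0 ≤ σ2 * t)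
    (hw : Integrable (greekWeight R l n)) :
    ∫ x, cashGreek σ2 T R l n t (S₀ * Real.exp (μ * t + x)) ^ 2
        ∂(gaussianReal 0 (Real.toNNReal (σ2 * t))) =
      ∫ q : ℝ × ℝ, tripleIntegrand μ σ2 T S₀ R (greekWeight R l n) q.1 q.2 t := by
  simp only [cashGreek_mul_exp hS₀, sq]
  have ha := integrable_mul_spectralFactor (R := R) (μ := μ) (S₀ := S₀) hw h
  refine (integral_lineLaplace_mul aemeasurable_id (by simp) ha ha).trans ?_
  simp only [complexMGF_id_gaussianReal, Real.coe_toNNReal _ ht, ofReal_zero, mul_zero, zero_add,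
    tripleIntegrand]

lemma norm_tripleIntegrand_le (h : 0 ≤ σ2 * (T - t)) (ht : 0 ≤ σ2 * t) (w : ℝ → ℂ) (u v : ℝ) :
    ‖tripleIntegrand μ σ2 T S₀ R w u v t‖ ≤ ‖w u‖ * (‖w v‖ *
      (‖spectralFactor μ σ2 T S₀ t R‖ ^ 2 * Real.exp (σ2 * t * (R + R) ^ 2 / 2))) := by
  have hmgf : ‖cexp ((σ2 * t : ℝ) * (zLine R u + zLine R v) ^ 2 / 2)‖ ≤
      Real.exp (σ2 * t * (R + R) ^ 2 / 2) := by
    simpa only [add_re, zLine_re] using norm_cexp_mul_sq_div_two_le ht (zLine R u + zLine R v)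
  calc ‖tripleIntegrand μ σ2 T S₀ R w u v t‖
      ≤ (‖w u‖ * ‖spectralFactor μ σ2 T S₀ t R‖) * (‖w v‖ * ‖spectralFactor μ σ2 T S₀ t R‖) *
        Real.exp (σ2 * t * (R + R) ^ 2 / 2) := by
        simp only [tripleIntegrand, norm_mul]
        gcongr <;> exact norm_spectralFactor_zLine_le h _
    _ = _ := by ring

lemma integrable_tripleIntegrand (hσ2 : 0 ≤ σ2) (hw : Integrable w) :
    Integrable (fun q : ℝ × ℝ × ℝ => tripleIntegrand μ σ2 T S₀ R w q.1 q.2.1 q.2.2)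
      (volume.prod (volume.prod (volume.restrict (Ioc 0 T)))) := by
  have hbound : IntegrableOn (fun t => ‖spectralFactor μ σ2 T S₀ t R‖ ^ 2 *
      Real.exp (σ2 * t * (R + R) ^ 2 / 2)) (Ioc 0 T) := by
    unfold spectralFactor
    exact (Continuous.integrableOn_Icc (by fun_prop)).mono_set Ioc_subset_Icc_self
  have htime : ∀ᵐ q : ℝ × ℝ × ℝ ∂(volume.prod (volume.prod (volume.restrict (Ioc 0 T)))),
      q.2.2 ∈ Ioc 0 T :=
    (Measure.quasiMeasurePreserving_snd.comp Measure.quasiMeasurePreserving_snd).ae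
      (ae_restrict_mem measurableSet_Ioc)
  refine (hw.norm.mul_prod (hw.norm.mul_prod hbound)).mono' ?_ ?_
  · unfold tripleIntegrand spectralFactor
    refine .mul (.mul (.mul hw.1.comp_fst ?_) (.mul hw.1.comp_fst.comp_snd ?_)) ?_ <;>
      exact Continuous.aestronglyMeasurable (by fun_prop)
  · filter_upwards [htime] with q ⟨hpos, hle⟩
    exact norm_tripleIntegrand_le (mul_nonneg hσ2 (sub_nonneg.2 hle)) (mul_nonneg hσ2 hpos.le) ..

end CashGreek

theorem triple_integral_equals_expected_squared_cash_gamma_general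
    (μ σ2 T S₀ : ℝ) (hσ2 : 0 ≤ σ2) (hT : 0 ≤ T) (hS₀ : 0 < S₀) (R : ℝ) (l : ℝ → ℝ)
    (hl : ContDiff ℝ 4 l) (hlint : ∀ n ≤ 4, Integrable (iteratedDeriv n l))
    (G : ℝ → ℝ → ℝ → ℂ)
    (hG : ∀ u v t : ℝ, G u v t =
      cpowR S₀ (zLine R u + zLine R v) *
        Complex.exp (((μ : ℂ) * (zLine R u + zLine R v) +
          (σ2 : ℂ) / 2 * (zLine R u + zLine R v) ^ 2) * (t : ℂ)) *
        Complex.exp ((σ2 : ℂ) / 2 *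
          (zLine R u * (zLine R u - 1) + zLine R v * (zLine R v - 1)) * ((T : ℂ) - (t : ℂ))) *
        (zLine R u * (zLine R u - 1)) * (zLine R v * (zLine R v - 1)) *
        pCoef l u * pCoef l v) :
    Integrable (fun q : ℝ × ℝ × ℝ => G q.1 q.2.1 q.2.2)
      ((volume : Measure ℝ).prod
        ((volume : Measure ℝ).prod ((volume : Measure ℝ).restrict (Set.Ioc 0 T)))) ∧
    (∀ t ∈ Set.Icc (0 : ℝ) T,
      Integrable (fun x : ℝ => (cashGreek σ2 T R l 2 t (S₀ * Real.exp (μ * t + x))) ^ 2)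
        (gaussianReal 0 (Real.toNNReal (σ2 * t)))) ∧
    IntervalIntegrable
      (fun t : ℝ => ∫ x : ℝ, (cashGreek σ2 T R l 2 t (S₀ * Real.exp (μ * t + x))) ^ 2
        ∂(gaussianReal 0 (Real.toNNReal (σ2 * t)))) volume 0 T ∧
    (∫ u : ℝ, ∫ v : ℝ, ∫ t in (0 : ℝ)..T, G u v t) =
      ∫ t in (0 : ℝ)..T, ∫ x : ℝ,
        (cashGreek σ2 T R l 2 t (S₀ * Real.exp (μ * t + x))) ^ 2
          ∂(gaussianReal 0 (Real.toNNReal (σ2 * t))) := by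
  have hw : Integrable (greekWeight R l 2) := integrable_greekWeight R hl fun m hm => hlint m hm
  obtain rfl : G = tripleIntegrand μ σ2 T S₀ R (greekWeight R l 2) := by
    funext u v t
    rw [hG, tripleIntegrand_greekWeight_two]
  have htriple := integrable_tripleIntegrand (μ := μ) (T := T) (S₀ := S₀) (R := R) hσ2 hw
  have hsub : ∀ t ∈ Icc 0 T, 0 ≤ σ2 * (T - t) := fun t ht =>
    mul_nonneg hσ2 (sub_nonneg.2 ht.2)
  have hexpect : EqOn
      (fun t => ∫ q : ℝ × ℝ, tripleIntegrand μ σ2 T S₀ R (greekWeight R l 2) q.1 q.2 t)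
      (fun t => ∫ x, cashGreek σ2 T R l 2 t (S₀ * Real.exp (μ * t + x)) ^ 2
        ∂(gaussianReal 0 (Real.toNNReal (σ2 * t)))) (Ioc 0 T) := fun t ht =>
    (integral_cashGreek_sq hS₀ (hsub t (Ioc_subset_Icc_self ht)) (mul_nonneg hσ2 ht.1.le) hw).symm
  refine ⟨htriple, fun t ht => integrable_cashGreek_sq hS₀ (hsub t ht) hw _, ?_, ?_⟩
  · rw [intervalIntegrable_iff_integrableOn_Ioc_of_le hT]
    exact IntegrableOn.congr_fun (integrable_prodAssoc htriple).integral_prod_right hexpect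
      measurableSet_Ioc
  · simp only [intervalIntegral.integral_of_le hT]
    rw [← setIntegral_congr_fun measurableSet_Ioc hexpect]
    exact integral_integral_integral_eq_integral_integral_prod htriple

/-- Fubini-type identity expressing the triple integral appearing in the
second derivative of the hedging error as an expected time-integral of the squared
cash gamma (final computation in the proof of Theorems `errVOapprox`, `errPureapprox`). -/
theorem triple_integral_equals_expected_squared_cash_gamma
    (μ σ T S₀ : ℝ) (hσ : 0 < σ) (hT : 0 < T) (hS₀ : 0 < S₀)
    (R : ℝ) (hR : R ≠ 0)
    (f : ℝ → ℝ) (hf : ContDiffOn ℝ (⊤ : ℕ∞) f (Set.Ioi 0))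
    (l : ℝ → ℝ) (hl : l = fun x => f (Real.exp x) * Real.exp (-R * x))
    (hlint : ∀ n : ℕ, Integrable (iteratedDeriv n l))
    (G : ℝ → ℝ → ℝ → ℂ)
    (hG : ∀ u v t : ℝ, G u v t =
      cpowR S₀ (zLine R u + zLine R v) *
        Complex.exp (((μ : ℂ) * (zLine R u + zLine R v) +
          ((σ ^ 2 : ℝ) : ℂ) / 2 * (zLine R u + zLine R v) ^ 2) * (t : ℂ)) *
        Complex.exp (((σ ^ 2 : ℝ) : ℂ) / 2 *
          (zLine R u * (zLine R u - 1) + zLine R v * (zLine R v - 1)) * ((T : ℂ) - (t : ℂ))) *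
        (zLine R u * (zLine R u - 1)) * (zLine R v * (zLine R v - 1)) *
        pCoef l u * pCoef l v) :
    Integrable (fun q : ℝ × ℝ × ℝ => G q.1 q.2.1 q.2.2)
      ((volume : Measure ℝ).prod
        ((volume : Measure ℝ).prod ((volume : Measure ℝ).restrict (Set.Ioc 0 T)))) ∧
    (∀ t ∈ Set.Icc (0 : ℝ) T,
      Integrable (fun x : ℝ => (cashGreek (σ ^ 2) T R l 2 t (S₀ * Real.exp (μ * t + x))) ^ 2)
        (gaussianReal 0 (Real.toNNReal (σ ^ 2 * t)))) ∧
    IntervalIntegrable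
      (fun t : ℝ => ∫ x : ℝ, (cashGreek (σ ^ 2) T R l 2 t (S₀ * Real.exp (μ * t + x))) ^ 2
        ∂(gaussianReal 0 (Real.toNNReal (σ ^ 2 * t)))) volume 0 T ∧
    (∫ u : ℝ, ∫ v : ℝ, ∫ t in (0 : ℝ)..T, G u v t) =
      ∫ t in (0 : ℝ)..T, ∫ x : ℝ,
        (cashGreek (σ ^ 2) T R l 2 t (S₀ * Real.exp (μ * t + x))) ^ 2
          ∂(gaussianReal 0 (Real.toNNReal (σ ^ 2 * t))) :=
  triple_integral_equals_expected_squared_cash_gamma_general μ (σ ^ 2) T S₀ (sq_nonneg σ) hT.le hS₀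
    R l (contDiff_infty.1 (hl ▸ contDiff_damped hf R) 4) (fun n _ => hlint n) G hG
end

section
/- Fix T > 0 and S₀ > 0. With κ, κ̄, η, the payoff data, and J₀(λ; t, y, z) := S₀^{y+z}·(κ̄(λ;y,z) − κ̄(λ;y,1)κ̄(λ;z,1)/κ̄(λ;1,1))·e^{κ(λ,y+z)t + (η(λ,y)+η(λ,z))(T−t)} as defined, let ε₀²(λ) := ∫_ℝ∫_ℝ∫₀ᵀ J₀(λ; t, z_u, z_v)·p(z_u)p(z_v) dt du dv for λ ∈ [0,1]. Then λ ↦ ε₀²(λ) is twice continuously differentiable on [0,1], ε₀²(0) = 0, (ε₀²)'(0) = 0, and ½·(ε₀²)''(0) = ¼σ⁴·(s₄ − s₃²)·∫₀ᵀ ∫_ℝ D₂(t, S₀e^{μt+x})² dγ_{σ²t}(x) dt, where s₃ := (∫x³K(dx))/σ³, s₄ := (∫x⁴K(dx))/σ⁴, D₂ is the Black–Scholes cash greek of order 2, and γ_v denotes the Gaussian measure on ℝ with mean 0 and variance v. -/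
open MeasureTheory ProbabilityTheory Complex Set

/-!
Let `ν` be the finite measure `x ^ 2 K(dx) + c δ₀`. By Taylor's formula with integral remainder,
`κ(λ, z) = μ z + z ^ 2 M(λ z)`, where `M` is the complex moment generating function of the
multiplicative convolution of `ν` with the density `1 - s` on `[0, 1]`. Hence `κ` is smooth in `λ`,
also at `λ = 0`, with derivatives growing polynomially along vertical lines.

On such a line `κ(λ, z) - κ(λ, Re z)` has real part `≤ 0`, being the integral of `cos - 1` against
a positive measure. With `q = κ(λ, 1) / κ̄(λ; 1, 1)`, the corresponding integrand for `η` carries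
the factor `1 + q - q exp(λ x)`, which is negative only for `λ x` away from `0` and there
contributes a bounded amount. So the exponential in `J₀` is bounded, and the integrand of `ε₀²`
and its `λ`-derivatives grow polynomially in `u` and `v`, which the rapidly decreasing Fourier
coefficients of the payoff absorb.

At `λ = 0` the Gram determinant `κ̄(y, z) κ̄(1, 1) - κ̄(y, 1) κ̄(z, 1)` vanishes to second order,
and its second derivative is a constant times `y (y - 1) z (z - 1)`. The remaining exponential is
a Gaussian exponential moment, which recombines the double Fourier integral into the expected
square of the cash greek `D₂`.
-/

namespace LevyHedging

section ParametricIntegrals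

open Filter Topology Asymptotics

/-- The family `f l`, `l` near `lam₀`, of functions on `X` has polynomial growth in `‖w x‖` with an
exponent and a constant that do not depend on `l`, and depends continuously on `l`. This is what
makes `∫ f l x * P x` continuous in `l` for every rapidly decreasing `P`. -/
structure TemperedAt {X E : Type*} [MeasurableSpace X] [NormedAddCommGroup E]
    (w : X → E) (lam₀ : ℝ) (f : ℝ → X → ℂ) : Prop where
  measurable : ∀ᶠ l in 𝓝 lam₀, Measurable (f l)
  isBigO : ∃ N : ℕ, (fun p : ℝ × X => f p.1 p.2) =O[𝓝 lam₀ ×ˢ ⊤] fun p => (1 + ‖w p.2‖) ^ N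
  continuousAt : ∀ᶠ l in 𝓝 lam₀, ∀ x, ContinuousAt (f · x) l

/-- The family `f` is `n` times differentiable in `l` near `lam₀`, and all its derivatives up to
order `n` are tempered. -/
def TemperedContDiffAt {X E : Type*} [MeasurableSpace X] [NormedAddCommGroup E]
    (w : X → E) (lam₀ : ℝ) : ℕ → (ℝ → X → ℂ) → Prop
  | 0, f => TemperedAt w lam₀ f
  | n + 1, f => TemperedAt w lam₀ f ∧ ∃ f' : ℝ → X → ℂ,
      (∀ᶠ l in 𝓝 lam₀, ∀ x, HasDerivAt (f · x) (f' l x) l) ∧ TemperedContDiffAt w lam₀ n f'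

theorem contDiffAt_succ_iff_hasDerivAt {F : Type*} [NormedAddCommGroup F] [NormedSpace ℝ F]
    {g : ℝ → F} {x : ℝ} {n : ℕ} :
    ContDiffAt ℝ (n + 1) g x ↔
      ∃ g', (∀ᶠ y in 𝓝 x, HasDerivAt g (g' y) y) ∧ ContDiffAt ℝ n g' x := by
  rw [contDiffAt_succ_iff_hasFDerivAt]
  constructor
  · rintro ⟨g', ⟨s, hs, hderiv⟩, hg'⟩
    exact ⟨fun y => g' y 1, mem_of_superset hs fun y hy => (hderiv y hy).hasDerivAt,
      hg'.clm_apply contDiffAt_const⟩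
  · rintro ⟨g', hderiv, hg'⟩
    exact ⟨fun y => ContinuousLinearMap.toSpanSingleton ℝ (g' y),
      ⟨_, hderiv, fun y hy => HasDerivAt.hasFDerivAt hy⟩,
      (ContinuousLinearMap.toSpanSingletonCLE (𝕜 := ℝ) (E := F)).contDiff.contDiffAt.comp x hg'⟩

theorem isBigO_one_add_norm_pow {α E : Type*} [NormedAddCommGroup E] {m k : ℕ} (hmk : m ≤ k)
    (w : α → E) (L : Filter α) : (fun x => (1 + ‖w x‖) ^ m) =O[L] fun x => (1 + ‖w x‖) ^ k := by
  refine IsBigO.of_norm_le fun x => ?_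
  rw [Real.norm_of_nonneg (by positivity)]
  exact pow_le_pow_right₀ (by linarith [norm_nonneg (w x)]) hmk

variable {X E : Type*} [MeasurableSpace X] [NormedAddCommGroup E] {w : X → E} {lam₀ : ℝ}
  {f g : ℝ → X → ℂ} {n : ℕ}

namespace TemperedAt

theorem eventually (hf : TemperedAt w lam₀ f) : ∀ᶠ l in 𝓝 lam₀, TemperedAt w l f := by
  obtain ⟨N, hN⟩ := hf.isBigO
  obtain ⟨C, hC⟩ := hN.bound
  rw [← principal_univ, eventually_prod_principal_iff] at hC
  filter_upwards [hf.measurable.eventually_nhds, hC.eventually_nhds,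
    hf.continuousAt.eventually_nhds] with l hmeas hbound hcont
  refine ⟨hmeas, ⟨N, IsBigO.of_bound C ?_⟩, hcont⟩
  rwa [← principal_univ, eventually_prod_principal_iff]

theorem exists_norm_le (hf : TemperedAt w lam₀ f) :
    ∃ (N : ℕ) (C : ℝ), ∀ᶠ l in 𝓝 lam₀, ∀ x, ‖f l x‖ ≤ C * (1 + ‖w x‖) ^ N := by
  obtain ⟨N, hN⟩ := hf.isBigO
  obtain ⟨C, hC⟩ := hN.bound
  rw [← principal_univ, eventually_prod_principal_iff] at hC
  refine ⟨N, C, hC.mono fun l hl x => (hl x trivial).trans_eq ?_⟩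
  rw [Real.norm_of_nonneg (by positivity)]

theorem add (hf : TemperedAt w lam₀ f) (hg : TemperedAt w lam₀ g) :
    TemperedAt w lam₀ (fun l x => f l x + g l x) where
  measurable := by
    filter_upwards [hf.measurable, hg.measurable] with l hfl hgl using hfl.add hgl
  isBigO := by
    obtain ⟨N, hN⟩ := hf.isBigO
    obtain ⟨N', hN'⟩ := hg.isBigO
    have le_max {k : ℕ} (hk : k ≤ max N N') :=
      isBigO_one_add_norm_pow hk (fun p : ℝ × X => w p.2) (𝓝 lam₀ ×ˢ ⊤)
    exact ⟨max N N', (hN.trans (le_max (le_max_left N N'))).add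
      (hN'.trans (le_max (le_max_right N N')))⟩
  continuousAt := by
    filter_upwards [hf.continuousAt, hg.continuousAt] with l hfl hgl x using (hfl x).add (hgl x)

theorem mul (hf : TemperedAt w lam₀ f) (hg : TemperedAt w lam₀ g) :
    TemperedAt w lam₀ (fun l x => f l x * g l x) where
  measurable := by
    filter_upwards [hf.measurable, hg.measurable] with l hfl hgl using hfl.mul hgl
  isBigO := by
    obtain ⟨N, hN⟩ := hf.isBigO
    obtain ⟨N', hN'⟩ := hg.isBigO
    exact ⟨N + N', by simpa only [pow_add] using hN.mul hN'⟩
  continuousAt := by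
    filter_upwards [hf.continuousAt, hg.continuousAt] with l hfl hgl x using (hfl x).mul (hgl x)

theorem exp {C : ℝ} (hf : TemperedAt w lam₀ f) (hC : ∀ᶠ l in 𝓝 lam₀, ∀ x, (f l x).re ≤ C) :
    TemperedAt w lam₀ (fun l x => cexp (f l x)) where
  measurable := hf.measurable.mono fun l hfl => hfl.cexp
  isBigO := by
    refine ⟨0, IsBigO.of_bound (Real.exp C) ?_⟩
    rw [← principal_univ, eventually_prod_principal_iff]
    filter_upwards [hC] with l hl x _
    simpa [Complex.norm_exp] using hl x
  continuousAt := hf.continuousAt.mono fun l hfl x => (hfl x).cexp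

theorem const {h : X → ℂ} (hmeas : Measurable h) {N : ℕ}
    (hgrowth : h =O[⊤] fun x => (1 + ‖w x‖) ^ N) : TemperedAt w lam₀ (fun _ => h) where
  measurable := .of_forall fun _ => hmeas
  isBigO := ⟨N, hgrowth.comp_tendsto tendsto_snd⟩
  continuousAt := .of_forall fun _ _ => continuousAt_const

theorem of_continuousAt {h : ℝ → ℂ} (hh : ∀ᶠ l in 𝓝 lam₀, ContinuousAt h l) :
    TemperedAt w lam₀ (fun l _ => h l) where
  measurable := .of_forall fun _ => measurable_const
  isBigO := ⟨0, by
    simp only [pow_zero]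
    exact (hh.self_of_nhds.isBigO_one ℝ).comp_tendsto tendsto_fst⟩
  continuousAt := hh.mono fun _ hl _ => hl

theorem scalar (a : ℂ) : TemperedAt w lam₀ (fun _ _ => a) :=
  .of_continuousAt (.of_forall fun _ => continuousAt_const)

section Integral

variable {M : Measure X} {P : X → ℂ}

theorem exists_bound_mul (hf : TemperedAt w lam₀ f)
    (hP : ∀ N : ℕ, Integrable (fun x => (1 + ‖w x‖) ^ N • P x) M) :
    ∃ B : X → ℝ, Integrable B M ∧ ∀ᶠ l in 𝓝 lam₀, ∀ x, ‖f l x * P x‖ ≤ B x := by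
  obtain ⟨N, C, hC⟩ := hf.exists_norm_le
  refine ⟨fun x => C * ‖(1 + ‖w x‖) ^ N • P x‖, (hP N).norm.const_mul C, hC.mono fun l hl x => ?_⟩
  have norm_pow : ‖(1 + ‖w x‖) ^ N‖ = (1 + ‖w x‖) ^ N := Real.norm_of_nonneg (by positivity)
  simp only [norm_mul, norm_smul, norm_pow, ← mul_assoc]
  exact mul_le_mul_of_nonneg_right (hl x) (norm_nonneg _)

theorem aestronglyMeasurable_mul (hf : TemperedAt w lam₀ f)
    (hP : ∀ N : ℕ, Integrable (fun x => (1 + ‖w x‖) ^ N • P x) M) :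
    ∀ᶠ l in 𝓝 lam₀, AEStronglyMeasurable (fun x => f l x * P x) M := by
  have hP_meas : AEStronglyMeasurable P M := by simpa using (hP 0).aestronglyMeasurable
  exact hf.measurable.mono fun l hl => hl.aestronglyMeasurable.mul hP_meas

theorem integrable_mul (hf : TemperedAt w lam₀ f)
    (hP : ∀ N : ℕ, Integrable (fun x => (1 + ‖w x‖) ^ N • P x) M) :
    Integrable (fun x => f lam₀ x * P x) M := by
  obtain ⟨B, hB, hle⟩ := hf.exists_bound_mul hP
  exact hB.mono' (hf.aestronglyMeasurable_mul hP).self_of_nhds (.of_forall hle.self_of_nhds)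

theorem continuousAt_integral (hf : TemperedAt w lam₀ f)
    (hP : ∀ N : ℕ, Integrable (fun x => (1 + ‖w x‖) ^ N • P x) M) :
    ContinuousAt (fun l => ∫ x, f l x * P x ∂M) lam₀ := by
  obtain ⟨B, hB, hle⟩ := hf.exists_bound_mul hP
  exact continuousAt_of_dominated (hf.aestronglyMeasurable_mul hP)
    (hle.mono fun l hl => .of_forall hl) hB
    (.of_forall fun x => (hf.continuousAt.self_of_nhds x).mul continuousAt_const)

theorem hasDerivAt_integral {f' : ℝ → X → ℂ} (hf : TemperedAt w lam₀ f)
    (hf' : TemperedAt w lam₀ f')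
    (hderiv : ∀ᶠ l in 𝓝 lam₀, ∀ x, HasDerivAt (f · x) (f' l x) l)
    (hP : ∀ N : ℕ, Integrable (fun x => (1 + ‖w x‖) ^ N • P x) M) :
    HasDerivAt (fun l => ∫ x, f l x * P x ∂M) (∫ x, f' lam₀ x * P x ∂M) lam₀ := by
  obtain ⟨B, hB, hle⟩ := hf'.exists_bound_mul hP
  exact (hasDerivAt_integral_of_dominated_loc_of_deriv_le (hle.and hderiv)
    (hf.aestronglyMeasurable_mul hP) (hf.integrable_mul hP)
    (hf'.aestronglyMeasurable_mul hP).self_of_nhds (.of_forall fun x l hl => hl.1 x) hB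
    (.of_forall fun x l hl => (hl.2 x).mul_const (P x))).2

end Integral

end TemperedAt

namespace TemperedContDiffAt

theorem tempered (hf : TemperedContDiffAt w lam₀ n f) : TemperedAt w lam₀ f := by
  cases n with
  | zero => exact hf
  | succ n => exact hf.1

theorem congr (hf : TemperedContDiffAt w lam₀ n f) (hfg : ∀ᶠ l in 𝓝 lam₀, f l = g l) :
    TemperedContDiffAt w lam₀ n g := by
  have tempered : TemperedAt w lam₀ g := by
    obtain ⟨N, C, hC⟩ := hf.tempered.exists_norm_le
    refine ⟨(hf.tempered.measurable.and hfg).mono fun l hl => hl.2 ▸ hl.1,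
      ⟨N, IsBigO.of_bound C ?_⟩, ?_⟩
    · rw [← principal_univ, eventually_prod_principal_iff]
      filter_upwards [hC, hfg] with l hl hfgl x _
      rw [← hfgl, Real.norm_of_nonneg (by positivity)]
      exact hl x
    · filter_upwards [hf.tempered.continuousAt, hfg.eventually_nhds] with l hl hfgl x
      exact (hl x).congr (hfgl.mono fun l' hl' => congrFun hl' x)
  cases n with
  | zero => exact tempered
  | succ n =>
    obtain ⟨-, f', hderiv, hf'⟩ := hf
    refine ⟨tempered, f', ?_, hf'⟩
    filter_upwards [hderiv, hfg.eventually_nhds] with l hl hfgl x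
    exact (hl x).congr_of_eventuallyEq (hfgl.mono fun l' hl' => (congrFun hl' x).symm)

theorem of_succ (hf : TemperedContDiffAt w lam₀ (n + 1) f) : TemperedContDiffAt w lam₀ n f := by
  induction n generalizing f with
  | zero => exact hf.1
  | succ n ih => exact ⟨hf.1, hf.2.imp fun f' hf' => ⟨hf'.1, ih hf'.2⟩⟩

theorem add (hf : TemperedContDiffAt w lam₀ n f) (hg : TemperedContDiffAt w lam₀ n g) :
    TemperedContDiffAt w lam₀ n (fun l x => f l x + g l x) := by
  induction n generalizing f g with
  | zero => exact TemperedAt.add hf hg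
  | succ n ih =>
    obtain ⟨tf, f', hf', tf'⟩ := hf
    obtain ⟨tg, g', hg', tg'⟩ := hg
    refine ⟨tf.add tg, _, ?_, ih tf' tg'⟩
    filter_upwards [hf', hg'] with l hfl hgl x using (hfl x).add (hgl x)

theorem mul (hf : TemperedContDiffAt w lam₀ n f) (hg : TemperedContDiffAt w lam₀ n g) :
    TemperedContDiffAt w lam₀ n (fun l x => f l x * g l x) := by
  induction n generalizing f g with
  | zero => exact TemperedAt.mul hf hg
  | succ n ih =>
    have hf₀ := hf.of_succ
    have hg₀ := hg.of_succ
    obtain ⟨tf, f', hf', tf'⟩ := hf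
    obtain ⟨tg, g', hg', tg'⟩ := hg
    refine ⟨tf.mul tg, _, ?_, (ih tf' hg₀).add (ih hf₀ tg')⟩
    filter_upwards [hf', hg'] with l hfl hgl x using (hfl x).mul (hgl x)

theorem exp {C : ℝ} (hf : TemperedContDiffAt w lam₀ n f)
    (hC : ∀ᶠ l in 𝓝 lam₀, ∀ x, (f l x).re ≤ C) :
    TemperedContDiffAt w lam₀ n (fun l x => cexp (f l x)) := by
  induction n with
  | zero => exact TemperedAt.exp hf hC
  | succ n ih =>
    have hexp := ih hf.of_succ
    obtain ⟨tf, f', hf', tf'⟩ := hf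
    exact ⟨tf.exp hC, _, hf'.mono fun l hl x => (hl x).cexp, hexp.mul tf'⟩

theorem const {h : X → ℂ} (hh : TemperedAt w lam₀ fun _ => h) :
    TemperedContDiffAt w lam₀ n (fun _ => h) := by
  induction n generalizing h with
  | zero => exact hh
  | succ n ih =>
    exact ⟨hh, _, .of_forall fun l x => hasDerivAt_const l (h x),
      ih (.scalar 0)⟩

theorem of_contDiffAt {h : ℝ → ℂ} (hh : ContDiffAt ℝ n h lam₀) :
    TemperedContDiffAt w lam₀ n (fun l _ => h l) := by
  have tempered : ∀ {m : ℕ} {k : ℝ → ℂ}, ContDiffAt ℝ m k lam₀ →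
      TemperedAt w lam₀ (fun l _ => k l) := fun hk =>
    .of_continuousAt ((hk.eventually (by simp)).mono fun l hl => hl.continuousAt)
  induction n generalizing h with
  | zero => exact tempered hh
  | succ n ih =>
    obtain ⟨h', hderiv, hh'⟩ := contDiffAt_succ_iff_hasDerivAt.1 (by exact_mod_cast hh)
    exact ⟨tempered hh, _, hderiv.mono fun l hl _ => hl, ih hh'⟩

theorem neg (hf : TemperedContDiffAt w lam₀ n f) :
    TemperedContDiffAt w lam₀ n (fun l x => -f l x) := by
  simpa using (const (.scalar (-1))).mul hf

theorem sub (hf : TemperedContDiffAt w lam₀ n f) (hg : TemperedContDiffAt w lam₀ n g) :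
    TemperedContDiffAt w lam₀ n (fun l x => f l x - g l x) := by
  simpa only [sub_eq_add_neg] using hf.add hg.neg

variable {M : Measure X} {P : X → ℂ}

theorem contDiffAt_apply (hf : TemperedContDiffAt w lam₀ n f) (x : X) :
    ContDiffAt ℝ n (f · x) lam₀ := by
  induction n generalizing f with
  | zero =>
    exact contDiffAt_zero.2 ⟨_, hf.continuousAt, fun l hl => (hl x).continuousWithinAt⟩
  | succ n ih =>
    obtain ⟨-, f', hderiv, hf'⟩ := hf
    exact_mod_cast contDiffAt_succ_iff_hasDerivAt.2 ⟨_, hderiv.mono fun l hl => hl x, ih hf'⟩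

theorem contDiffAt_integral (hf : TemperedContDiffAt w lam₀ n f)
    (hP : ∀ N : ℕ, Integrable (fun x => (1 + ‖w x‖) ^ N • P x) M) :
    ContDiffAt ℝ n (fun l => ∫ x, f l x * P x ∂M) lam₀ := by
  induction n generalizing f with
  | zero =>
    exact contDiffAt_zero.2 ⟨_, TemperedAt.eventually hf,
      fun l hl => (hl.continuousAt_integral hP).continuousWithinAt⟩
  | succ n ih =>
    obtain ⟨tf, f', hderiv, hf'⟩ := hf
    refine mod_cast contDiffAt_succ_iff_hasDerivAt.2 ⟨_, ?_, ih hf'⟩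
    filter_upwards [tf.eventually, hf'.tempered.eventually, hderiv.eventually_nhds]
      with l hfl hfl' hl using hfl.hasDerivAt_integral hfl' hl hP

theorem iteratedDeriv_integral (hf : TemperedContDiffAt w lam₀ n f)
    (hP : ∀ N : ℕ, Integrable (fun x => (1 + ‖w x‖) ^ N • P x) M) :
    iteratedDeriv n (fun l => ∫ x, f l x * P x ∂M) lam₀ =
      ∫ x, iteratedDeriv n (f · x) lam₀ * P x ∂M := by
  induction n generalizing f with
  | zero => simp
  | succ n ih =>
    obtain ⟨tf, f', hderiv, hf'⟩ := hf
    have deriv_integral :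
        deriv (fun l => ∫ x, f l x * P x ∂M) =ᶠ[𝓝 lam₀] fun l => ∫ x, f' l x * P x ∂M := by
      filter_upwards [tf.eventually, hf'.tempered.eventually, hderiv.eventually_nhds]
        with l hfl hfl' hl using (hfl.hasDerivAt_integral hfl' hl hP).deriv
    have deriv_apply (x : X) : deriv (f · x) =ᶠ[𝓝 lam₀] (f' · x) :=
      hderiv.mono fun l hl => (hl x).deriv
    simp only [iteratedDeriv_succ', deriv_integral.iteratedDeriv_eq n, ih hf',
      fun x => (deriv_apply x).iteratedDeriv_eq n]

theorem integrable_iteratedDeriv (hf : TemperedContDiffAt w lam₀ n f)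
    (hP : ∀ N : ℕ, Integrable (fun x => (1 + ‖w x‖) ^ N • P x) M) :
    Integrable (fun x => iteratedDeriv n (f · x) lam₀ * P x) M := by
  induction n generalizing f with
  | zero => simpa using TemperedAt.integrable_mul hf hP
  | succ n ih =>
    obtain ⟨-, f', hderiv, hf'⟩ := hf
    have deriv_apply (x : X) : deriv (f · x) =ᶠ[𝓝 lam₀] (f' · x) :=
      hderiv.mono fun l hl => (hl x).deriv
    simpa only [iteratedDeriv_succ', fun x => (deriv_apply x).iteratedDeriv_eq n] using ih hf'

end TemperedContDiffAt

end ParametricIntegrals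

section QuadraticRemainder

/-- The measure `(1 - s) ds` on `(0, 1]`, the kernel of the second order Taylor remainder. -/
noncomputable def taylorMeasure : Measure ℝ :=
  (volume.restrict (Ioc 0 1)).withDensity fun s => ENNReal.ofReal (1 - s)

theorem integral_taylorMeasure {E : Type*} [NormedAddCommGroup E] [NormedSpace ℝ E] (g : ℝ → E) :
    ∫ s, g s ∂taylorMeasure = ∫ s in (0 : ℝ)..1, (1 - s) • g s := by
  rw [taylorMeasure, integral_withDensity_eq_integral_toReal_smul (by fun_prop)
    (by simp), intervalIntegral.integral_of_le zero_le_one]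
  refine setIntegral_congr_fun measurableSet_Ioc fun s hs => ?_
  simp only [ENNReal.toReal_ofReal (sub_nonneg.2 hs.2)]

instance isFiniteMeasure_taylorMeasure : IsFiniteMeasure taylorMeasure :=
  isFiniteMeasure_withDensity_ofReal
    ((by fun_prop : Continuous fun s : ℝ => 1 - s).integrableOn_Icc.mono_set Ioc_subset_Icc_self).2

theorem ae_taylorMeasure_mem_Icc : ∀ᵐ s ∂taylorMeasure, s ∈ Icc (0 : ℝ) 1 := by
  refine (withDensity_absolutelyContinuous _ _).ae_le ?_
  filter_upwards [ae_restrict_mem measurableSet_Ioc] with s hs using Ioc_subset_Icc_self hs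

theorem integral_pow_taylorMeasure (n : ℕ) :
    ∫ s, s ^ n ∂taylorMeasure = 1 / ((n + 1) * (n + 2)) := by
  have expand (s : ℝ) : (1 - s) * s ^ n = s ^ n - s ^ (n + 1) := by ring
  simp only [integral_taylorMeasure, smul_eq_mul, expand]
  rw [intervalIntegral.integral_sub (by simp) (by simp), integral_pow, integral_pow]
  push_cast
  simp only [one_pow, ne_eq, Nat.add_eq_zero_iff, one_ne_zero, and_false, not_false_eq_true,
    zero_pow, sub_zero]
  field_simp
  ring

theorem sq_mul_complexMGF_taylorMeasure (w : ℂ) :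
    w ^ 2 * complexMGF id taylorMeasure w = exp w - 1 - w := by
  have hderiv (s : ℝ) : HasDerivAt (fun s : ℝ => (w * (1 - s) + 1) * exp (w * s))
      (w ^ 2 * ((1 - s) • exp (w * s))) s := by
    have hofReal : HasDerivAt (fun s : ℝ => (s : ℂ)) 1 s := ofRealCLM.hasDerivAt
    convert! (((hofReal.const_sub 1).const_mul w).add_const 1).mul
      (hofReal.const_mul w).cexp using 1
    rw [real_smul]
    push_cast
    ring
  rw [complexMGF, integral_taylorMeasure, ← intervalIntegral.integral_const_mul]
  simp only [id_eq]
  rw [intervalIntegral.integral_eq_sub_of_hasDerivAt (fun s _ => hderiv s)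
    ((by fun_prop : Continuous _).intervalIntegrable 0 1)]
  simp only [ofReal_one, sub_self, mul_zero, zero_add, mul_one, one_mul, ofReal_zero, sub_zero,
    exp_zero]
  ring

/-- The quotient `(exp (z v) - 1 - z v) / v ^ 2`, extended to `v = 0` by its limit `z ^ 2 / 2`.
The integral form makes it integrable against a measure with exponential moments by Fubini. -/
noncomputable def expRemainder (z : ℂ) (v : ℝ) : ℂ :=
  z ^ 2 * complexMGF id taylorMeasure (z * v)

theorem sq_mul_expRemainder (z : ℂ) (v : ℝ) :
    (v : ℂ) ^ 2 * expRemainder z v = exp (z * v) - 1 - z * v := by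
  rw [← sq_mul_complexMGF_taylorMeasure, expRemainder]
  ring

theorem expRemainder_apply_zero (z : ℂ) : expRemainder z 0 = z ^ 2 / 2 := by
  have mass : complexMGF id taylorMeasure 0 = 1 / 2 := by
    have total_mass := integral_pow_taylorMeasure 0
    rw [← ofReal_zero, complexMGF_ofReal, mgf]
    simp only [id_eq, zero_mul, Real.exp_zero]
    simp only [pow_zero] at total_mass
    rw [total_mass]
    norm_num
  simp [expRemainder, mass, div_eq_mul_inv]

theorem expRemainder_of_ne_zero (z : ℂ) {v : ℝ} (hv : v ≠ 0) :
    expRemainder z v = (exp (z * v) - 1 - z * v) / (v : ℂ) ^ 2 := by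
  rw [← sq_mul_expRemainder, mul_div_cancel_left₀]
  exact pow_ne_zero 2 (ofReal_ne_zero.2 hv)

theorem re_expRemainder_add_mul_I (r y v : ℝ) :
    (expRemainder (r + y * I) v).re =
      (expRemainder r v).re + Real.exp (r * v) * (expRemainder (y * I) v).re := by
  rcases eq_or_ne v 0 with rfl | hv
  · simp only [expRemainder_apply_zero]
    simp only [pow_two, add_mul, div_ofNat_re, add_re, mul_re, ofReal_re, I_re, mul_zero, ofReal_im,
      I_im, mul_one, sub_self, add_zero, add_im, mul_im, zero_add, zero_mul, sub_zero, zero_sub,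
      Real.exp_zero, one_mul]
    ring
  · have re_sq_mul (z : ℂ) : v ^ 2 * (expRemainder z v).re = (exp (z * v) - 1 - z * v).re := by
      rw [← sq_mul_expRemainder, ← ofReal_pow, re_ofReal_mul]
    refine mul_left_cancel₀ (pow_ne_zero 2 hv) ?_
    rw [mul_add, mul_left_comm, re_sq_mul, re_sq_mul, re_sq_mul]
    simp only [sub_re, exp_re, mul_re, add_re, ofReal_re, I_re, mul_zero, ofReal_im, I_im, mul_one,
      sub_self, add_zero, add_im, mul_im, zero_add, sub_zero, one_re, zero_mul, Real.cos_zero,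
      Real.exp_zero, one_mul]
    ring

theorem re_expRemainder_mul_I_mul_sq (y v : ℝ) :
    v ^ 2 * (expRemainder (y * I) v).re = Real.cos (y * v) - 1 := by
  rw [← re_ofReal_mul, ofReal_pow, sq_mul_expRemainder]
  simp [exp_re]

theorem re_expRemainder_mul_I_nonpos (y v : ℝ) : (expRemainder (y * I) v).re ≤ 0 := by
  rcases eq_or_ne v 0 with rfl | hv
  · have key : expRemainder (y * I) 0 = (-(y ^ 2 / 2) : ℝ) := by
      rw [expRemainder_apply_zero, mul_pow, I_sq]
      push_cast
      ring
    rw [key, ofReal_re]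
    exact neg_nonpos.2 (by positivity)
  · refine nonpos_of_mul_nonpos_right ?_ (by positivity : 0 < v ^ 2)
    linarith [re_expRemainder_mul_I_mul_sq y v, Real.cos_le_one (y * v)]

theorem neg_two_le_sq_mul_re_expRemainder_mul_I (y v : ℝ) :
    -2 ≤ v ^ 2 * (expRemainder (y * I) v).re := by
  linarith [re_expRemainder_mul_I_mul_sq y v, Real.neg_one_le_cos (y * v)]

theorem re_expRemainder_two_sub_pos (v : ℝ) :
    0 < (expRemainder 2 v - expRemainder 1 v - expRemainder 1 v).re := by
  rcases eq_or_ne v 0 with rfl | hv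
  · norm_num [expRemainder_apply_zero]
  · have key : expRemainder 2 v - expRemainder 1 v - expRemainder 1 v =
        (((Real.exp v - 1) / v) ^ 2 : ℝ) := by
      have hexp : exp (2 * v) = exp v ^ 2 := by rw [← exp_nat_mul]; norm_num
      simp only [expRemainder_of_ne_zero _ hv, hexp, one_mul]
      push_cast
      ring
    rw [key, ofReal_re]
    have : Real.exp v - 1 ≠ 0 := sub_ne_zero.2 fun h => hv (Real.exp_eq_one_iff v |>.1 h)
    positivity

end QuadraticRemainder

section VarianceMeasure

/-- The finite measure `x ^ 2 K(dx) + c δ₀`, of total mass `σ ^ 2`. It absorbs the Gaussian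
component of the Lévy–Khintchine data into an atom at the origin. -/
noncomputable def varianceMeasure (c : ℝ) (K : Measure ℝ) : Measure ℝ :=
  K.withDensity (fun x => ENNReal.ofReal (x ^ 2)) + ENNReal.ofReal c • Measure.dirac 0

variable {c : ℝ} {K : Measure ℝ} {E : Type*} [NormedAddCommGroup E] [NormedSpace ℝ E] {g : ℝ → E}

theorem integrable_varianceMeasure_iff :
    Integrable g (varianceMeasure c K) ↔ Integrable (fun x => x ^ 2 • g x) K := by
  have integrable_atom : Integrable g (ENNReal.ofReal c • Measure.dirac 0) :=
    (integrable_dirac enorm_lt_top).smul_measure ENNReal.ofReal_ne_top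
  rw [varianceMeasure, integrable_add_measure, and_iff_left integrable_atom,
    integrable_withDensity_iff_integrable_smul' (by fun_prop) (by simp)]
  simp only [ENNReal.toReal_ofReal (sq_nonneg _)]

theorem integral_varianceMeasure [CompleteSpace E] (hc : 0 ≤ c)
    (hg : Integrable g (varianceMeasure c K)) :
    ∫ x, g x ∂varianceMeasure c K = ∫ x, x ^ 2 • g x ∂K + c • g 0 := by
  rw [varianceMeasure, integrable_add_measure] at hg
  rw [varianceMeasure, integral_add_measure hg.1 hg.2,
    integral_withDensity_eq_integral_toReal_smul (by fun_prop) (by simp), integral_smul_measure,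
    integral_dirac]
  simp only [ENNReal.toReal_ofReal (sq_nonneg _), ENNReal.toReal_ofReal hc]

variable {a b : ℝ}

theorem integrable_sq_mul_exp {s : ℝ} (hKmin : ∫⁻ x, ENNReal.ofReal (min 1 (x ^ 2)) ∂K ≠ ⊤)
    (hs : s ∈ interior (integrableExpSet id (K.restrict {x | 1 ≤ |x|}))) :
    Integrable (fun x => x ^ 2 * Real.exp (s * x)) K := by
  have small_jumps : IntegrableOn (fun x => x ^ 2 * Real.exp (s * x)) {x | 1 ≤ |x|}ᶜ K := by
    have hmin : Integrable (fun x : ℝ => min 1 (x ^ 2)) K := by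
      refine ⟨by fun_prop, (hasFiniteIntegral_iff_ofReal ?_).2 hKmin.lt_top⟩
      exact .of_forall fun x => le_min zero_le_one (sq_nonneg x)
    refine (hmin.mul_const (Real.exp |s|)).integrableOn.mono' (by fun_prop) ?_
    filter_upwards [ae_restrict_mem (measurableSet_le (by fun_prop) (by fun_prop)).compl] with x hx
    have hx1 : |x| ≤ 1 := (not_le.1 (notMem_ofPred_iff.1 hx)).le
    rw [Real.norm_of_nonneg (by positivity), min_eq_right ((sq_le_one_iff_abs_le_one x).2 hx1)]
    gcongr
    exact (le_abs_self _).trans (abs_mul s x ▸ mul_le_of_le_one_right (abs_nonneg s) hx1)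
  have large_jumps := integrable_pow_mul_exp_of_mem_interior_integrableExpSet hs 2
  exact (integrableOn_univ (μ := K)).1 (union_compl_self {x : ℝ | 1 ≤ |x|} ▸
    IntegrableOn.union large_jumps small_jumps)

theorem Ioo_subset_interior_integrableExpSet_varianceMeasure
    (hKmin : ∫⁻ x, ENNReal.ofReal (min 1 (x ^ 2)) ∂K ≠ ⊤)
    (hKexp : ∀ s ∈ Ioo a b, ∫⁻ x in {x | 1 ≤ |x|}, ENNReal.ofReal (Real.exp (s * x)) ∂K ≠ ⊤) :
    Ioo a b ⊆ interior (integrableExpSet id (varianceMeasure c K)) := by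
  have large_jumps : Ioo a b ⊆ integrableExpSet id (K.restrict {x | 1 ≤ |x|}) := fun s hs =>
    ⟨by fun_prop, (hasFiniteIntegral_iff_ofReal (.of_forall fun x => (Real.exp_pos _).le)).2
      (hKexp s hs).lt_top⟩
  refine interior_maximal (fun s hs => ?_) isOpen_Ioo
  exact integrable_varianceMeasure_iff.2 (integrable_sq_mul_exp hKmin
    (interior_maximal large_jumps isOpen_Ioo hs))

theorem isFiniteMeasure_of_zero_mem_integrableExpSet {ν : Measure ℝ}
    (h : 0 ∈ integrableExpSet id ν) : IsFiniteMeasure ν := by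
  have hone : Integrable (fun _ : ℝ => (1 : ℝ)) ν := by
    simpa only [integrableExpSet, mem_ofPred_eq, zero_mul, Real.exp_zero] using h
  exact (integrable_const_iff_isFiniteMeasure one_ne_zero).1 hone

theorem integral_pow_succ_varianceMeasure (hc : 0 ≤ c)
    (h : 0 ∈ interior (integrableExpSet id (varianceMeasure c K))) (n : ℕ) :
    ∫ x, x ^ (n + 1) ∂varianceMeasure c K = ∫ x, x ^ (n + 3) ∂K := by
  have integrable : Integrable (fun x => x ^ (n + 1)) (varianceMeasure c K) :=
    integrable_pow_of_mem_interior_integrableExpSet h (n + 1)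
  rw [integral_varianceMeasure hc integrable]
  simp only [smul_eq_mul, ← pow_add, ne_eq, n.succ_ne_zero, not_false_eq_true, zero_pow, mul_zero,
    add_zero]
  ring_nf

theorem measureReal_varianceMeasure_univ (hc : 0 ≤ c)
    (h : 0 ∈ integrableExpSet id (varianceMeasure c K)) :
    (varianceMeasure c K).real univ = c + ∫ x, x ^ 2 ∂K := by
  have := isFiniteMeasure_of_zero_mem_integrableExpSet h
  have total := integral_varianceMeasure hc (integrable_const (μ := varianceMeasure c K) (1 : ℝ))
  simpa [add_comm] using total

end VarianceMeasure

section LevyExponent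

variable {ν : Measure ℝ} {lam : ℝ} {z w : ℂ}

theorem integrableExpSet_subset_mconv_taylorMeasure [IsFiniteMeasure ν] :
    integrableExpSet id ν ⊆ integrableExpSet id (ν ∗ₘ taylorMeasure) := by
  intro s hs
  refine (integrable_map_measure (by fun_prop) (by fun_prop)).2 ?_
  have dominating : Integrable (fun p : ℝ × ℝ => 1 + Real.exp (s * p.1)) (ν.prod taylorMeasure) :=
    ((integrable_const 1).add hs).comp_fst taylorMeasure
  refine dominating.mono' (by fun_prop) ?_
  have hsnd : ∀ᵐ p : ℝ × ℝ ∂ν.prod taylorMeasure, p.2 ∈ Icc (0 : ℝ) 1 :=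
    Measure.quasiMeasurePreserving_snd.ae ae_taylorMeasure_mem_Icc
  filter_upwards [hsnd] with p hp
  rw [Function.comp_apply, Real.norm_of_nonneg (by positivity), id_eq]
  rcases le_total 0 (s * p.1) with h | h
  · have : Real.exp (s * (p.1 * p.2)) ≤ Real.exp (s * p.1) := by
      rw [← mul_assoc]
      exact Real.exp_le_exp.2 (mul_le_of_le_one_right h hp.2)
    linarith
  · have : Real.exp (s * (p.1 * p.2)) ≤ 1 := by
      rw [← mul_assoc]
      exact Real.exp_le_one_iff.2 (mul_nonpos_of_nonpos_of_nonneg h hp.1)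
    linarith [Real.exp_pos (s * p.1)]

theorem complexMGF_mconv_taylorMeasure [IsFiniteMeasure ν] (hw : w.re ∈ integrableExpSet id ν) :
    complexMGF id (ν ∗ₘ taylorMeasure) w = ∫ x, complexMGF id taylorMeasure (w * x) ∂ν := by
  rw [complexMGF, integral_mconv (integrable_cexp_mul_of_re_mem_integrableExpSet aemeasurable_id
    (integrableExpSet_subset_mconv_taylorMeasure hw))]
  simp only [complexMGF, id_eq, ofReal_mul, mul_assoc]

theorem integrable_complexMGF_taylorMeasure [IsFiniteMeasure ν]
    (hw : w.re ∈ integrableExpSet id ν) :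
    Integrable (fun x : ℝ => complexMGF id taylorMeasure (w * x)) ν := by
  have on_product : Integrable (fun p : ℝ × ℝ => cexp (w * (p.1 * p.2 : ℝ)))
      (ν.prod taylorMeasure) :=
    (integrable_map_measure (f := fun p : ℝ × ℝ => p.1 * p.2) (g := fun y : ℝ => cexp (w * y))
      (by fun_prop) (by fun_prop)).1 (integrable_cexp_mul_of_re_mem_integrableExpSet aemeasurable_id
        (integrableExpSet_subset_mconv_taylorMeasure hw))
  simpa only [complexMGF, id_eq, ofReal_mul, mul_assoc] using on_product.integral_prod_left

theorem integrable_expRemainder [IsFiniteMeasure ν] (h : lam * z.re ∈ integrableExpSet id ν) :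
    Integrable (fun x => expRemainder z (lam * x)) ν := by
  have := (integrable_complexMGF_taylorMeasure (w := lam * z) (by simpa using h)).const_mul (z ^ 2)
  simpa only [expRemainder, ofReal_mul, mul_assoc, mul_left_comm z] using this

theorem integral_expRemainder [IsFiniteMeasure ν] (h : lam * z.re ∈ integrableExpSet id ν) :
    ∫ x, expRemainder z (lam * x) ∂ν =
      z ^ 2 * complexMGF id (ν ∗ₘ taylorMeasure) (lam * z) := by
  rw [complexMGF_mconv_taylorMeasure (by simpa using h), ← integral_const_mul]
  simp only [expRemainder, ofReal_mul, mul_assoc, mul_left_comm z]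

theorem iteratedDeriv_complexMGF_mconv_taylorMeasure_zero [IsFiniteMeasure ν]
    (h : 0 ∈ interior (integrableExpSet id ν)) (n : ℕ) :
    iteratedDeriv n (complexMGF id (ν ∗ₘ taylorMeasure)) 0 =
      ((∫ x, x ^ n ∂ν) / ((n + 1) * (n + 2)) : ℝ) := by
  have h' := interior_mono integrableExpSet_subset_mconv_taylorMeasure h
  have moment : ∫ x, x ^ n ∂(ν ∗ₘ taylorMeasure) = (∫ x, x ^ n ∂ν) / ((n + 1) * (n + 2)) := by
    have integrable : Integrable (fun x => x ^ n) (ν ∗ₘ taylorMeasure) :=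
      integrable_pow_of_mem_interior_integrableExpSet h' n
    rw [integral_mconv integrable]
    simp only [mul_pow, integral_const_mul, integral_pow_taylorMeasure, integral_mul_const]
    rw [mul_one_div]
  rw [iteratedDeriv_complexMGF h', ← moment, ← integral_complex_ofReal]
  simp

theorem kappa_eq_add_integral_expRemainder {c : ℝ} {K : Measure ℝ} (μ : ℝ) (hc : 0 ≤ c)
    (h₀ : 0 ∈ integrableExpSet id (varianceMeasure c K))
    (h : lam * z.re ∈ integrableExpSet id (varianceMeasure c K)) :
    kappa μ c K lam z = μ * z + ∫ x, expRemainder z (lam * x) ∂varianceMeasure c K := by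
  have := isFiniteMeasure_of_zero_mem_integrableExpSet h₀
  rcases eq_or_ne lam 0 with rfl | hlam
  · rw [kappa, if_pos rfl, ← measureReal_varianceMeasure_univ hc h₀]
    simp only [zero_mul, expRemainder_apply_zero, integral_const, real_smul]
    ring
  · have hlam' : (lam : ℂ) ≠ 0 := ofReal_ne_zero.2 hlam
    have rescale (x : ℝ) : x ^ 2 • expRemainder z (lam * x) =
        ((lam : ℂ) ^ 2)⁻¹ * (cexp (lam * z * x) - 1 - lam * z * x) := by
      have := sq_mul_expRemainder z (lam * x)
      rw [real_smul, eq_inv_mul_iff_mul_eq₀ (pow_ne_zero 2 hlam'), ← mul_assoc]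
      push_cast at this ⊢
      rw [← mul_pow, this]
      ring_nf
    rw [kappa, if_neg hlam, integral_varianceMeasure hc (integrable_expRemainder h)]
    simp only [rescale, mul_zero, expRemainder_apply_zero, integral_const_mul, real_smul]
    ring

end LevyExponent

section ExponentDomain

open Filter Topology

/-- The interior of the set of real exponents `s` with `∫ x ^ 2 * exp (s * x) K(dx) < ∞`. The
cumulant functions are analytic in the strip over it. -/
def exponentDomain (c : ℝ) (K : Measure ℝ) : Set ℝ :=
  interior (integrableExpSet id (varianceMeasure c K))

variable {c : ℝ} {K : Measure ℝ}

theorem isOpen_exponentDomain : IsOpen (exponentDomain c K) :=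
  isOpen_interior

theorem convex_exponentDomain : Convex ℝ (exponentDomain c K) :=
  convex_integrableExpSet.interior

theorem exponentDomain_subset :
    exponentDomain c K ⊆ integrableExpSet id (varianceMeasure c K) :=
  interior_subset

theorem mul_mem_exponentDomain {t r : ℝ} (h₀ : 0 ∈ exponentDomain c K) (ht : t ∈ Icc (0 : ℝ) 1)
    (hr : r ∈ exponentDomain c K) : t * r ∈ exponentDomain c K := by
  simpa using convex_exponentDomain.add_smul_mem h₀ (by simpa using hr) ht

theorem eventually_mul_mem_exponentDomain {t r : ℝ} (h : t * r ∈ exponentDomain c K) :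
    ∀ᶠ s in 𝓝 t, s * r ∈ exponentDomain c K :=
  (continuous_mul_const r).continuousAt.eventually_mem (isOpen_exponentDomain.mem_nhds h)

end ExponentDomain

section KappaRealPart

variable {c : ℝ} {K : Measure ℝ} {lam : ℝ} {z : ℂ}

theorem kappa_eq (μ : ℝ) (hc : 0 ≤ c) (h₀ : 0 ∈ exponentDomain c K)
    (h : lam * z.re ∈ exponentDomain c K) :
    kappa μ c K lam z =
      μ * z + z ^ 2 * complexMGF id (varianceMeasure c K ∗ₘ taylorMeasure) (lam * z) := by
  have := isFiniteMeasure_of_zero_mem_integrableExpSet (exponentDomain_subset h₀)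
  rw [kappa_eq_add_integral_expRemainder μ hc (exponentDomain_subset h₀) (exponentDomain_subset h),
    integral_expRemainder (exponentDomain_subset h)]

theorem im_kappa_ofReal (μ : ℝ) (hc : 0 ≤ c) (h₀ : 0 ∈ exponentDomain c K) {r : ℝ}
    (h : lam * r ∈ exponentDomain c K) : (kappa μ c K lam r).im = 0 := by
  rw [kappa_eq μ hc h₀ (by simpa using h), ← ofReal_mul lam, complexMGF_ofReal]
  norm_cast

theorem integrable_exp_mul_re_expRemainder_mul_I (h₀ : 0 ∈ exponentDomain c K)
    (h : lam * z.re ∈ exponentDomain c K) :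
    Integrable (fun x => Real.exp (z.re * (lam * x)) * (expRemainder (z.im * I) (lam * x)).re)
      (varianceMeasure c K) := by
  have := isFiniteMeasure_of_zero_mem_integrableExpSet (exponentDomain_subset h₀)
  have hz := integrable_expRemainder (exponentDomain_subset h)
  have hre := integrable_expRemainder (z := z.re) (exponentDomain_subset (by simpa using h))
  refine (hz.re.sub hre.re).congr (.of_forall fun x => ?_)
  have split := re_expRemainder_add_mul_I z.re z.im (lam * x)
  rw [re_add_im] at split
  simp only [Pi.sub_apply, RCLike.re_to_complex, split, add_sub_cancel_left]

theorem re_kappa_eq_add_integral (μ : ℝ) (hc : 0 ≤ c) (h₀ : 0 ∈ exponentDomain c K)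
    (h : lam * z.re ∈ exponentDomain c K) :
    (kappa μ c K lam z).re =
      μ * z.re + ∫ x, (expRemainder z (lam * x)).re ∂varianceMeasure c K := by
  have := isFiniteMeasure_of_zero_mem_integrableExpSet (exponentDomain_subset h₀)
  rw [kappa_eq_add_integral_expRemainder μ hc (exponentDomain_subset h₀) (exponentDomain_subset h),
    add_re, re_ofReal_mul]
  exact congrArg (μ * z.re + ·)
    (integral_re (integrable_expRemainder (exponentDomain_subset h))).symm

theorem re_kappa (μ : ℝ) (hc : 0 ≤ c) (h₀ : 0 ∈ exponentDomain c K)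
    (h : lam * z.re ∈ exponentDomain c K) :
    (kappa μ c K lam z).re = (kappa μ c K lam z.re).re +
      ∫ x, Real.exp (z.re * (lam * x)) * (expRemainder (z.im * I) (lam * x)).re
        ∂varianceMeasure c K := by
  have := isFiniteMeasure_of_zero_mem_integrableExpSet (exponentDomain_subset h₀)
  have h' : lam * (z.re : ℂ).re ∈ exponentDomain c K := by simpa using h
  have split (x : ℝ) := re_expRemainder_add_mul_I z.re z.im (lam * x)
  simp only [re_add_im] at split
  have integrable_re : Integrable (fun x => (expRemainder z.re (lam * x)).re)
      (varianceMeasure c K) := (integrable_expRemainder (exponentDomain_subset h')).re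
  rw [re_kappa_eq_add_integral μ hc h₀ h, re_kappa_eq_add_integral μ hc h₀ h', add_assoc,
    ← integral_add integrable_re (integrable_exp_mul_re_expRemainder_mul_I h₀ h)]
  simp only [split, ofReal_re]

theorem re_kappa_le (μ : ℝ) (hc : 0 ≤ c) (h₀ : 0 ∈ exponentDomain c K)
    (h : lam * z.re ∈ exponentDomain c K) :
    (kappa μ c K lam z).re ≤ (kappa μ c K lam z.re).re := by
  rw [re_kappa μ hc h₀ h, add_le_iff_nonpos_right]
  exact integral_nonpos fun x => mul_nonpos_of_nonneg_of_nonpos (Real.exp_pos _).le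
    (re_expRemainder_mul_I_nonpos _ _)

theorem re_kbar_one_one_pos (μ : ℝ) (hc : 0 ≤ c) (h₀ : 0 ∈ exponentDomain c K)
    (h₁ : lam * 1 ∈ exponentDomain c K) (h₂ : lam * 2 ∈ exponentDomain c K)
    (hvar : 0 < c + ∫ x, x ^ 2 ∂K) : 0 < (kbar μ c K lam 1 1).re := by
  have := isFiniteMeasure_of_zero_mem_integrableExpSet (exponentDomain_subset h₀)
  have int₁ : Integrable (fun x => (expRemainder 1 (lam * x)).re) (varianceMeasure c K) :=
    (integrable_expRemainder (exponentDomain_subset (by rwa [one_re]))).re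
  have int₂ : Integrable (fun x => (expRemainder 2 (lam * x)).re) (varianceMeasure c K) :=
    (integrable_expRemainder (exponentDomain_subset (by rwa [re_ofNat]))).re
  have kbar_eq : (kbar μ c K lam 1 1).re = ∫ x, (expRemainder 2 (lam * x) -
      expRemainder 1 (lam * x) - expRemainder 1 (lam * x)).re ∂varianceMeasure c K := by
    simp only [kbar, one_add_one_eq_two, sub_re]
    rw [re_kappa_eq_add_integral μ hc h₀ (by rwa [re_ofNat]),
      re_kappa_eq_add_integral μ hc h₀ (by rwa [one_re]),
      integral_sub (f := fun x => (expRemainder 2 (lam * x)).re - (expRemainder 1 (lam * x)).re)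
        (int₂.sub int₁) int₁, integral_sub int₂ int₁, one_re, re_ofNat]
    ring
  rw [kbar_eq, integral_pos_iff_support_of_nonneg (fun x => (re_expRemainder_two_sub_pos _).le)
    (by simp only [sub_re]; exact (int₂.sub int₁).sub int₁),
    Function.support_eq_univ fun x => (re_expRemainder_two_sub_pos _).ne']
  exact (ENNReal.toReal_pos_iff.1 (hvar.trans_eq
    (measureReal_varianceMeasure_univ hc (exponentDomain_subset h₀)).symm)).1

end KappaRealPart

section EtaRealPart

variable {c : ℝ} {K : Measure ℝ} {lam : ℝ} {z : ℂ}

theorem mul_exp_sub_one_sub_one_le (q v : ℝ) :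
    q * (Real.exp v - 1) - 1 ≤ (q ^ 2 + |q|) * (v ^ 2 * (1 + Real.exp v)) := by
  have hexp := Real.exp_pos v
  have mul_le_abs : q * (Real.exp v - 1) ≤ |q| * |Real.exp v - 1| := abs_mul q _ ▸ le_abs_self _
  have lin_nonneg : 0 ≤ |q| * (v ^ 2 * (1 + Real.exp v)) := by positivity
  have quad_nonneg : 0 ≤ q ^ 2 * v ^ 2 * Real.exp v := by positivity
  rcases le_total v 1 with hv | hv
  · have exp_sub_one : |Real.exp v - 1| ≤ 2 * |v| := by
      rcases le_total (-1) v with hv' | hv'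
      · exact Real.abs_exp_sub_one_le (abs_le.2 ⟨hv', hv⟩)
      · rw [abs_of_nonpos (by linarith [Real.exp_le_one_iff.2 (hv'.trans (by norm_num))]),
          abs_of_nonpos (by linarith)]
        linarith
    have mul_le := mul_le_mul_of_nonneg_left exp_sub_one (abs_nonneg q)
    have am_gm : |q| * (2 * |v|) - 1 ≤ q ^ 2 * v ^ 2 := by
      rw [← sq_abs q, ← sq_abs v]
      linarith [sq_nonneg (|q| * |v| - 1)]
    linarith
  · have exp_le : |Real.exp v - 1| ≤ v ^ 2 * (1 + Real.exp v) := by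
      rw [abs_of_nonneg (by linarith [Real.add_one_le_exp v])]
      have one_le_sq : 1 ≤ v ^ 2 := (one_le_sq_iff_one_le_abs v).2 (hv.trans (le_abs_self v))
      nlinarith [mul_le_mul_of_nonneg_right one_le_sq hexp.le]
    have mul_le := mul_le_mul_of_nonneg_left exp_le (abs_nonneg q)
    have : 0 ≤ q ^ 2 * (v ^ 2 * (1 + Real.exp v)) := by positivity
    linarith

theorem im_kappa_one_div_kbar (μ : ℝ) (hc : 0 ≤ c) (h₀ : 0 ∈ exponentDomain c K)
    (h₁ : lam * 1 ∈ exponentDomain c K) (h₂ : lam * 2 ∈ exponentDomain c K) :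
    (kappa μ c K lam 1 / kbar μ c K lam 1 1).im = 0 := by
  have im_one : (kappa μ c K lam 1).im = 0 := by
    simpa only [ofReal_one] using im_kappa_ofReal μ hc h₀ h₁
  have im_two : (kappa μ c K lam 2).im = 0 := by
    simpa only [ofReal_ofNat] using im_kappa_ofReal μ hc h₀ h₂
  have im_kbar : (kbar μ c K lam 1 1).im = 0 := by
    simp only [kbar, one_add_one_eq_two, sub_im, im_one, im_two, sub_zero]
  simp only [div_im, im_one, im_kbar, zero_mul, mul_zero, zero_div, sub_zero]

theorem re_etaLK {μ q : ℝ} (hq : kappa μ c K lam 1 / kbar μ c K lam 1 1 = q) :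
    (etaLK μ c K lam z).re = (1 + q) * (kappa μ c K lam z).re -
      q * (kappa μ c K lam (z + 1)).re + q * (kappa μ c K lam 1).re := by
  have eta_eq : etaLK μ c K lam z =
      (1 + q : ℝ) * kappa μ c K lam z - q * kappa μ c K lam (z + 1) + q * kappa μ c K lam 1 := by
    rw [etaLK, gamLK, mul_div_left_comm, hq, kbar]
    push_cast
    ring
  simp only [eta_eq, add_re, sub_re, re_ofReal_mul]

/- The left side is `exp (r v) * ψ * (1 - q * (exp v - 1))` with `ψ ≤ 0` the real part of the
remainder. The last factor is positive near `v = 0`, and away from `0` one has `v ^ 2 * ψ ≥ -2`,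
which makes the bound uniform in `y`. -/
theorem exp_mul_re_expRemainder_mul_I_le (q r y v : ℝ) :
    (1 + q) * (Real.exp (r * v) * (expRemainder (y * I) v).re) -
        q * (Real.exp ((r + 1) * v) * (expRemainder (y * I) v).re) ≤
      2 * (q ^ 2 + |q|) * (Real.exp (r * v) + Real.exp ((r + 1) * v)) := by
  set ψ := (expRemainder (y * I) v).re
  rw [add_one_mul r v, Real.exp_add]
  calc (1 + q) * (Real.exp (r * v) * ψ) - q * (Real.exp (r * v) * Real.exp v * ψ)
      = Real.exp (r * v) * (-ψ * (q * (Real.exp v - 1) - 1)) := by ring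
    _ ≤ Real.exp (r * v) * (-ψ * ((q ^ 2 + |q|) * (v ^ 2 * (1 + Real.exp v)))) := by
        gcongr
        · exact neg_nonneg.2 (re_expRemainder_mul_I_nonpos y v)
        · exact mul_exp_sub_one_sub_one_le q v
    _ = Real.exp (r * v) * ((q ^ 2 + |q|) * (1 + Real.exp v)) * -(v ^ 2 * ψ) := by ring
    _ ≤ Real.exp (r * v) * ((q ^ 2 + |q|) * (1 + Real.exp v)) * 2 := by
        gcongr
        linarith [neg_two_le_sq_mul_re_expRemainder_mul_I y v]
    _ = 2 * (q ^ 2 + |q|) * (Real.exp (r * v) + Real.exp (r * v) * Real.exp v) := by ring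

theorem re_etaLK_le {μ q : ℝ} (hc : 0 ≤ c) (h₀ : 0 ∈ exponentDomain c K)
    (h : lam * z.re ∈ exponentDomain c K) (h' : lam * (z.re + 1) ∈ exponentDomain c K)
    (hq : kappa μ c K lam 1 / kbar μ c K lam 1 1 = q) :
    (etaLK μ c K lam z).re ≤ (etaLK μ c K lam z.re).re + 2 * (q ^ 2 + |q|) *
      (mgf id (varianceMeasure c K) (lam * z.re) +
        mgf id (varianceMeasure c K) (lam * (z.re + 1))) := by
  have hz1 : lam * (z + 1).re ∈ exponentDomain c K := by rwa [add_re, one_re]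
  have oscillation := (integrable_exp_mul_re_expRemainder_mul_I h₀ h).const_mul (1 + q)
  have oscillation_succ := (integrable_exp_mul_re_expRemainder_mul_I h₀ hz1).const_mul q
  have int_exp := exponentDomain_subset h
  have int_exp_succ := exponentDomain_subset h'
  have integral_le := integral_mono (oscillation.sub oscillation_succ)
    ((int_exp.add int_exp_succ).const_mul (2 * (q ^ 2 + |q|))) fun x => by
      have key := exp_mul_re_expRemainder_mul_I_le q z.re z.im (lam * x)
      simpa only [Pi.sub_apply, Pi.add_apply, add_re, one_re, add_im, one_im, add_zero, id_eq,
        mul_assoc, mul_left_comm] using key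
  rw [integral_sub' oscillation oscillation_succ, integral_const_mul, integral_const_mul,
    integral_const_mul, integral_add' int_exp int_exp_succ] at integral_le
  have re_succ : (((z + 1).re : ℝ) : ℂ) = z.re + 1 := by rw [add_re, one_re, ofReal_add, ofReal_one]
  rw [re_etaLK hq, re_etaLK hq, re_kappa μ hc h₀ h, re_kappa μ hc h₀ hz1, re_succ]
  simp only [mgf]
  linarith

end EtaRealPart

section TemperedCumulants

open Filter Topology Asymptotics

theorem exists_norm_iteratedDeriv_complexMGF_le {Ω : Type*} [MeasurableSpace Ω] {Y : Ω → ℝ}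
    {P : Measure Ω} {s : ℝ} (hs : s ∈ interior (integrableExpSet Y P)) (k : ℕ) :
    ∃ C, ∀ᶠ t in 𝓝 s, ∀ z : ℂ, z.re = t → ‖iteratedDeriv k (complexMGF Y P) z‖ ≤ C := by
  obtain ⟨δ, hδ, hball⟩ := Metric.nhds_basis_closedBall.mem_iff.1 (isOpen_interior.mem_nhds hs)
  rw [Real.closedBall_eq_Icc] at hball
  have left := integrable_pow_abs_mul_exp_of_mem_interior_integrableExpSet
    (hball (left_mem_Icc.2 (by linarith))) k
  have right := integrable_pow_abs_mul_exp_of_mem_interior_integrableExpSet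
    (hball (right_mem_Icc.2 (by linarith))) k
  refine ⟨∫ ω, (|Y ω| ^ k * Real.exp ((s - δ) * Y ω) + |Y ω| ^ k * Real.exp ((s + δ) * Y ω)) ∂P, ?_⟩
  filter_upwards [Icc_mem_nhds (sub_lt_self s hδ) (lt_add_of_pos_right s hδ)] with t ht z hz
  rw [iteratedDeriv_complexMGF (hz ▸ hball ht)]
  refine norm_integral_le_of_norm_le (left.add right) (.of_forall fun ω => ?_)
  rw [norm_mul, norm_pow, norm_real, Real.norm_eq_abs, norm_exp, re_mul_ofReal, hz,
    ← mul_add]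
  gcongr
  rcases le_total 0 (Y ω) with h | h
  · exact (Real.exp_le_exp.2 (mul_le_mul_of_nonneg_right ht.2 h)).trans
      (le_add_of_nonneg_left (Real.exp_pos _).le)
  · exact (Real.exp_le_exp.2 (mul_le_mul_of_nonpos_right ht.1 h)).trans
      (le_add_of_nonneg_right (Real.exp_pos _).le)

variable {X E : Type*} [MeasurableSpace X] [NormedAddCommGroup E] {w : X → E} {lam₀ : ℝ} {n : ℕ}
  {y z : X → ℂ} {r s : ℝ}

theorem temperedAt_iteratedDeriv_complexMGF {ρ : Measure ℝ} (hz : TemperedAt w lam₀ fun _ => z)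
    (hz_re : ∀ x, (z x).re = r) (hr : lam₀ * r ∈ interior (integrableExpSet id ρ)) (k : ℕ) :
    TemperedAt w lam₀ (fun l x => iteratedDeriv k (complexMGF id ρ) (l * z x)) := by
  have re_eq (l : ℝ) (x : X) : (l * z x).re = l * r := by rw [re_ofReal_mul, hz_re]
  have tendsto_mul : Tendsto (· * r) (𝓝 lam₀) (𝓝 (lam₀ * r)) := tendsto_id.mul_const r
  have domain : ∀ᶠ l in 𝓝 lam₀, l * r ∈ interior (integrableExpSet id ρ) :=
    tendsto_mul.eventually_mem (isOpen_interior.mem_nhds hr)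
  have differentiableAt {u : ℂ} (hu : u.re ∈ interior (integrableExpSet id ρ)) :=
    (hasDerivAt_iteratedDeriv_complexMGF hu k).differentiableAt
  refine ⟨domain.mono fun l hl => ?_, ⟨0, ?_⟩, domain.mono fun l hl x => ?_⟩
  · have strip_continuous : ContinuousOn (iteratedDeriv k (complexMGF id ρ))
        {u | u.re ∈ interior (integrableExpSet id ρ)} := fun u hu =>
      (differentiableAt hu).continuousAt.continuousWithinAt
    have mem_strip (x : X) : (l : ℂ) * z x ∈ {u : ℂ | u.re ∈ interior (integrableExpSet id ρ)} :=
      mem_ofPred.2 (by rwa [re_eq])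
    exact (continuousOn_iff_continuous_domRestrict.1 strip_continuous).measurable.comp
      ((hz.measurable.self_of_nhds.const_mul (l : ℂ)).subtype_mk (h := mem_strip))
  · obtain ⟨C, hC⟩ := exists_norm_iteratedDeriv_complexMGF_le hr k
    refine IsBigO.of_bound C ?_
    rw [← principal_univ, eventually_prod_principal_iff]
    filter_upwards [tendsto_mul.eventually hC] with l hl x _
    simpa only [pow_zero, norm_one, mul_one] using hl _ (re_eq l x)
  · exact ContinuousAt.comp (f := fun l : ℝ => (l : ℂ) * z x)
      (differentiableAt (re_eq l x ▸ hl)).continuousAt (by fun_prop)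

theorem hasDerivAt_iteratedDeriv_complexMGF_ofReal_mul {ρ : Measure ℝ} {u : ℂ} {l : ℝ}
    (hu : l * u.re ∈ interior (integrableExpSet id ρ)) (k : ℕ) :
    HasDerivAt (fun l : ℝ => iteratedDeriv k (complexMGF id ρ) (l * u))
      (iteratedDeriv (k + 1) (complexMGF id ρ) (l * u) * u) l := by
  have inner : HasDerivAt (fun l : ℝ => (l : ℂ) * u) u l := by
    simpa using (ofRealCLM.hasDerivAt (x := l)).mul_const u
  rw [← re_ofReal_mul] at hu
  rw [iteratedDeriv_complexMGF hu]
  exact (hasDerivAt_iteratedDeriv_complexMGF hu k).comp l inner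

theorem temperedContDiffAt_iteratedDeriv_complexMGF {ρ : Measure ℝ}
    (hz : TemperedAt w lam₀ fun _ => z) (hz_re : ∀ x, (z x).re = r)
    (hr : lam₀ * r ∈ interior (integrableExpSet id ρ)) (k : ℕ) :
    TemperedContDiffAt w lam₀ n
      (fun l x => iteratedDeriv k (complexMGF id ρ) (l * z x)) := by
  induction n generalizing k with
  | zero => exact temperedAt_iteratedDeriv_complexMGF hz hz_re hr k
  | succ n ih =>
    refine ⟨temperedAt_iteratedDeriv_complexMGF hz hz_re hr k, _, ?_, (ih (k + 1)).mul (.const hz)⟩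
    have domain : ∀ᶠ l in 𝓝 lam₀, l * r ∈ interior (integrableExpSet id ρ) :=
      (continuous_mul_const r).continuousAt.eventually_mem (isOpen_interior.mem_nhds hr)
    filter_upwards [domain] with l hl x
    exact hasDerivAt_iteratedDeriv_complexMGF_ofReal_mul (by rwa [hz_re]) k

variable {c : ℝ} {K : Measure ℝ}

theorem temperedContDiffAt_kappa (μ : ℝ) (hc : 0 ≤ c) (h₀ : 0 ∈ exponentDomain c K)
    (hz : TemperedAt w lam₀ fun _ => z) (hz_re : ∀ x, (z x).re = r)
    (hr : lam₀ * r ∈ exponentDomain c K) :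
    TemperedContDiffAt w lam₀ n (fun l x => kappa μ c K l (z x)) := by
  have := isFiniteMeasure_of_zero_mem_integrableExpSet (exponentDomain_subset h₀)
  have hr' := interior_mono integrableExpSet_subset_mconv_taylorMeasure hr
  have tz : TemperedContDiffAt w lam₀ n (fun _ => z) := .const hz
  have tM : TemperedContDiffAt w lam₀ n
      (fun l x => complexMGF id (varianceMeasure c K ∗ₘ taylorMeasure) (l * z x)) := by
    simpa only [iteratedDeriv_zero] using
      temperedContDiffAt_iteratedDeriv_complexMGF hz hz_re hr' 0
  refine (((TemperedContDiffAt.const (.scalar μ)).mul tz).add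
    ((tz.mul tz).mul tM)).congr ?_
  filter_upwards [eventually_mul_mem_exponentDomain hr] with l hl
  funext x
  rw [kappa_eq μ hc h₀ (by rwa [hz_re]), sq]

theorem temperedContDiffAt_kbar (μ : ℝ) (hc : 0 ≤ c) (h₀ : 0 ∈ exponentDomain c K)
    (hy : TemperedAt w lam₀ fun _ => y) (hz : TemperedAt w lam₀ fun _ => z)
    (hy_re : ∀ x, (y x).re = r) (hz_re : ∀ x, (z x).re = s)
    (hr : lam₀ * r ∈ exponentDomain c K) (hs : lam₀ * s ∈ exponentDomain c K)
    (hrs : lam₀ * (r + s) ∈ exponentDomain c K) :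
    TemperedContDiffAt w lam₀ n (fun l x => kbar μ c K l (y x) (z x)) :=
  ((temperedContDiffAt_kappa μ hc h₀ (hy.add hz) (fun x => by rw [add_re, hy_re, hz_re]) hrs).sub
    (temperedContDiffAt_kappa μ hc h₀ hy hy_re hr)).sub
      (temperedContDiffAt_kappa μ hc h₀ hz hz_re hs)

theorem contDiffAt_kappa (μ : ℝ) (hc : 0 ≤ c) (h₀ : 0 ∈ exponentDomain c K) {u : ℂ}
    (h : lam₀ * u.re ∈ exponentDomain c K) : ContDiffAt ℝ n (kappa μ c K · u) lam₀ :=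
  (temperedContDiffAt_kappa (w := id) (z := fun _ : ℝ => u) μ hc h₀
    (.scalar _) (fun _ => rfl) h).contDiffAt_apply 0

theorem contDiffAt_kbar (μ : ℝ) (hc : 0 ≤ c) (h₀ : 0 ∈ exponentDomain c K) {u v : ℂ}
    (hu : lam₀ * u.re ∈ exponentDomain c K) (hv : lam₀ * v.re ∈ exponentDomain c K)
    (huv : lam₀ * (u + v).re ∈ exponentDomain c K) :
    ContDiffAt ℝ n (kbar μ c K · u v) lam₀ :=
  ((contDiffAt_kappa μ hc h₀ huv).sub (contDiffAt_kappa μ hc h₀ hu)).sub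
    (contDiffAt_kappa μ hc h₀ hv)

end TemperedCumulants

section HedgeErrorDensity

open Filter Topology Asymptotics

/-- The integrability, positivity and non-degeneracy required of the Lévy-Khintchine data `(c, K)`;
the exponents `0` and `2` make the hedging instrument square integrable. -/
structure IsAdmissible (c : ℝ) (K : Measure ℝ) : Prop where
  nonneg : 0 ≤ c
  zero_mem : 0 ∈ exponentDomain c K
  two_mem : 2 ∈ exponentDomain c K
  variance_pos : 0 < c + ∫ x, x ^ 2 ∂K

/-- The integrand `J₀(λ; t, y, z)` of the squared hedging error, before it is weighted with the
Fourier coefficients of the payoff. -/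
noncomputable def hedgeErrorDensity (μ c : ℝ) (K : Measure ℝ) (T S₀ lam : ℝ) (y z : ℂ)
    (t : ℝ) : ℂ :=
  cpowR S₀ (y + z) *
    (kbar μ c K lam y z - kbar μ c K lam y 1 * kbar μ c K lam z 1 / kbar μ c K lam 1 1) *
    cexp (kappa μ c K lam (y + z) * t + (etaLK μ c K lam y + etaLK μ c K lam z) * (T - t))

variable {c : ℝ} {K : Measure ℝ}

namespace IsAdmissible

theorem one_mem (h : IsAdmissible c K) : 1 ∈ exponentDomain c K := by
  simpa using mul_mem_exponentDomain (t := 1 / 2) h.zero_mem (by norm_num [mem_Icc]) h.two_mem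

theorem mem_of_two_mul_mem (h : IsAdmissible c K) {r : ℝ} (hr : 2 * r ∈ exponentDomain c K) :
    r ∈ exponentDomain c K := by
  simpa using mul_mem_exponentDomain (t := 1 / 2) h.zero_mem (by norm_num [mem_Icc]) hr

theorem add_one_mem_of_two_mul_mem (h : IsAdmissible c K) {r : ℝ}
    (hr : 2 * r ∈ exponentDomain c K) : r + 1 ∈ exponentDomain c K := by
  have midpoint := convex_exponentDomain hr h.two_mem (by norm_num : (0 : ℝ) ≤ 1 / 2)
    (by norm_num : (0 : ℝ) ≤ 1 / 2) (by norm_num)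
  convert midpoint using 1
  rw [smul_eq_mul, smul_eq_mul]
  ring

variable {lam : ℝ}

theorem kbar_one_one_ne_zero (μ : ℝ) (h : IsAdmissible c K) (hlam : lam ∈ Icc (0 : ℝ) 1) :
    kbar μ c K lam 1 1 ≠ 0 := by
  have pos := re_kbar_one_one_pos μ h.nonneg h.zero_mem
    (mul_mem_exponentDomain h.zero_mem hlam h.one_mem)
    (mul_mem_exponentDomain h.zero_mem hlam h.two_mem) h.variance_pos
  exact fun hzero => pos.ne' (by rw [hzero, zero_re])

theorem contDiffAt_kbar_one_one (μ : ℝ) (h : IsAdmissible c K) (hlam : lam ∈ Icc (0 : ℝ) 1)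
    {n : ℕ} : ContDiffAt ℝ n (kbar μ c K · 1 1) lam := by
  have one_mem := mul_mem_exponentDomain h.zero_mem hlam h.one_mem
  refine contDiffAt_kbar μ h.nonneg h.zero_mem ?_ ?_ ?_
  · rwa [one_re]
  · rwa [one_re]
  · rw [one_add_one_eq_two, re_ofNat]
    exact mul_mem_exponentDomain h.zero_mem hlam h.two_mem

theorem contDiffAt_kappa_one (μ : ℝ) (h : IsAdmissible c K) (hlam : lam ∈ Icc (0 : ℝ) 1) {n : ℕ} :
    ContDiffAt ℝ n (kappa μ c K · 1) lam :=
  contDiffAt_kappa μ h.nonneg h.zero_mem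
    (by simpa only [one_re] using mul_mem_exponentDomain h.zero_mem hlam h.one_mem)

theorem contDiffAt_etaLK (μ : ℝ) (h : IsAdmissible c K) (hlam : lam ∈ Icc (0 : ℝ) 1) {n : ℕ} {u : ℂ}
    (hu : lam * u.re ∈ exponentDomain c K) (hu' : lam * (u.re + 1) ∈ exponentDomain c K) :
    ContDiffAt ℝ n (etaLK μ c K · u) lam := by
  have one_mem : lam * (1 : ℂ).re ∈ exponentDomain c K := by
    simpa only [one_re] using mul_mem_exponentDomain h.zero_mem hlam h.one_mem
  have kbar_one : ContDiffAt ℝ n (kbar μ c K · u 1) lam :=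
    contDiffAt_kbar μ h.nonneg h.zero_mem hu one_mem (by rwa [add_re, one_re])
  simp only [etaLK, gamLK, div_eq_mul_inv]
  exact (contDiffAt_kappa μ h.nonneg h.zero_mem hu).sub ((h.contDiffAt_kappa_one μ hlam).mul
    (kbar_one.mul ((h.contDiffAt_kbar_one_one μ hlam).inv (h.kbar_one_one_ne_zero μ hlam))))

end IsAdmissible

variable {X E : Type*} [MeasurableSpace X] [NormedAddCommGroup E] {w : X → E} {lam₀ : ℝ} {n : ℕ}
  {y z : X → ℂ} {r : ℝ}

theorem temperedContDiffAt_kbar_one (μ : ℝ) (h : IsAdmissible c K)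
    (hlam : lam₀ ∈ Icc (0 : ℝ) 1) (hz : TemperedAt w lam₀ fun _ => z) (hz_re : ∀ x, (z x).re = r)
    (hr : r ∈ exponentDomain c K) (hr' : r + 1 ∈ exponentDomain c K) :
    TemperedContDiffAt w lam₀ n (fun l x => kbar μ c K l (z x) 1) :=
  temperedContDiffAt_kbar μ h.nonneg h.zero_mem hz
    (.scalar _) hz_re (fun _ => one_re)
    (mul_mem_exponentDomain h.zero_mem hlam hr) (mul_mem_exponentDomain h.zero_mem hlam h.one_mem)
    (mul_mem_exponentDomain h.zero_mem hlam hr')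

theorem temperedContDiffAt_etaLK (μ : ℝ) (h : IsAdmissible c K) (hlam : lam₀ ∈ Icc (0 : ℝ) 1)
    (hz : TemperedAt w lam₀ fun _ => z) (hz_re : ∀ x, (z x).re = r)
    (hr : r ∈ exponentDomain c K) (hr' : r + 1 ∈ exponentDomain c K) :
    TemperedContDiffAt w lam₀ n (fun l x => etaLK μ c K l (z x)) := by
  simp only [etaLK, gamLK, div_eq_mul_inv]
  exact (temperedContDiffAt_kappa μ h.nonneg h.zero_mem hz hz_re
      (mul_mem_exponentDomain h.zero_mem hlam hr)).sub
    ((TemperedContDiffAt.of_contDiffAt (h.contDiffAt_kappa_one μ hlam)).mul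
      ((temperedContDiffAt_kbar_one μ h hlam hz hz_re hr hr').mul
        (.of_contDiffAt ((h.contDiffAt_kbar_one_one μ hlam).inv (h.kbar_one_one_ne_zero μ hlam)))))

theorem exists_eventually_re_kappa_le (μ : ℝ) (h : IsAdmissible c K) (hlam : lam₀ ∈ Icc (0 : ℝ) 1)
    (hr : r ∈ exponentDomain c K) :
    ∃ C, ∀ᶠ l in 𝓝 lam₀, ∀ u : ℂ, u.re = r → (kappa μ c K l u).re ≤ C := by
  have domain := mul_mem_exponentDomain h.zero_mem hlam hr
  have continuous : ContinuousAt (fun l => (kappa μ c K l r).re) lam₀ :=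
    continuous_re.continuousAt.comp
      (contDiffAt_kappa (n := 0) μ h.nonneg h.zero_mem (by rwa [ofReal_re])).continuousAt
  obtain ⟨C, hC⟩ := continuous.tendsto.isBoundedUnder_le
  refine ⟨C, ?_⟩
  filter_upwards [eventually_map.1 hC, eventually_mul_mem_exponentDomain domain]
    with l hle hmem u hu
  subst hu
  exact (re_kappa_le μ h.nonneg h.zero_mem hmem).trans hle

theorem continuousAt_mgf_varianceMeasure (hr : lam₀ * r ∈ exponentDomain c K) :
    ContinuousAt (fun l => mgf id (varianceMeasure c K) (l * r)) lam₀ :=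
  ContinuousAt.comp (f := (· * r))
    (continuousOn_mgf.continuousAt (isOpen_exponentDomain.mem_nhds hr)) (by fun_prop)

theorem exists_eventually_re_etaLK_le (μ : ℝ) (h : IsAdmissible c K) (hlam : lam₀ ∈ Icc (0 : ℝ) 1)
    (hr : r ∈ exponentDomain c K) (hr' : r + 1 ∈ exponentDomain c K) :
    ∃ C, ∀ᶠ l in 𝓝 lam₀, ∀ u : ℂ, u.re = r → (etaLK μ c K l u).re ≤ C := by
  have mem {s : ℝ} := mul_mem_exponentDomain (r := s) h.zero_mem hlam
  set q : ℝ → ℝ := fun l => (kappa μ c K l 1 / kbar μ c K l 1 1).re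
  have continuous_q : ContinuousAt q lam₀ := continuous_re.continuousAt.comp
    ((h.contDiffAt_kappa_one (n := 0) μ hlam).continuousAt.div
      (h.contDiffAt_kbar_one_one (n := 0) μ hlam).continuousAt (h.kbar_one_one_ne_zero μ hlam))
  have continuous_eta : ContinuousAt (fun l => (etaLK μ c K l r).re) lam₀ :=
    continuous_re.continuousAt.comp
      (h.contDiffAt_etaLK (n := 0) μ hlam (mem hr) (mem hr')).continuousAt
  have continuous_bound := continuous_eta.add
    ((((continuous_q.pow 2).add continuous_q.abs).const_mul 2).mul
      ((continuousAt_mgf_varianceMeasure (mem hr)).add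
        (continuousAt_mgf_varianceMeasure (mem hr'))))
  obtain ⟨C, hC⟩ := continuous_bound.tendsto.isBoundedUnder_le
  refine ⟨C, ?_⟩
  filter_upwards [eventually_map.1 hC,
    eventually_mul_mem_exponentDomain (mem hr), eventually_mul_mem_exponentDomain (mem hr'),
    eventually_mul_mem_exponentDomain (mem h.one_mem),
    eventually_mul_mem_exponentDomain (mem h.two_mem)] with l hle hmem hmem' hone htwo u hu
  subst hu
  have hq : kappa μ c K l 1 / kbar μ c K l 1 1 = q l :=
    Complex.ext rfl (im_kappa_one_div_kbar μ h.nonneg h.zero_mem hone htwo)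
  exact (re_etaLK_le h.nonneg h.zero_mem hmem hmem' hq).trans hle

theorem temperedContDiffAt_cpowR (S₀ : ℝ) (hz : TemperedAt w lam₀ fun _ => z)
    (hz_re : ∀ x, (z x).re = r) : TemperedContDiffAt w lam₀ n (fun _ x => cpowR S₀ (z x)) := by
  have exponent : TemperedContDiffAt w lam₀ n fun _ x => z x * Real.log S₀ :=
    (TemperedContDiffAt.const hz).mul (.const (.scalar _))
  exact exponent.exp (C := r * Real.log S₀)
    (.of_forall fun _ x => by rw [re_mul_ofReal, hz_re])

variable {T : ℝ} {t : X → ℝ}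

theorem temperedAt_ofReal (ht : Measurable t) (htT : ∀ x, t x ∈ Icc 0 T) :
    TemperedAt w lam₀ (fun _ x => (t x : ℂ)) :=
  .const (N := 0) (by fun_prop) (IsBigO.of_bound T (.of_forall fun x => by
    simpa [abs_of_nonneg (htT x).1] using (htT x).2))

theorem temperedContDiffAt_exp_hedge (μ : ℝ) (h : IsAdmissible c K) (hlam : lam₀ ∈ Icc (0 : ℝ) 1)
    (hr : 2 * r ∈ exponentDomain c K)
    (hy : TemperedAt w lam₀ fun _ => y) (hz : TemperedAt w lam₀ fun _ => z)
    (hy_re : ∀ x, (y x).re = r) (hz_re : ∀ x, (z x).re = r)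
    (ht : Measurable t) (htT : ∀ x, t x ∈ Icc 0 T) :
    TemperedContDiffAt w lam₀ n (fun l x => cexp (kappa μ c K l (y x + z x) * t x +
      (etaLK μ c K l (y x) + etaLK μ c K l (z x)) * (T - t x))) := by
  have r_mem := h.mem_of_two_mul_mem hr
  have r_succ_mem := h.add_one_mem_of_two_mul_mem hr
  have sum_re (x : X) : (y x + z x).re = 2 * r := by rw [add_re, hy_re, hz_re, two_mul]
  have time : TemperedContDiffAt w lam₀ n fun _ x => (t x : ℂ) := .const (temperedAt_ofReal ht htT)
  have exponent := ((temperedContDiffAt_kappa (n := n) μ h.nonneg h.zero_mem (hy.add hz) sum_re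
    (mul_mem_exponentDomain h.zero_mem hlam hr)).mul time).add
      (((temperedContDiffAt_etaLK μ h hlam hy hy_re r_mem r_succ_mem).add
        (temperedContDiffAt_etaLK μ h hlam hz hz_re r_mem r_succ_mem)).mul
        ((TemperedContDiffAt.const (.scalar T)).sub time))
  obtain ⟨A, hA⟩ := exists_eventually_re_kappa_le μ h hlam hr
  obtain ⟨B, hB⟩ := exists_eventually_re_etaLK_le μ h hlam r_mem r_succ_mem
  refine exponent.exp (C := max A (2 * B) * T) ?_
  filter_upwards [hA, hB] with l hAl hBl x
  rw [add_re, re_mul_ofReal, ← ofReal_sub, re_mul_ofReal, add_re]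
  have elapsed := mul_le_mul_of_nonneg_right ((hAl _ (sum_re x)).trans (le_max_left A (2 * B)))
    (htT x).1
  have remaining := mul_le_mul_of_nonneg_right
    ((add_le_add (hBl _ (hy_re x)) (hBl _ (hz_re x))).trans
      ((two_mul B).symm.trans_le (le_max_right A (2 * B)))) (sub_nonneg.2 (htT x).2)
  linarith

theorem temperedContDiffAt_hedgeErrorDensity (μ S₀ : ℝ) (h : IsAdmissible c K)
    (hlam : lam₀ ∈ Icc (0 : ℝ) 1) (hr : 2 * r ∈ exponentDomain c K)
    (hy : TemperedAt w lam₀ fun _ => y) (hz : TemperedAt w lam₀ fun _ => z)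
    (hy_re : ∀ x, (y x).re = r) (hz_re : ∀ x, (z x).re = r)
    (ht : Measurable t) (htT : ∀ x, t x ∈ Icc 0 T) :
    TemperedContDiffAt w lam₀ n
      (fun l x => hedgeErrorDensity μ c K T S₀ l (y x) (z x) (t x)) := by
  have r_mem := h.mem_of_two_mul_mem hr
  have r_succ_mem := h.add_one_mem_of_two_mul_mem hr
  have mem_mul := mul_mem_exponentDomain h.zero_mem hlam r_mem
  have sum_re (x : X) : (y x + z x).re = 2 * r := by rw [add_re, hy_re, hz_re, two_mul]
  simp only [hedgeErrorDensity, div_eq_mul_inv]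
  refine ((temperedContDiffAt_cpowR S₀ (hy.add hz) sum_re).mul (.sub ?_ (.mul (.mul ?_ ?_) ?_))).mul
    (temperedContDiffAt_exp_hedge μ h hlam hr hy hz hy_re hz_re ht htT)
  · exact temperedContDiffAt_kbar μ h.nonneg h.zero_mem hy hz hy_re hz_re mem_mul mem_mul
      (two_mul r ▸ mul_mem_exponentDomain h.zero_mem hlam hr)
  · exact temperedContDiffAt_kbar_one μ h hlam hy hy_re r_mem r_succ_mem
  · exact temperedContDiffAt_kbar_one μ h hlam hz hz_re r_mem r_succ_mem
  · exact .of_contDiffAt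
      ((h.contDiffAt_kbar_one_one μ hlam).inv (h.kbar_one_one_ne_zero μ hlam))

end HedgeErrorDensity

section DerivativesAtZero

open Filter Topology

theorem iteratedDeriv_mul_of_forall_lt {𝕜 𝔸 : Type*} [NontriviallyNormedField 𝕜] [NormedRing 𝔸]
    [NormedAlgebra 𝕜 𝔸] {f g : 𝕜 → 𝔸} {x : 𝕜} {n : ℕ} (hf : ContDiffAt 𝕜 n f x)
    (hg : ContDiffAt 𝕜 n g x) (hzero : ∀ i < n, iteratedDeriv i f x = 0) :
    iteratedDeriv n (fun y => f y * g y) x = iteratedDeriv n f x * g x := by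
  rw [iteratedDeriv_fun_mul hf hg, Finset.sum_range_succ, Finset.sum_eq_zero]
  · simp only [Nat.choose_self, Nat.cast_one, one_mul, Nat.sub_self, iteratedDeriv_zero, zero_add]
  · intro i hi
    rw [hzero i (Finset.mem_range.1 hi), mul_zero, zero_mul]

theorem iteratedDeriv_complexMGF_ofReal_mul_eventuallyEq {ρ : Measure ℝ}
    (h : 0 ∈ interior (integrableExpSet id ρ)) (u : ℂ) (k : ℕ) :
    iteratedDeriv k (fun l : ℝ => complexMGF id ρ (l * u)) =ᶠ[𝓝 0]
      fun l => u ^ k * iteratedDeriv k (complexMGF id ρ) (l * u) := by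
  induction k with
  | zero => simp
  | succ k ih =>
    have domain : ∀ᶠ l in 𝓝 (0 : ℝ), l * u.re ∈ interior (integrableExpSet id ρ) :=
      (continuous_mul_const u.re).continuousAt.eventually_mem
        (isOpen_interior.mem_nhds (by rwa [zero_mul]))
    filter_upwards [ih.deriv, domain] with l hl hmem
    rw [iteratedDeriv_succ, hl,
      ((hasDerivAt_iteratedDeriv_complexMGF_ofReal_mul hmem k).const_mul (u ^ k)).deriv]
    ring

variable {c : ℝ} {K : Measure ℝ}

theorem kbar_eventuallyEq_zero (μ : ℝ) (hc : 0 ≤ c) (h₀ : 0 ∈ exponentDomain c K) (y z : ℂ) :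
    (kbar μ c K · y z) =ᶠ[𝓝 0] fun l =>
      (y + z) ^ 2 * complexMGF id (varianceMeasure c K ∗ₘ taylorMeasure) (l * (y + z)) -
      y ^ 2 * complexMGF id (varianceMeasure c K ∗ₘ taylorMeasure) (l * y) -
      z ^ 2 * complexMGF id (varianceMeasure c K ∗ₘ taylorMeasure) (l * z) := by
  have domain (r : ℝ) : ∀ᶠ l in 𝓝 (0 : ℝ), l * r ∈ exponentDomain c K :=
    eventually_mul_mem_exponentDomain (by rwa [zero_mul])
  filter_upwards [domain (y + z).re, domain y.re, domain z.re] with l hyz hy hz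
  rw [kbar, kappa_eq μ hc h₀ hyz, kappa_eq μ hc h₀ hy, kappa_eq μ hc h₀ hz]
  ring

theorem iteratedDeriv_kbar_zero (μ : ℝ) (hc : 0 ≤ c) (h₀ : 0 ∈ exponentDomain c K) (y z : ℂ)
    (k : ℕ) :
    iteratedDeriv k (kbar μ c K · y z) 0 =
      ((∫ x, x ^ k ∂varianceMeasure c K) / ((k + 1) * (k + 2)) : ℝ) *
        ((y + z) ^ (k + 2) - y ^ (k + 2) - z ^ (k + 2)) := by
  have := isFiniteMeasure_of_zero_mem_integrableExpSet (exponentDomain_subset h₀)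
  set M := complexMGF id (varianceMeasure c K ∗ₘ taylorMeasure)
  have h₀' := interior_mono integrableExpSet_subset_mconv_taylorMeasure h₀
  have contDiff (u : ℂ) : ContDiffAt ℝ k (fun l : ℝ => M (l * u)) 0 := by
    have tempered := temperedContDiffAt_iteratedDeriv_complexMGF (w := id) (z := fun _ : ℝ => u)
      (n := k) (.scalar _) (fun _ => rfl) (by rwa [zero_mul]) 0
    exact tempered.contDiffAt_apply 0
  have term (u : ℂ) : iteratedDeriv k (fun l : ℝ => u ^ 2 * M (l * u)) 0 =
      u ^ (k + 2) * ((∫ x, x ^ k ∂varianceMeasure c K) / ((k + 1) * (k + 2)) : ℝ) := by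
    rw [iteratedDeriv_const_mul _ (contDiff u),
      (iteratedDeriv_complexMGF_ofReal_mul_eventuallyEq h₀' u k).eq_of_nhds, ofReal_zero, zero_mul,
      iteratedDeriv_complexMGF_mconv_taylorMeasure_zero h₀ k, pow_add]
    ring
  have contDiff_term (u : ℂ) : ContDiffAt ℝ k (fun l : ℝ => u ^ 2 * M (l * u)) 0 :=
    contDiffAt_const.mul (contDiff u)
  rw [(kbar_eventuallyEq_zero μ hc h₀ y z).iteratedDeriv_eq k,
    iteratedDeriv_fun_sub ((contDiff_term _).sub (contDiff_term y)) (contDiff_term z),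
    iteratedDeriv_fun_sub (contDiff_term _) (contDiff_term y), term, term, term]
  ring

/-- The Gram determinant `κ̄(y, z) κ̄(1, 1) - κ̄(y, 1) κ̄(z, 1)`: the numerator of the factor of
`hedgeErrorDensity` that vanishes in the Black-Scholes limit. -/
noncomputable def kbarGram (μ c : ℝ) (K : Measure ℝ) (lam : ℝ) (y z : ℂ) : ℂ :=
  kbar μ c K lam y z * kbar μ c K lam 1 1 - kbar μ c K lam y 1 * kbar μ c K lam z 1

theorem contDiffAt_kbar_zero (μ : ℝ) (hc : 0 ≤ c) (h₀ : 0 ∈ exponentDomain c K) (y z : ℂ) {n : ℕ} :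
    ContDiffAt ℝ n (kbar μ c K · y z) 0 :=
  contDiffAt_kbar μ hc h₀ (by rwa [zero_mul]) (by rwa [zero_mul]) (by rwa [zero_mul])

theorem contDiffAt_kbarGram_zero (μ : ℝ) (hc : 0 ≤ c) (h₀ : 0 ∈ exponentDomain c K) (y z : ℂ)
    {n : ℕ} : ContDiffAt ℝ n (kbarGram μ c K · y z) 0 :=
  have contDiff (u v : ℂ) := contDiffAt_kbar_zero (n := n) μ hc h₀ u v
  ((contDiff y z).mul (contDiff 1 1)).sub ((contDiff y 1).mul (contDiff z 1))

theorem iteratedDeriv_kbarGram_zero (μ : ℝ) (hc : 0 ≤ c) (h₀ : 0 ∈ exponentDomain c K) (y z : ℂ)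
    (n : ℕ) :
    iteratedDeriv n (kbarGram μ c K · y z) 0 = ∑ i ∈ Finset.range (n + 1), (n.choose i : ℂ) *
      (iteratedDeriv i (kbar μ c K · y z) 0 * iteratedDeriv (n - i) (kbar μ c K · 1 1) 0 -
        iteratedDeriv i (kbar μ c K · y 1) 0 * iteratedDeriv (n - i) (kbar μ c K · z 1) 0) := by
  have contDiff (u v : ℂ) := contDiffAt_kbar_zero (n := n) μ hc h₀ u v
  simp only [kbarGram]
  rw [iteratedDeriv_fun_sub ((contDiff y z).mul (contDiff 1 1)) ((contDiff y 1).mul (contDiff z 1)),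
    iteratedDeriv_fun_mul (contDiff y z) (contDiff 1 1),
    iteratedDeriv_fun_mul (contDiff y 1) (contDiff z 1), ← Finset.sum_sub_distrib]
  simp only [mul_sub, mul_assoc]

theorem iteratedDeriv_kbarGram_zero_of_lt_two (μ : ℝ) (hc : 0 ≤ c) (h₀ : 0 ∈ exponentDomain c K)
    (y z : ℂ) {n : ℕ} (hn : n < 2) : iteratedDeriv n (kbarGram μ c K · y z) 0 = 0 := by
  interval_cases n <;>
  · simp only [iteratedDeriv_kbarGram_zero μ hc h₀, iteratedDeriv_kbar_zero μ hc h₀,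
      Finset.sum_range_succ, Finset.sum_range_zero, Nat.choose_zero_right, Nat.choose_self,
      Nat.reduceAdd, Nat.reduceSub]
    push_cast
    ring

theorem iteratedDeriv_two_kbarGram_zero (μ : ℝ) (hc : 0 ≤ c) (h₀ : 0 ∈ exponentDomain c K)
    (y z : ℂ) :
    iteratedDeriv 2 (kbarGram μ c K · y z) 0 =
      (((c + ∫ x, x ^ 2 ∂K) * (∫ x, x ^ 4 ∂K) - (∫ x, x ^ 3 ∂K) ^ 2) / 2 : ℝ) *
        (y * (y - 1) * (z * (z - 1))) := by
  have moment (k : ℕ) := integral_pow_succ_varianceMeasure hc h₀ k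
  have mass := measureReal_varianceMeasure_univ hc (exponentDomain_subset h₀)
  rw [← mass, ← moment 0, ← moment 1]
  simp only [iteratedDeriv_kbarGram_zero μ hc h₀, iteratedDeriv_kbar_zero μ hc h₀,
    Finset.sum_range_succ, Finset.sum_range_zero, Nat.choose_zero_right, Nat.choose_one_right,
    Nat.choose_self, Nat.reduceAdd, Nat.reduceSub, pow_zero, integral_const, smul_eq_mul, mul_one]
  push_cast
  ring

variable (μ T S₀ t : ℝ) (y z : ℂ)

theorem hedgeErrorDensity_eventuallyEq_zero (h : IsAdmissible c K) :
    (hedgeErrorDensity μ c K T S₀ · y z t) =ᶠ[𝓝 0] fun l =>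
      kbarGram μ c K l y z * ((kbar μ c K l 1 1)⁻¹ * (cpowR S₀ (y + z) *
        cexp (kappa μ c K l (y + z) * t + (etaLK μ c K l y + etaLK μ c K l z) * (T - t)))) := by
  have kbar_ne_zero : ∀ᶠ l in 𝓝 (0 : ℝ), kbar μ c K l 1 1 ≠ 0 :=
    (contDiffAt_kbar_zero (n := 0) μ h.nonneg h.zero_mem 1 1).continuousAt.eventually_ne
      (h.kbar_one_one_ne_zero μ (left_mem_Icc.2 zero_le_one))
  filter_upwards [kbar_ne_zero] with l hl
  rw [hedgeErrorDensity, kbarGram]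
  field_simp

theorem contDiffAt_exp_hedge_zero (h : IsAdmissible c K) {n : ℕ} :
    ContDiffAt ℝ n (fun l => (kbar μ c K l 1 1)⁻¹ * (cpowR S₀ (y + z) *
      cexp (kappa μ c K l (y + z) * t + (etaLK μ c K l y + etaLK μ c K l z) * (T - t)))) 0 := by
  have zero_mem : (0 : ℝ) ∈ Icc (0 : ℝ) 1 := left_mem_Icc.2 zero_le_one
  have mem (r : ℝ) : 0 * r ∈ exponentDomain c K := by simpa only [zero_mul] using h.zero_mem
  have eta (u : ℂ) := h.contDiffAt_etaLK (n := n) μ zero_mem (mem u.re) (mem (u.re + 1))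
  have kappa_sum := contDiffAt_kappa (n := n) μ h.nonneg h.zero_mem (mem (y + z).re)
  have exponent := (kappa_sum.mul (contDiffAt_const (c := (t : ℂ)))).add
    (((eta y).add (eta z)).mul (contDiffAt_const (c := (T - t : ℂ))))
  exact ((h.contDiffAt_kbar_one_one μ zero_mem).inv (h.kbar_one_one_ne_zero μ zero_mem)).mul
    (contDiffAt_const.mul exponent.cexp)

theorem iteratedDeriv_hedgeErrorDensity_zero (h : IsAdmissible c K) {n : ℕ} (hn : n ≤ 2) :
    iteratedDeriv n (hedgeErrorDensity μ c K T S₀ · y z t) 0 =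
      iteratedDeriv n (kbarGram μ c K · y z) 0 * ((kbar μ c K 0 1 1)⁻¹ * (cpowR S₀ (y + z) *
        cexp (kappa μ c K 0 (y + z) * t + (etaLK μ c K 0 y + etaLK μ c K 0 z) * (T - t)))) := by
  rw [(hedgeErrorDensity_eventuallyEq_zero μ T S₀ t y z h).iteratedDeriv_eq n]
  exact iteratedDeriv_mul_of_forall_lt (contDiffAt_kbarGram_zero μ h.nonneg h.zero_mem y z)
    (contDiffAt_exp_hedge_zero μ T S₀ t y z h) fun i hi =>
      iteratedDeriv_kbarGram_zero_of_lt_two μ h.nonneg h.zero_mem y z (hi.trans_le hn)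

theorem iteratedDeriv_hedgeErrorDensity_zero_of_lt_two (h : IsAdmissible c K) {n : ℕ} (hn : n < 2) :
    iteratedDeriv n (hedgeErrorDensity μ c K T S₀ · y z t) 0 = 0 := by
  rw [iteratedDeriv_hedgeErrorDensity_zero μ T S₀ t y z h hn.le,
    iteratedDeriv_kbarGram_zero_of_lt_two μ h.nonneg h.zero_mem y z hn, zero_mul]

theorem kappa_zero {σ2 : ℝ} (hσ2 : σ2 = c + ∫ x, x ^ 2 ∂K) (u : ℂ) :
    kappa μ c K 0 u = μ * u + σ2 / 2 * u ^ 2 := by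
  rw [kappa, if_pos rfl, ← hσ2]

theorem kbar_zero {σ2 : ℝ} (hσ2 : σ2 = c + ∫ x, x ^ 2 ∂K) (u v : ℂ) :
    kbar μ c K 0 u v = σ2 * (u * v) := by
  simp only [kbar, kappa_zero μ hσ2]
  ring

theorem etaLK_zero {σ2 : ℝ} (hσ2 : σ2 = c + ∫ x, x ^ 2 ∂K) (hpos : 0 < σ2) (u : ℂ) :
    etaLK μ c K 0 u = σ2 / 2 * u * (u - 1) := by
  have : (σ2 : ℂ) ≠ 0 := ofReal_ne_zero.2 hpos.ne'
  simp only [etaLK, gamLK, kbar_zero μ hσ2, kappa_zero μ hσ2]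
  field_simp
  ring

theorem iteratedDeriv_two_hedgeErrorDensity_zero (h : IsAdmissible c K) :
    iteratedDeriv 2 (hedgeErrorDensity μ c K T S₀ · y z t) 0 =
      (((∫ x, x ^ 4 ∂K) - (∫ x, x ^ 3 ∂K) ^ 2 / (c + ∫ x, x ^ 2 ∂K)) / 2 : ℝ) *
        (y * (y - 1) * (z * (z - 1)) * (cpowR S₀ (y + z) *
          cexp (kappa μ c K 0 (y + z) * t + (etaLK μ c K 0 y + etaLK μ c K 0 z) * (T - t)))) := by
  rw [iteratedDeriv_hedgeErrorDensity_zero μ T S₀ t y z h le_rfl,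
    iteratedDeriv_two_kbarGram_zero μ h.nonneg h.zero_mem, kbar_zero μ rfl 1 1]
  have variance_ne_zero : ((c + ∫ x, x ^ 2 ∂K : ℝ) : ℂ) ≠ 0 := ofReal_ne_zero.2 h.variance_pos.ne'
  generalize c + ∫ x, x ^ 2 ∂K = σ2 at variance_ne_zero ⊢
  push_cast
  field_simp

end DerivativesAtZero

section PayoffCoefficients

open scoped FourierTransform ContDiff

theorem integrable_one_add_norm_pow_smul {E F : Type*} [NormedAddCommGroup E] [MeasurableSpace E]
    [BorelSpace E] [SecondCountableTopology E] [NormedAddCommGroup F] [NormedSpace ℝ F]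
    {ν : Measure E} [ν.HasTemperateGrowth] {f : E → F}
    (hdecay : ∀ n : ℕ, ∃ C, ∀ x, ‖x‖ ^ n * ‖f x‖ ≤ C) (hf : AEStronglyMeasurable f ν) (N : ℕ) :
    Integrable (fun x => (1 + ‖x‖) ^ N • f x) ν := by
  have integrable_pow (k : ℕ) : Integrable (fun x => ‖x‖ ^ k * ‖f x‖) ν := by
    obtain ⟨C₁, hC₁⟩ := hdecay 0
    obtain ⟨C₂, hC₂⟩ := hdecay (k + ν.integrablePower)
    exact integrable_of_le_of_pow_mul_le (by simpa using hC₁) hC₂ hf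
  refine (((integrable_pow 0).add (integrable_pow N)).const_mul (2 ^ (N - 1))).mono' (by fun_prop)
    (.of_forall fun x => ?_)
  rw [norm_smul, Real.norm_of_nonneg (by positivity)]
  calc (1 + ‖x‖) ^ N * ‖f x‖
      ≤ 2 ^ (N - 1) * (1 ^ N + ‖x‖ ^ N) * ‖f x‖ := by
        gcongr
        exact add_pow_le zero_le_one (norm_nonneg x) N
    _ = 2 ^ (N - 1) * (‖x‖ ^ 0 * ‖f x‖ + ‖x‖ ^ N * ‖f x‖) := by ring

theorem contDiff_comp_exp_mul_exp {f : ℝ → ℝ} (hf : ContDiffOn ℝ ∞ f (Ioi 0)) (R : ℝ) :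
    ContDiff ℝ ∞ fun x => f (Real.exp x) * Real.exp (-R * x) :=
  (hf.comp_contDiff Real.contDiff_exp fun x => Real.exp_pos x).mul (by fun_prop)

theorem iteratedDeriv_ofReal_comp {l : ℝ → ℝ} (hl : ContDiff ℝ ∞ l) (n : ℕ) :
    iteratedDeriv n (fun x => (l x : ℂ)) = fun x => ((iteratedDeriv n l x : ℝ) : ℂ) := by
  induction n with
  | zero => simp only [iteratedDeriv_zero]
  | succ n ih =>
    ext x
    have differentiable :=
      hl.differentiable_iteratedDeriv n (by exact_mod_cast WithTop.coe_lt_top n)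
    rw [iteratedDeriv_succ, ih, iteratedDeriv_succ]
    exact (differentiable x).hasDerivAt.ofReal_comp.deriv

variable {l : ℝ → ℝ}

theorem lhat_eq_fourier (l : ℝ → ℝ) (y : ℝ) :
    lhat l y = 𝓕 (fun x => (l x : ℂ)) (y / (2 * Real.pi)) := by
  rw [Real.fourier_real_eq_integral_exp_smul, lhat]
  congr with x
  rw [smul_eq_mul, mul_comm]
  have : (Real.pi : ℂ) ≠ 0 := ofReal_ne_zero.2 Real.pi_ne_zero
  push_cast
  field_simp

theorem continuous_lhat (hl : Integrable l) : Continuous (lhat l) := by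
  have fourier : Continuous (𝓕 fun x => (l x : ℂ)) :=
    VectorFourier.fourierIntegral_continuous Real.continuous_fourierChar continuous_inner hl.ofReal
  rw [funext (lhat_eq_fourier l)]
  exact fourier.comp (by fun_prop)

theorem abs_pow_mul_norm_lhat_le (hl : ContDiff ℝ ∞ l)
    (hint : ∀ n, Integrable (iteratedDeriv n l)) (n : ℕ) (y : ℝ) :
    |y| ^ n * ‖lhat l y‖ ≤ ∫ x, |iteratedDeriv n l x| := by
  have hint' (n : ℕ) : Integrable (iteratedDeriv n fun x => (l x : ℂ)) := by
    rw [iteratedDeriv_ofReal_comp hl]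
    exact (hint n).ofReal
  have contDiff : ContDiff ℝ ∞ fun x => (l x : ℂ) := ofRealCLM.contDiff.comp hl
  have fourier_deriv := congrFun (Real.fourier_iteratedDeriv (N := ⊤) (n := n) contDiff
    (fun n _ => hint' n) le_top) (y / (2 * Real.pi))
  have rescale : 2 * (Real.pi : ℂ) * I * ((y / (2 * Real.pi) : ℝ) : ℂ) = I * y := by
    have : (Real.pi : ℂ) ≠ 0 := ofReal_ne_zero.2 Real.pi_ne_zero
    push_cast
    field_simp
  calc |y| ^ n * ‖lhat l y‖
      = ‖𝓕 (iteratedDeriv n fun x => (l x : ℂ)) (y / (2 * Real.pi))‖ := by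
        rw [fourier_deriv, rescale, lhat_eq_fourier, norm_smul, norm_pow, norm_mul, norm_I, one_mul,
          norm_real, Real.norm_eq_abs]
    _ ≤ ∫ x, ‖iteratedDeriv n (fun x => (l x : ℂ)) x‖ :=
        VectorFourier.norm_fourierIntegral_le_integral_norm _ _ _ _ _
    _ = ∫ x, |iteratedDeriv n l x| := by
        simp only [iteratedDeriv_ofReal_comp hl, norm_real, Real.norm_eq_abs]

theorem integrable_one_add_norm_pow_smul_pCoef (hl : ContDiff ℝ ∞ l)
    (hint : ∀ n, Integrable (iteratedDeriv n l)) (N : ℕ) :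
    Integrable fun u : ℝ => (1 + ‖u‖) ^ N • pCoef l u := by
  have lhat_integrable : Integrable fun u : ℝ => (1 + ‖u‖) ^ N • lhat l u :=
    integrable_one_add_norm_pow_smul (fun n => ⟨_, abs_pow_mul_norm_lhat_le hl hint n⟩)
      (continuous_lhat (by simpa using hint 0)).aestronglyMeasurable N
  simpa only [pCoef, ← smul_div_assoc] using lhat_integrable.div_const (2 * Real.pi)

end PayoffCoefficients

section CashGreek

open Filter Topology Asymptotics

theorem integral_sq_integral_mul_cexp {X : Type*} [MeasurableSpace X] {M : Measure X} [SFinite M]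
    {γ : Measure ℝ} [SFinite γ] {g z : X → ℂ} {r : ℝ} (hg : Integrable g M) (hz : Measurable z)
    (hz_re : ∀ x, (z x).re = r) (hγ : Integrable (fun x => Real.exp (2 * r * x)) γ) :
    ∫ x, (∫ u, g u * cexp (z u * x) ∂M) ^ 2 ∂γ =
      ∫ p : X × X, g p.1 * g p.2 * complexMGF id γ (z p.1 + z p.2) ∂M.prod M := by
  have square (x : ℝ) : (∫ u, g u * cexp (z u * x) ∂M) ^ 2 =
      ∫ p : X × X, g p.1 * g p.2 * cexp ((z p.1 + z p.2) * x) ∂M.prod M := by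
    rw [sq, ← integral_prod_mul]
    simp only [add_mul, Complex.exp_add, mul_mul_mul_comm]
  have norm_cexp (x : ℝ) (p : X × X) :
      ‖cexp ((z p.1 + z p.2) * x)‖ = Real.exp (2 * r * x) := by
    rw [Complex.norm_exp, re_mul_ofReal, add_re, hz_re, hz_re, two_mul]
  have integrable : Integrable (Function.uncurry fun (x : ℝ) (p : X × X) =>
      g p.1 * g p.2 * cexp ((z p.1 + z p.2) * x)) (γ.prod (M.prod M)) := by
    have meas_cexp : Measurable fun q : ℝ × X × X => cexp ((z q.2.1 + z q.2.2) * q.1) := by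
      fun_prop
    refine (hγ.mul_prod (hg.norm.mul_prod hg.norm)).mono'
      ((hg.mul_prod hg).aestronglyMeasurable.comp_snd.mul meas_cexp.aestronglyMeasurable)
      (.of_forall fun q => ?_)
    simp only [Function.uncurry_def, norm_mul, norm_cexp]
    exact (mul_comm _ _).le
  simp only [square]
  rw [integral_integral_swap integrable]
  simp only [integral_const_mul, complexMGF, id_eq]

theorem zLine_re (R u : ℝ) : (zLine R u).re = R := by
  simp [zLine]

theorem norm_zLine_le (R u : ℝ) : ‖zLine R u‖ ≤ (|R| + 1) * (1 + |u|) := by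
  calc ‖zLine R u‖ ≤ ‖(R : ℂ)‖ + ‖(u : ℂ) * I‖ := norm_add_le _ _
    _ = |R| + |u| := by rw [norm_mul, norm_I, mul_one, norm_real, norm_real]; rfl
    _ ≤ (|R| + 1) * (1 + |u|) := by nlinarith [abs_nonneg R, abs_nonneg u]

theorem measurable_zLine (R : ℝ) : Measurable (zLine R) := by
  unfold zLine
  fun_prop

theorem temperedAt_zLine {X E : Type*} [MeasurableSpace X] [NormedAddCommGroup E] {w : X → E}
    {lam₀ : ℝ} {φ : X → ℝ} (R : ℝ) (hφ : Measurable φ) (hle : ∀ x, |φ x| ≤ ‖w x‖) :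
    TemperedAt w lam₀ fun _ x => zLine R (φ x) := by
  refine .const (N := 1) ((measurable_zLine R).comp hφ)
    (IsBigO.of_bound (|R| + 1) (.of_forall fun x => (norm_zLine_le R (φ x)).trans ?_))
  rw [pow_one, Real.norm_of_nonneg (by positivity)]
  gcongr
  exact hle x

theorem cpowR_mul_exp {s : ℝ} (hs : 0 < s) (x : ℝ) (z : ℂ) :
    cpowR (s * Real.exp x) z = cpowR s z * cexp (z * x) := by
  rw [cpowR, Real.log_mul hs.ne' (Real.exp_pos x).ne', Real.log_exp, ofReal_add, mul_add,
    Complex.exp_add, cpowR]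

theorem cpowR_add (s : ℝ) (y z : ℂ) : cpowR s (y + z) = cpowR s y * cpowR s z := by
  rw [cpowR, add_mul, Complex.exp_add, cpowR, cpowR]

/-- The integrand of `cashGreek`, as a function of the frequency `u`. -/
noncomputable def cashGreekDensity (σ2 T R : ℝ) (l : ℝ → ℝ) (n : ℕ) (t s u : ℝ) : ℂ :=
  (∏ k ∈ Finset.range n, (zLine R u - (k : ℂ))) * cpowR s (zLine R u) *
    cexp ((σ2 : ℂ) / 2 * zLine R u * (zLine R u - 1) * (T - t)) * pCoef l u

theorem cashGreekDensity_mul_exp {s : ℝ} (hs : 0 < s) (σ2 T R : ℝ) (l : ℝ → ℝ) (n : ℕ)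
    (t x u : ℝ) :
    cashGreekDensity σ2 T R l n t (s * Real.exp x) u =
      cashGreekDensity σ2 T R l n t s u * cexp (zLine R u * x) := by
  rw [cashGreekDensity, cpowR_mul_exp hs, cashGreekDensity]
  ring

theorem cashGreek_mul_exp {s : ℝ} (hs : 0 < s) (σ2 T R : ℝ) (l : ℝ → ℝ) (n : ℕ) (t x : ℝ) :
    cashGreek σ2 T R l n t (s * Real.exp x) =
      ∫ u, cashGreekDensity σ2 T R l n t s u * cexp (zLine R u * x) := by
  simp only [← cashGreekDensity_mul_exp hs]
  rfl

variable {l : ℝ → ℝ} {σ2 T t R : ℝ}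

theorem temperedAt_id_zLine (R : ℝ) : TemperedAt (id : ℝ → ℝ) 0 fun _ u => zLine R u :=
  temperedAt_zLine R measurable_id fun _ => le_rfl

theorem temperedAt_prod_zLine_sub (R : ℝ) (n : ℕ) : TemperedAt (id : ℝ → ℝ) 0
    fun _ u => ∏ k ∈ Finset.range n, (zLine R u - (k : ℂ)) := by
  induction n with
  | zero => simpa only [Finset.prod_range_zero] using .scalar 1
  | succ n ih =>
    simpa only [Finset.prod_range_succ, sub_eq_add_neg] using
      ih.mul ((temperedAt_id_zLine R).add (.scalar (-n)))

theorem re_zLine_mul_zLine_sub_one_le (R u : ℝ) :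
    (zLine R u * (zLine R u - 1)).re ≤ R ^ 2 - R := by
  have : (zLine R u * (zLine R u - 1)).re = R ^ 2 - R - u ^ 2 := by
    simp only [zLine, mul_re, add_re, ofReal_re, I_re, mul_zero, ofReal_im, I_im, mul_one, sub_self,
      add_zero, sub_re, one_re, add_im, mul_im, zero_add, sub_im, one_im, sub_zero]
    ring
  linarith [sq_nonneg u]

theorem temperedAt_exp_zLine (hσ2 : 0 ≤ σ2) (R : ℝ) (ht : t ≤ T) : TemperedAt (id : ℝ → ℝ) 0
    fun _ u => cexp ((σ2 : ℂ) / 2 * zLine R u * (zLine R u - 1) * (T - t)) := by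
  have line := temperedAt_id_zLine R
  have exponent := (((TemperedAt.scalar (σ2 / 2)).mul line).mul (line.add (.scalar (-1)))).mul
    (.scalar (T - t))
  simp only [← sub_eq_add_neg] at exponent
  refine exponent.exp (C := σ2 / 2 * (T - t) * (R ^ 2 - R)) (.of_forall fun _ u => ?_)
  have scale : (σ2 : ℂ) / 2 * zLine R u * (zLine R u - 1) * (T - t) =
      ((σ2 / 2 * (T - t) : ℝ) : ℂ) * (zLine R u * (zLine R u - 1)) := by
    push_cast
    ring
  rw [scale, re_ofReal_mul]
  exact mul_le_mul_of_nonneg_left (re_zLine_mul_zLine_sub_one_le R u)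
    (mul_nonneg (by positivity) (sub_nonneg.2 ht))

theorem integrable_cashGreekDensity
    (hp : ∀ N : ℕ, Integrable fun u => (1 + ‖u‖) ^ N • pCoef l u) (hσ2 : 0 ≤ σ2) (R : ℝ)
    (ht : t ≤ T) (n : ℕ) (s : ℝ) : Integrable (cashGreekDensity σ2 T R l n t s) := by
  have power := temperedContDiffAt_cpowR (n := 0) s (temperedAt_id_zLine R) (zLine_re R)
  exact (((temperedAt_prod_zLine_sub R n).mul power.tempered).mul
    (temperedAt_exp_zLine hσ2 R ht)).integrable_mul hp

theorem integral_sq_cashGreek_two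
    (hp : ∀ N : ℕ, Integrable fun u => (1 + ‖u‖) ^ N • pCoef l u) {c : ℝ} {K : Measure ℝ}
    (μ R : ℝ) (hσ2 : σ2 = c + ∫ x, x ^ 2 ∂K) (hpos : 0 < σ2) {S₀ : ℝ} (hS₀ : 0 < S₀)
    (ht : t ∈ Icc 0 T) :
    ∫ x, cashGreek σ2 T R l 2 t (S₀ * Real.exp (μ * t + x)) ^ 2
        ∂gaussianReal 0 (σ2 * t).toNNReal =
      ∫ p : ℝ × ℝ, zLine R p.1 * (zLine R p.1 - 1) * (zLine R p.2 * (zLine R p.2 - 1)) *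
        (cpowR S₀ (zLine R p.1 + zLine R p.2) *
          cexp (kappa μ c K 0 (zLine R p.1 + zLine R p.2) * t +
          (etaLK μ c K 0 (zLine R p.1) + etaLK μ c K 0 (zLine R p.2)) * (T - t))) *
        (pCoef l p.1 * pCoef l p.2) := by
  have spot_pos : 0 < S₀ * Real.exp (μ * t) := mul_pos hS₀ (Real.exp_pos _)
  simp only [Real.exp_add, ← mul_assoc S₀, cashGreek_mul_exp spot_pos]
  rw [integral_sq_integral_mul_cexp (integrable_cashGreekDensity hp hpos.le R ht.2 2 _)
    (measurable_zLine R) (zLine_re R) (integrable_exp_mul_gaussianReal _), ← Measure.volume_eq_prod]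
  refine integral_congr_ae (.of_forall fun p => ?_)
  simp only [cashGreekDensity, Finset.prod_range_succ, Finset.prod_range_zero,
    complexMGF_id_gaussianReal, kappa_zero μ hσ2, etaLK_zero μ hσ2 hpos, cpowR_mul_exp hS₀,
    cpowR_add, Real.coe_toNNReal _ (mul_nonneg hpos.le ht.1), ofReal_mul]
  generalize zLine R p.1 = y, zLine R p.2 = z
  have exponents : cexp (y * (μ * t)) * cexp (z * (μ * t)) *
      (cexp (σ2 / 2 * y * (y - 1) * (T - t)) * cexp (σ2 / 2 * z * (z - 1) * (T - t))) *
      cexp ((y + z) * (0 : ℝ) + σ2 * t * (y + z) ^ 2 / 2) =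
      cexp ((μ * (y + z) + σ2 / 2 * (y + z) ^ 2) * t +
        (σ2 / 2 * y * (y - 1) + σ2 / 2 * z * (z - 1)) * (T - t)) := by
    simp only [← Complex.exp_add, ofReal_zero]
    ring_nf
  rw [← exponents]
  push_cast
  ring

end CashGreek

section SquaredHedgingError

open Topology

attribute [local instance] Measure.Subtype.measureSpace

theorem isFiniteMeasure_volume_Icc (a b : ℝ) : IsFiniteMeasure (volume : Measure (Icc a b)) :=
  ⟨by
    rw [Measure.Subtype.volume_univ nullMeasurableSet_Icc, Real.volume_Icc]
    exact ENNReal.ofReal_lt_top⟩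

theorem integral_Icc_subtype {E : Type*} [NormedAddCommGroup E] [NormedSpace ℝ E] {a b : ℝ}
    (hab : a ≤ b) (f : ℝ → E) : ∫ t : Icc a b, f t = ∫ t in a..b, f t := by
  rw [integral_subtype measurableSet_Icc, integral_Icc_eq_integral_Ioc,
    intervalIntegral.integral_of_le hab]

theorem integral_prod_prod_Icc {E : Type*} [NormedAddCommGroup E] [NormedSpace ℝ E] {a b : ℝ}
    (hab : a ≤ b) {F : ℝ → ℝ → ℝ → E}
    (hF : Integrable fun q : (ℝ × ℝ) × Icc a b => F q.1.1 q.1.2 q.2) :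
    ∫ q : (ℝ × ℝ) × Icc a b, F q.1.1 q.1.2 q.2 = ∫ u, ∫ v, ∫ t in a..b, F u v t := by
  have := isFiniteMeasure_volume_Icc a b
  rw [Measure.volume_eq_prod] at hF ⊢
  rw [integral_prod _ hF, Measure.volume_eq_prod, integral_prod _ hF.integral_prod_left]
  simp only [fun u v => integral_Icc_subtype hab (F u v)]

theorem integral_prod_Icc_symm {X E : Type*} [MeasureSpace X] [SFinite (volume : Measure X)]
    [NormedAddCommGroup E] [NormedSpace ℝ E] {a b : ℝ} (hab : a ≤ b) {F : X → ℝ → E}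
    (hF : Integrable fun q : X × Icc a b => F q.1 q.2) :
    ∫ q : X × Icc a b, F q.1 q.2 = ∫ t in a..b, ∫ x, F x t := by
  have := isFiniteMeasure_volume_Icc a b
  rw [Measure.volume_eq_prod] at hF ⊢
  rw [integral_prod_symm _ hF, integral_Icc_subtype hab fun t => ∫ x, F x t]

theorem integrable_one_add_norm_pow_smul_mul {E : Type*} [NormedAddCommGroup E]
    [MeasurableSpace E] [BorelSpace E] [SecondCountableTopology E] {ν : Measure E} [SFinite ν]
    {g : E → ℂ} (hg : ∀ N : ℕ, Integrable (fun u => (1 + ‖u‖) ^ N • g u) ν) (N : ℕ) :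
    Integrable (fun p : E × E => (1 + ‖p‖) ^ N • (g p.1 * g p.2)) (ν.prod ν) := by
  have hg₀ : AEStronglyMeasurable g ν := by
    simpa only [pow_zero, one_smul] using (hg 0).aestronglyMeasurable
  have meas_weight : Measurable fun p : E × E => (1 + ‖p‖) ^ N := by fun_prop
  refine ((hg N).mul_prod (hg N)).mono
    (meas_weight.aestronglyMeasurable.smul (hg₀.comp_fst.mul hg₀.comp_snd)) (.of_forall fun p => ?_)
  have norm_le : 1 + ‖p‖ ≤ (1 + ‖p.1‖) * (1 + ‖p.2‖) := by
    rw [Prod.norm_def]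
    rcases max_choice ‖p.1‖ ‖p.2‖ with h | h <;> rw [h] <;>
      nlinarith [norm_nonneg p.1, norm_nonneg p.2]
  simp only [norm_smul, norm_mul, norm_pow]
  calc ‖1 + ‖p‖‖ ^ N * (‖g p.1‖ * ‖g p.2‖)
      ≤ ((1 + ‖p.1‖) * (1 + ‖p.2‖)) ^ N * (‖g p.1‖ * ‖g p.2‖) := by
        rw [Real.norm_of_nonneg (by positivity)]
        gcongr
    _ = ‖1 + ‖p.1‖‖ ^ N * ‖g p.1‖ * (‖1 + ‖p.2‖‖ ^ N * ‖g p.2‖) := by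
        rw [Real.norm_of_nonneg (by positivity), Real.norm_of_nonneg (by positivity), mul_pow,
          mul_mul_mul_comm]

/-- `ε₀²(λ)`, the iterated integral of `J₀` against the Fourier coefficients of the payoff, written
as one integral over frequencies and time. -/
noncomputable def squaredHedgingError (μ c : ℝ) (K : Measure ℝ) (T S₀ R : ℝ) (l : ℝ → ℝ)
    (lam : ℝ) : ℂ :=
  ∫ q : (ℝ × ℝ) × Icc 0 T,
    hedgeErrorDensity μ c K T S₀ lam (zLine R q.1.1) (zLine R q.1.2) q.2 *
      (pCoef l q.1.1 * pCoef l q.1.2)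

variable {c : ℝ} {K : Measure ℝ} {R : ℝ} {l : ℝ → ℝ}

theorem temperedContDiffAt_hedgeErrorDensity_zLine (μ T S₀ : ℝ) (h : IsAdmissible c K)
    (hR : 2 * R ∈ exponentDomain c K) {lam₀ : ℝ} (hlam : lam₀ ∈ Icc (0 : ℝ) 1) (n : ℕ) :
    TemperedContDiffAt (Prod.fst : (ℝ × ℝ) × Icc 0 T → ℝ × ℝ) lam₀ n
      fun lam q => hedgeErrorDensity μ c K T S₀ lam (zLine R q.1.1) (zLine R q.1.2) q.2 :=
  temperedContDiffAt_hedgeErrorDensity μ S₀ h hlam hR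
    (temperedAt_zLine R (by fun_prop) fun q => norm_fst_le q.1)
    (temperedAt_zLine R (by fun_prop) fun q => norm_snd_le q.1)
    (fun _ => zLine_re R _) (fun _ => zLine_re R _) (by fun_prop) fun q => q.2.2

theorem integrable_one_add_norm_fst_pow_smul
    (hp : ∀ N : ℕ, Integrable fun u => (1 + ‖u‖) ^ N • pCoef l u) (T : ℝ) (N : ℕ) :
    Integrable fun q : (ℝ × ℝ) × Icc 0 T => (1 + ‖q.1‖) ^ N • (pCoef l q.1.1 * pCoef l q.1.2) := by
  have := isFiniteMeasure_volume_Icc 0 T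
  exact (integrable_one_add_norm_pow_smul_mul hp N).comp_fst volume

theorem squaredHedgingError_eq_iterated_integral (μ S₀ : ℝ) {T : ℝ} (hT : 0 ≤ T)
    (h : IsAdmissible c K) (hR : 2 * R ∈ exponentDomain c K)
    (hp : ∀ N : ℕ, Integrable fun u => (1 + ‖u‖) ^ N • pCoef l u) {lam₀ : ℝ}
    (hlam : lam₀ ∈ Icc (0 : ℝ) 1) :
    ∀ᶠ lam in 𝓝 lam₀, squaredHedgingError μ c K T S₀ R l lam = ∫ u, ∫ v, ∫ t in (0 : ℝ)..T,
      hedgeErrorDensity μ c K T S₀ lam (zLine R u) (zLine R v) t * pCoef l u * pCoef l v := by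
  have tempered : TemperedAt _ _ _ :=
    temperedContDiffAt_hedgeErrorDensity_zLine μ T S₀ h hR hlam 0
  filter_upwards [tempered.eventually] with lam tempered_lam
  have integrable := tempered_lam.integrable_mul (integrable_one_add_norm_fst_pow_smul hp T)
  simp only [mul_assoc (hedgeErrorDensity _ _ _ _ _ _ _ _ _)]
  exact integral_prod_prod_Icc hT (F := fun u v t =>
    hedgeErrorDensity μ c K T S₀ lam (zLine R u) (zLine R v) t * (pCoef l u * pCoef l v)) integrable

theorem contDiffAt_squaredHedgingError (μ T S₀ : ℝ) (h : IsAdmissible c K)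
    (hR : 2 * R ∈ exponentDomain c K)
    (hp : ∀ N : ℕ, Integrable fun u => (1 + ‖u‖) ^ N • pCoef l u) {lam₀ : ℝ}
    (hlam : lam₀ ∈ Icc (0 : ℝ) 1) (n : ℕ) :
    ContDiffAt ℝ n (squaredHedgingError μ c K T S₀ R l) lam₀ :=
  (temperedContDiffAt_hedgeErrorDensity_zLine μ T S₀ h hR hlam n).contDiffAt_integral
    (integrable_one_add_norm_fst_pow_smul hp T)

theorem iteratedDeriv_squaredHedgingError_zero (μ T S₀ : ℝ) (h : IsAdmissible c K)
    (hR : 2 * R ∈ exponentDomain c K)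
    (hp : ∀ N : ℕ, Integrable fun u => (1 + ‖u‖) ^ N • pCoef l u) (n : ℕ) :
    iteratedDeriv n (squaredHedgingError μ c K T S₀ R l) 0 = ∫ q : (ℝ × ℝ) × Icc 0 T,
      iteratedDeriv n (hedgeErrorDensity μ c K T S₀ · (zLine R q.1.1) (zLine R q.1.2) q.2) 0 *
        (pCoef l q.1.1 * pCoef l q.1.2) :=
  (temperedContDiffAt_hedgeErrorDensity_zLine μ T S₀ h hR (left_mem_Icc.2 zero_le_one)
    n).iteratedDeriv_integral (integrable_one_add_norm_fst_pow_smul hp T)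

theorem iteratedDeriv_squaredHedgingError_zero_of_lt_two (μ T S₀ : ℝ) (h : IsAdmissible c K)
    (hR : 2 * R ∈ exponentDomain c K)
    (hp : ∀ N : ℕ, Integrable fun u => (1 + ‖u‖) ^ N • pCoef l u) {n : ℕ} (hn : n < 2) :
    iteratedDeriv n (squaredHedgingError μ c K T S₀ R l) 0 = 0 := by
  rw [iteratedDeriv_squaredHedgingError_zero μ T S₀ h hR hp]
  simp only [iteratedDeriv_hedgeErrorDensity_zero_of_lt_two μ T S₀ _ _ _ h hn, zero_mul,
    integral_zero]

theorem iteratedDeriv_two_squaredHedgingError_zero (μ : ℝ) {T S₀ σ2 : ℝ} (hT : 0 ≤ T)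
    (hS₀ : 0 < S₀) (h : IsAdmissible c K) (hR : 2 * R ∈ exponentDomain c K)
    (hp : ∀ N : ℕ, Integrable fun u => (1 + ‖u‖) ^ N • pCoef l u)
    (hσ2 : σ2 = c + ∫ x, x ^ 2 ∂K) :
    iteratedDeriv 2 (squaredHedgingError μ c K T S₀ R l) 0 =
      (((∫ x, x ^ 4 ∂K) - (∫ x, x ^ 3 ∂K) ^ 2 / σ2) / 2 : ℝ) *
        ∫ t in (0 : ℝ)..T, ∫ x, cashGreek σ2 T R l 2 t (S₀ * Real.exp (μ * t + x)) ^ 2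
          ∂gaussianReal 0 (σ2 * t).toNNReal := by
  have integrable := (temperedContDiffAt_hedgeErrorDensity_zLine μ T S₀ h hR
    (left_mem_Icc.2 zero_le_one) 2).integrable_iteratedDeriv
      (integrable_one_add_norm_fst_pow_smul hp T)
  rw [iteratedDeriv_squaredHedgingError_zero μ T S₀ h hR hp]
  have swap := integral_prod_Icc_symm hT (F := fun (p : ℝ × ℝ) t => iteratedDeriv 2
      (hedgeErrorDensity μ c K T S₀ · (zLine R p.1) (zLine R p.2) t) 0 *
        (pCoef l p.1 * pCoef l p.2)) integrable
  rw [swap, ← intervalIntegral.integral_const_mul]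
  refine intervalIntegral.integral_congr fun t ht => ?_
  rw [uIcc_of_le hT] at ht
  rw [integral_sq_cashGreek_two hp μ R hσ2 (hσ2 ▸ h.variance_pos) hS₀ ht, ← integral_const_mul]
  refine integral_congr_ae (.of_forall fun p => ?_)
  beta_reduce
  rw [iteratedDeriv_two_hedgeErrorDensity_zero μ T S₀ t _ _ h, ← hσ2, mul_assoc]

end SquaredHedgingError

section ExpansionAtZero

open Topology

theorem iteratedDerivWithin_eq_iteratedDeriv_of_eventuallyEq {𝕜 F : Type*}
    [NontriviallyNormedField 𝕜] [NormedAddCommGroup F] [NormedSpace 𝕜 F] {f g : 𝕜 → F} {s : Set 𝕜}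
    {x : 𝕜} {n : ℕ} (hs : UniqueDiffOn 𝕜 s) (hx : x ∈ s) (hg : ContDiffAt 𝕜 n g x)
    (hfg : f =ᶠ[𝓝 x] g) : iteratedDerivWithin n f s x = iteratedDeriv n g x :=
  (iteratedDerivWithin_eq_iteratedDeriv hs (hg.congr_of_eventuallyEq hfg) hx).trans
    (hfg.iteratedDeriv_eq n)

theorem sqrt_pow_four_mul_kurtosis_sub_sq_skewness {v : ℝ} (hv : 0 < v) (m₃ m₄ : ℝ) :
    √v ^ 4 * (m₄ / √v ^ 4 - (m₃ / √v ^ 3) ^ 2) = m₄ - m₃ ^ 2 / v := by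
  have sqrt_ne_zero : √v ≠ 0 := (Real.sqrt_pos.2 hv).ne'
  nth_rw 4 [← Real.sq_sqrt hv.le]
  field_simp

end ExpansionAtZero

end LevyHedging

open LevyHedging

/-- second-order expansion of the mean squared hedging error of the pure hedge (Theorem `errPureapprox`). -/
theorem pure_hedge_error_expansion
    (μ c : ℝ) (hc : 0 ≤ c) (K : MeasureTheory.Measure ℝ)
    (hK0 : K {0} = 0)
    (hKmin : ∫⁻ x : ℝ, ENNReal.ofReal (min 1 (x ^ 2)) ∂K ≠ ⊤)
    (R : ℝ) (hR : R ≠ 0) (a b : ℝ)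
    (h0 : (0 : ℝ) ∈ Set.Ioo a b) (h2 : (2 : ℝ) ∈ Set.Ioo a b)
    (h2R : 2 * R ∈ Set.Ioo a b)
    (hK5 : ∫⁻ x in {x : ℝ | 1 ≤ |x|}, ENNReal.ofReal (|x| ^ 5) ∂K ≠ ⊤)
    (hKexp : ∀ s ∈ Set.Ioo a b,
      ∫⁻ x in {x : ℝ | 1 ≤ |x|}, ENNReal.ofReal (Real.exp (s * x)) ∂K ≠ ⊤)
    (σ2 : ℝ) (hσ2 : σ2 = c + ∫ x : ℝ, x ^ 2 ∂K) (hσ2pos : 0 < σ2)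
    (σ m s3 s4 : ℝ) (hσ : σ = Real.sqrt σ2) (hm : m = (μ + σ2 / 2) / σ2)
    (hs3 : s3 = (∫ x : ℝ, x ^ 3 ∂K) / σ ^ 3) (hs4 : s4 = (∫ x : ℝ, x ^ 4 ∂K) / σ ^ 4)
    (f : ℝ → ℝ) (hf : ContDiffOn ℝ (⊤ : ℕ∞) f (Set.Ioi 0))
    (l : ℝ → ℝ) (hl : l = fun x => f (Real.exp x) * Real.exp (-R * x))
    (hlint : ∀ n : ℕ, Integrable (iteratedDeriv n l))
    (T S₀ : ℝ) (hT : 0 < T) (hS₀ : 0 < S₀)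
    (eps2 : ℝ → ℂ)
    (heps2 : ∀ lam : ℝ, eps2 lam =
      ∫ u : ℝ, ∫ v : ℝ, ∫ t in (0 : ℝ)..T,
        cpowR S₀ (zLine R u + zLine R v) *
          (kbar μ c K lam (zLine R u) (zLine R v) -
            kbar μ c K lam (zLine R u) 1 * kbar μ c K lam (zLine R v) 1 /
              kbar μ c K lam 1 1) *
          Complex.exp (kappa μ c K lam (zLine R u + zLine R v) * (t : ℂ) +
            (etaLK μ c K lam (zLine R u) + etaLK μ c K lam (zLine R v)) *
              ((T : ℂ) - (t : ℂ))) *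
          pCoef l u * pCoef l v) :
    ContDiffOn ℝ 2 eps2 (Set.Icc 0 1) ∧
    eps2 0 = 0 ∧
    iteratedDerivWithin 1 eps2 (Set.Icc 0 1) 0 = 0 ∧
    (1 / 2 : ℂ) * iteratedDerivWithin 2 eps2 (Set.Icc 0 1) 0 =
      (1 / 4 : ℂ) * (σ : ℂ) ^ 4 * ((s4 : ℂ) - (s3 : ℂ) ^ 2) *
        ∫ t in (0 : ℝ)..T,
          ∫ x : ℝ, (cashGreek σ2 T R l 2 t (S₀ * Real.exp (μ * t + x))) ^ 2
            ∂(gaussianReal 0 (Real.toNNReal (σ2 * t))) := by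
  have domain : Ioo a b ⊆ exponentDomain c K :=
    Ioo_subset_interior_integrableExpSet_varianceMeasure hKmin hKexp
  have admissible : IsAdmissible c K := ⟨hc, domain h0, domain h2, hσ2 ▸ hσ2pos⟩
  have coefficients (N : ℕ) : Integrable fun u => (1 + ‖u‖) ^ N • pCoef l u :=
    integrable_one_add_norm_pow_smul_pCoef (hl ▸ contDiff_comp_exp_mul_exp hf R) hlint N
  have eps2_eq {lam₀ : ℝ} (hlam : lam₀ ∈ Icc (0 : ℝ) 1) :
      eps2 =ᶠ[nhds lam₀] squaredHedgingError μ c K T S₀ R l :=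
    (squaredHedgingError_eq_iterated_integral μ S₀ hT.le admissible (domain h2R) coefficients
      hlam).mono fun lam h => (heps2 lam).trans h.symm
  have smooth {lam₀ : ℝ} (hlam : lam₀ ∈ Icc (0 : ℝ) 1) (n : ℕ) :=
    contDiffAt_squaredHedgingError μ T S₀ admissible (domain h2R) coefficients hlam n
  have deriv_eq (n : ℕ) : iteratedDerivWithin n eps2 (Icc 0 1) 0 =
      iteratedDeriv n (squaredHedgingError μ c K T S₀ R l) 0 :=
    have zero_mem : (0 : ℝ) ∈ Icc (0 : ℝ) 1 := left_mem_Icc.2 zero_le_one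
    iteratedDerivWithin_eq_iteratedDeriv_of_eventuallyEq (uniqueDiffOn_Icc zero_lt_one) zero_mem
      (smooth zero_mem n) (eps2_eq zero_mem)
  have deriv_zero {n : ℕ} (hn : n < 2) : iteratedDerivWithin n eps2 (Icc 0 1) 0 = 0 :=
    (deriv_eq n).trans (iteratedDeriv_squaredHedgingError_zero_of_lt_two μ T S₀ admissible
      (domain h2R) coefficients hn)
  refine ⟨fun lam hlam => ((smooth hlam 2).congr_of_eventuallyEq (eps2_eq hlam)).contDiffWithinAt,
    by simpa only [iteratedDerivWithin_zero] using deriv_zero two_pos, deriv_zero one_lt_two, ?_⟩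
  rw [deriv_eq, iteratedDeriv_two_squaredHedgingError_zero μ hT.le hS₀ admissible (domain h2R)
    coefficients hσ2, ← sqrt_pow_four_mul_kurtosis_sub_sq_skewness hσ2pos, ← hσ, ← hs3, ← hs4]
  push_cast
  ring
end
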